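/- arXiv:2006.03754 — 5 statements merged into one kernel-verified Lean document; each statement's English description precedes it below -/
import Mathlib

section
/- There exists a finite constant C > 0 such that ‖T(f₁,f₂)‖_{5/2} ≤ C ‖f₁‖_{5/3} ‖f₂‖_{5/3} for all nonnegative measurable functions f₁, f₂ on ℝ; that is, in dimension n = 2 the bilinear spherical average T is of strong type at the point M = (3/5, 3/5; 2/5). -/
open MeasureTheory ENNReal

/-- The `L^p` "norm" (with respect to Lebesgue measure on `ℝ`) of an
`ℝ≥0∞`-valued function, with the convention for `p = ∞`. -/
noncomputable def lpNorm (p : ℝ≥0∞) (g : ℝ → ℝ≥0∞) : ℝ≥0∞ :=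
  if p = ∞ then essSup g (volume : Measure ℝ)
  else (∫⁻ x, g x ^ p.toReal) ^ (1 / p.toReal)

/-- The bilinear spherical average in dimension `n = 2`:
`T(f₁,f₂)(x) = (1/(2π)) ∫₀^{2π} f₁(x − cos t) f₂(x − sin t) dt`. -/
noncomputable def T2 (f₁ f₂ : ℝ → ℝ) (x : ℝ) : ℝ≥0∞ :=
  (ENNReal.ofReal (2 * Real.pi))⁻¹ *
    ∫⁻ t in Set.Ioc 0 (2 * Real.pi),
      ENNReal.ofReal (f₁ (x - Real.cos t)) * ENNReal.ofReal (f₂ (x - Real.sin t))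

theorem setLIntegral_Icc_le_add (f : ℝ → ℝ≥0∞) (a b c : ℝ) :
    ∫⁻ t in Set.Icc a c, f t ≤ (∫⁻ t in Set.Icc a b, f t) + ∫⁻ t in Set.Icc b c, f t := by
  refine (lintegral_mono_set ?_).trans (lintegral_union_le f _ _)
  intro t ht
  rcases le_total t b with h | h
  · exact Or.inl ⟨ht.1, h⟩
  · exact Or.inr ⟨h, ht.2⟩

theorem setLIntegral_Icc_add_right (f : ℝ → ℝ≥0∞) (a b c : ℝ) :
    ∫⁻ t in Set.Icc a b, f (t + c) = ∫⁻ t in Set.Icc (a + c) (b + c), f t := by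
  have h := (measurePreserving_add_right (volume : Measure ℝ) c).setLIntegral_comp_preimage_emb
    (MeasurableEquiv.addRight c).measurableEmbedding f (Set.Icc (a + c) (b + c))
  simpa using h

theorem setLIntegral_Icc_sub_left (f : ℝ → ℝ≥0∞) (a b c : ℝ) :
    ∫⁻ t in Set.Icc a b, f (c - t) = ∫⁻ t in Set.Icc (c - b) (c - a), f t := by
  have h := (Measure.measurePreserving_sub_left (volume : Measure ℝ) c).setLIntegral_comp_preimage_emb
    (MeasurableEquiv.subLeft c).measurableEmbedding f (Set.Icc (c - b) (c - a))
  simpa using h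

theorem setLIntegral_cos_half_period_le (H : ℝ → ℝ → ℝ≥0∞) :
    ∫⁻ t in Set.Icc 0 Real.pi, H (Real.cos t) |Real.sin t| ≤
      (∫⁻ t in Set.Icc 0 (Real.pi / 2), H (Real.cos t) |Real.sin t|) +
        ∫⁻ t in Set.Icc 0 (Real.pi / 2), H (-Real.cos t) |Real.sin t| := by
  refine (setLIntegral_Icc_le_add _ 0 (Real.pi / 2) Real.pi).trans ?_
  refine add_le_add le_rfl ?_
  have h := setLIntegral_Icc_sub_left (fun t => H (Real.cos t) |Real.sin t|)
    0 (Real.pi / 2) Real.pi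
  simp only [Real.cos_pi_sub, Real.sin_pi_sub, sub_zero] at h
  rw [h]
  apply le_of_eq
  congr 3
  ring

theorem setLIntegral_cos_period_le (H : ℝ → ℝ → ℝ≥0∞) :
    ∫⁻ t in Set.Icc 0 (2 * Real.pi), H (Real.cos t) |Real.sin t| ≤
      2 * ((∫⁻ t in Set.Icc 0 (Real.pi / 2), H (Real.cos t) |Real.sin t|) +
        ∫⁻ t in Set.Icc 0 (Real.pi / 2), H (-Real.cos t) |Real.sin t|) := by
  refine (setLIntegral_Icc_le_add _ 0 Real.pi (2 * Real.pi)).trans ?_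
  rw [two_mul (_ + _)]
  gcongr ?_ + ?_
  · exact setLIntegral_cos_half_period_le H
  · have h := setLIntegral_Icc_add_right (fun t => H (Real.cos t) |Real.sin t|)
      0 Real.pi Real.pi
    simp only [Real.cos_add_pi, Real.sin_add_pi, abs_neg, zero_add, ← two_mul] at h
    rw [← h]
    refine (setLIntegral_cos_half_period_le fun y => H (-y)).trans ?_
    simp [add_comm]

theorem setLIntegral_cos_add_le (H : ℝ → ℝ → ℝ≥0∞) {θ : ℝ} (h₀ : 0 ≤ θ)
    (h₁ : θ ≤ 2 * Real.pi) :
    ∫⁻ t in Set.Ioc 0 (2 * Real.pi), H (Real.cos (t + θ)) |Real.sin (t + θ)| ≤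
      4 * ((∫⁻ t in Set.Icc 0 (Real.pi / 2), H (Real.cos t) |Real.sin t|) +
        ∫⁻ t in Set.Icc 0 (Real.pi / 2), H (-Real.cos t) |Real.sin t|) := by
  refine (lintegral_mono_set Set.Ioc_subset_Icc_self).trans ?_
  rw [setLIntegral_Icc_add_right (fun t => H (Real.cos t) |Real.sin t|)]
  refine (lintegral_mono_set (Set.Icc_subset_Icc (show 0 ≤ 0 + θ by linarith)
    (show _ ≤ 2 * Real.pi + 2 * Real.pi by linarith))).trans ?_
  refine (setLIntegral_Icc_le_add _ 0 (2 * Real.pi) _).trans ?_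
  have h := setLIntegral_Icc_add_right (fun t => H (Real.cos t) |Real.sin t|)
      0 (2 * Real.pi) (2 * Real.pi)
  simp only [Real.cos_add_two_pi, Real.sin_add_two_pi, zero_add] at h
  rw [← h, ← two_mul, show (4 : ℝ≥0∞) = 2 * 2 by norm_num, mul_assoc]
  gcongr
  exact setLIntegral_cos_period_le H

theorem setLIntegral_comp_mul_cos_mul_sin_le {H : ℝ → ℝ≥0∞} {ρ : ℝ} (hρ : 1 ≤ |ρ|) :
    ∫⁻ t in Set.Icc 0 (Real.pi / 2), H (ρ * Real.cos t) * ENNReal.ofReal |Real.sin t| ≤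
      ∫⁻ y, H y := by
  have h := lintegral_image_eq_lintegral_abs_deriv_mul (s := Set.Icc 0 (Real.pi / 2))
    (f := fun t => ρ * Real.cos t) (f' := fun t => ρ * -Real.sin t) measurableSet_Icc
    (fun t _ => ((Real.hasDerivAt_cos t).const_mul ρ).hasDerivWithinAt)
    (fun s hs t ht hst => by
      have hρ0 : ρ ≠ 0 := by rintro rfl; norm_num at hρ
      refine Real.injOn_cos ⟨hs.1, ?_⟩ ⟨ht.1, ?_⟩ (mul_left_cancel₀ hρ0 hst) <;>
        linarith [hs.2, ht.2, Real.pi_pos]) H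
  refine le_trans ?_ (h.symm.le.trans (setLIntegral_le_lintegral _ _))
  refine lintegral_mono fun t => ?_
  rw [mul_comm]
  refine mul_le_mul_left (ENNReal.ofReal_le_ofReal ?_) _
  rw [abs_mul, abs_neg]
  exact le_mul_of_one_le_left (abs_nonneg _) hρ

theorem setLIntegral_comp_cos_add_mul_sin_le (H : ℝ → ℝ≥0∞) {ρ θ : ℝ}
    (hρ : 1 ≤ ρ) (h₀ : 0 ≤ θ) (h₁ : θ ≤ 2 * Real.pi) (x : ℝ) :
    ∫⁻ t in Set.Ioc 0 (2 * Real.pi),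
      H (x + ρ * Real.cos (t + θ)) * ENNReal.ofReal |Real.sin (t + θ)| ≤ 8 * ∫⁻ y, H y := by
  refine (setLIntegral_cos_add_le (fun y w => H (x + ρ * y) * ENNReal.ofReal w) h₀ h₁).trans ?_
  have e : ∫⁻ y, H (x + y) = ∫⁻ y, H y := lintegral_add_left_eq_self H x
  have h1 := setLIntegral_comp_mul_cos_mul_sin_le (H := fun y => H (x + y)) (ρ := ρ)
    (by rwa [abs_of_pos (by linarith)])
  have h2 := setLIntegral_comp_mul_cos_mul_sin_le (H := fun y => H (x + y)) (ρ := -ρ)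
    (by rwa [abs_neg, abs_of_pos (by linarith)])
  rw [e] at h1 h2
  simp only [neg_mul_comm] at h2
  refine (mul_le_mul_right (add_le_add h1 h2) 4).trans (le_of_eq ?_)
  rw [← two_mul, ← mul_assoc]
  norm_num

theorem setLIntegral_sin_inv_one_add_sq_le {r : ℝ} (hr : 0 < r) :
    ∫⁻ t in Set.Icc 0 (Real.pi / 2),
      ENNReal.ofReal (1 + (r * |Real.sin t|) ^ 2)⁻¹ ≤ ENNReal.ofReal (5 / r) := by
  have hc : 0 < r * (2 / Real.pi) := by positivity
  have hi : Integrable fun t : ℝ => (1 + (r * (2 / Real.pi) * t) ^ 2)⁻¹ :=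
    integrable_inv_one_add_sq.comp_mul_left' hc.ne'
  calc
    _ ≤ ∫⁻ t in Set.Icc 0 (Real.pi / 2),
        ENNReal.ofReal (1 + (r * (2 / Real.pi) * t) ^ 2)⁻¹ := by
      refine setLIntegral_mono' measurableSet_Icc fun t ht => ?_
      have h := Real.mul_le_sin ht.1 ht.2
      have : 0 ≤ 2 / Real.pi * t := mul_nonneg (by positivity) ht.1
      gcongr ENNReal.ofReal (1 + ?_ ^ 2)⁻¹
      · exact mul_nonneg hc.le ht.1
      rw [mul_assoc]
      gcongr
      exact h.trans (le_abs_self _)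
    _ ≤ ∫⁻ t, ENNReal.ofReal (1 + (r * (2 / Real.pi) * t) ^ 2)⁻¹ :=
      setLIntegral_le_lintegral _ _
    _ = ENNReal.ofReal (∫ t, (1 + (r * (2 / Real.pi) * t) ^ 2)⁻¹) :=
      (ofReal_integral_eq_lintegral_ofReal hi
        (Filter.Eventually.of_forall fun t => by positivity)).symm
    _ ≤ _ := by
      rw [Measure.integral_comp_mul_left (fun t : ℝ => (1 + t ^ 2)⁻¹),
        integral_univ_inv_one_add_sq, smul_eq_mul, abs_of_pos (by positivity)]
      apply ENNReal.ofReal_le_ofReal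
      have h : (r * (2 / Real.pi))⁻¹ * Real.pi = (Real.pi ^ 2 / 2) / r := by
        field_simp
      rw [h]
      gcongr
      nlinarith [Real.pi_lt_d2, Real.pi_pos]

theorem le_add_two_mul_div_one_add_sq {u v w : ℝ} (hv : 0 ≤ v) (hvu : v ≤ u) (hw : 0 ≤ w) :
    v ^ 3 ≤ u * (v ^ 4 * w) + 2 * u ^ 3 * (1 + (u ^ 2 * w) ^ 2)⁻¹ := by
  have hu : 0 ≤ u := hv.trans hvu
  by_cases h : 1 ≤ u * v * w
  · have h1 : v ^ 3 * 1 ≤ v ^ 3 * (u * v * w) := by gcongr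
    have h2 : 0 ≤ 2 * u ^ 3 * (1 + (u ^ 2 * w) ^ 2)⁻¹ := by positivity
    linarith [show v ^ 3 * (u * v * w) = u * (v ^ 4 * w) by ring]
  · push Not at h
    set z := u ^ 2 * w with hz
    have hz0 : 0 ≤ z := by positivity
    have h1 : v ^ 3 ≤ 2 * u ^ 3 * (1 + z ^ 2)⁻¹ := by
      rw [← div_eq_mul_inv, le_div_iff₀ (by positivity)]
      rcases le_total z 1 with h' | h'
      · have h2 : z ^ 2 ≤ 1 := pow_le_one₀ hz0 h'
        calc v ^ 3 * (1 + z ^ 2) ≤ u ^ 3 * (1 + 1) := by gcongr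
          _ = _ := by ring
      · have h2 : v * z ≤ u := by
          calc v * z = u * (u * v * w) := by rw [hz]; ring
            _ ≤ u * 1 := by gcongr
            _ = u := mul_one u
        have h3 : (v * z) ^ 3 ≤ u ^ 3 := by gcongr
        have h4 : 1 + z ^ 2 ≤ 2 * z ^ 3 := by nlinarith [sq_nonneg (z - 1), sq_nonneg z]
        calc v ^ 3 * (1 + z ^ 2) ≤ v ^ 3 * (2 * z ^ 3) := by gcongr
          _ = 2 * (v * z) ^ 3 := by ring
          _ ≤ _ := by gcongr
    have h2 : 0 ≤ u * (v ^ 4 * w) := by positivity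
    linarith

theorem le_rpow_mul_add_of_le {y S : ℝ≥0∞} (hS : S ≠ ∞) (hy : y ≤ S) {w : ℝ} (hw : 0 ≤ w) :
    y ≤ S ^ (1 / 3 : ℝ) * (y ^ (4 / 3 : ℝ) * ENNReal.ofReal w) +
      2 * S * ENNReal.ofReal (1 + (S.toReal ^ (2 / 3 : ℝ) * w) ^ 2)⁻¹ := by
  lift S to NNReal using hS
  lift y to NNReal using (hy.trans_lt coe_lt_top).ne
  rw [ENNReal.coe_le_coe] at hy
  have key := le_add_two_mul_div_one_add_sq (u := (S : ℝ) ^ (1 / 3 : ℝ))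
    (v := (y : ℝ) ^ (1 / 3 : ℝ)) (by positivity) (by gcongr) hw
  have e : ∀ x : NNReal, ((x : ℝ) ^ (1 / 3 : ℝ)) ^ 2 = (x : ℝ) ^ (2 / 3 : ℝ) ∧
      ((x : ℝ) ^ (1 / 3 : ℝ)) ^ 3 = x ∧ ((x : ℝ) ^ (1 / 3 : ℝ)) ^ 4 = (x : ℝ) ^ (4 / 3 : ℝ) := by
    intro x
    refine ⟨?_, ?_, ?_⟩ <;> rw [← Real.rpow_mul_natCast x.coe_nonneg] <;> norm_num
  rw [(e y).2.1, (e y).2.2, (e S).1, (e S).2.1] at key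
  have h := ENNReal.ofReal_le_ofReal key
  rw [ENNReal.ofReal_add (by positivity) (by positivity), ENNReal.ofReal_mul (by positivity),
    ENNReal.ofReal_mul (by positivity), ENNReal.ofReal_mul (by positivity),
    ENNReal.ofReal_mul (by positivity), ← ENNReal.ofReal_rpow_of_nonneg S.coe_nonneg (by positivity),
    ← ENNReal.ofReal_rpow_of_nonneg y.coe_nonneg (by positivity)] at h
  simpa using h

theorem setLIntegral_truncate_comp_cos_add_le {H : ℝ → ℝ≥0∞} (hH : Measurable H)
    (h1 : ∫⁻ y, H y ^ (4 / 3 : ℝ) ≤ 1) {ρ θ : ℝ} (hρ : 1 ≤ ρ) (h₀ : 0 ≤ θ)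
    (hθ : θ ≤ 2 * Real.pi) (x : ℝ) (S : ℝ≥0∞) :
    ∫⁻ t in Set.Ioc 0 (2 * Real.pi),
      {y | H y ≤ S}.indicator H (x + ρ * Real.cos (t + θ)) ≤ 100 * S ^ (1 / 3 : ℝ) := by
  rcases eq_or_ne S ∞ with rfl | hS
  · simp
  rcases eq_or_ne S 0 with rfl | hS0
  · refine le_of_eq_of_le ?_ zero_le
    refine lintegral_eq_zero_of_ae_eq_zero (Filter.Eventually.of_forall fun t => ?_)
    simp [Set.indicator_apply]
  have hs : 0 < S.toReal := toReal_pos hS0 hS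
  have hr : 0 < S.toReal ^ (2 / 3 : ℝ) := by positivity
  calc
    _ ≤ ∫⁻ t in Set.Ioc 0 (2 * Real.pi), (S ^ (1 / 3 : ℝ) *
          (H (x + ρ * Real.cos (t + θ)) ^ (4 / 3 : ℝ) * ENNReal.ofReal |Real.sin (t + θ)|) +
        2 * S * ENNReal.ofReal (1 + (S.toReal ^ (2 / 3 : ℝ) * |Real.sin (t + θ)|) ^ 2)⁻¹) := by
      refine lintegral_mono fun t => ?_
      refine Set.indicator_apply_le' (fun h => ?_) fun _ => zero_le
      exact le_rpow_mul_add_of_le hS h (abs_nonneg _)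
    _ = S ^ (1 / 3 : ℝ) * (∫⁻ t in Set.Ioc 0 (2 * Real.pi),
          H (x + ρ * Real.cos (t + θ)) ^ (4 / 3 : ℝ) * ENNReal.ofReal |Real.sin (t + θ)|) +
        2 * S * ∫⁻ t in Set.Ioc 0 (2 * Real.pi),
          ENNReal.ofReal (1 + (S.toReal ^ (2 / 3 : ℝ) * |Real.sin (t + θ)|) ^ 2)⁻¹ := by
      rw [lintegral_add_left (by fun_prop), lintegral_const_mul _ (by fun_prop),
        lintegral_const_mul _ (by fun_prop)]
    _ ≤ S ^ (1 / 3 : ℝ) * (8 * 1) + 2 * S * (4 *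
          (ENNReal.ofReal (5 / S.toReal ^ (2 / 3 : ℝ)) +
            ENNReal.ofReal (5 / S.toReal ^ (2 / 3 : ℝ)))) := by
      gcongr
      · exact (setLIntegral_comp_cos_add_mul_sin_le (fun y => H y ^ (4 / 3 : ℝ))
          hρ h₀ hθ x).trans (by gcongr)
      · refine (setLIntegral_cos_add_le (fun _ w =>
          ENNReal.ofReal (1 + (S.toReal ^ (2 / 3 : ℝ) * w) ^ 2)⁻¹) h₀ hθ).trans ?_
        gcongr <;> exact setLIntegral_sin_inv_one_add_sq_le hr
    _ = 88 * S ^ (1 / 3 : ℝ) := by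
      have e : S * ENNReal.ofReal (5 / S.toReal ^ (2 / 3 : ℝ)) = 5 * S ^ (1 / 3 : ℝ) := by
        rw [ENNReal.ofReal_div_of_pos hr, ← ENNReal.ofReal_rpow_of_pos hs,
          ENNReal.ofReal_toReal hS, ENNReal.div_eq_inv_mul, ← ENNReal.rpow_neg, ← mul_assoc,
          mul_comm _ (ENNReal.ofReal 5)]
        congr 1
        · simp
        · conv_lhs => rw [← ENNReal.rpow_one S]
          rw [← ENNReal.rpow_mul, one_mul, ← ENNReal.rpow_add _ _ hS0 hS]
          norm_num
      calc _ = 8 * S ^ (1 / 3 : ℝ) +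
            16 * (S * ENNReal.ofReal (5 / S.toReal ^ (2 / 3 : ℝ))) := by ring
        _ = _ := by rw [e]; ring
    _ ≤ _ := by gcongr; norm_num

theorem lintegral_prod_shift {Φ : ℝ → ℝ → ℝ≥0∞} (hΦ : Measurable (Function.uncurry Φ))
    {φ₁ φ₂ : ℝ → ℝ} (h₁ : Measurable φ₁) (h₂ : Measurable φ₂) (J : Set ℝ) :
    ∫⁻ p, Φ (p.1 + φ₁ p.2) (p.1 + φ₂ p.2) ∂(volume : Measure ℝ).prod (volume.restrict J) =
      ∫⁻ x, ∫⁻ t in J, Φ x (x + (φ₂ t - φ₁ t)) := by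
  have m1 : Measurable fun p : ℝ × ℝ => Φ (p.1 + φ₁ p.2) (p.1 + φ₂ p.2) :=
    hΦ.comp (f := fun p : ℝ × ℝ => (p.1 + φ₁ p.2, p.1 + φ₂ p.2)) (by fun_prop)
  have m2 : Measurable fun p : ℝ × ℝ => Φ p.1 (p.1 + (φ₂ p.2 - φ₁ p.2)) :=
    hΦ.comp (f := fun p : ℝ × ℝ => (p.1, p.1 + (φ₂ p.2 - φ₁ p.2))) (by fun_prop)
  rw [lintegral_prod_symm' _ m1, ← lintegral_prod _ m2.aemeasurable,
    lintegral_prod_symm' _ m2]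
  refine lintegral_congr fun t => ?_
  rw [← lintegral_add_right_eq_self (fun x => Φ x (x + (φ₂ t - φ₁ t))) (φ₁ t)]
  refine lintegral_congr fun x => ?_
  congr 1
  ring

theorem lintegral_prod_nondegenerate_le {F G : ℝ → ℝ≥0∞} (hF : Measurable F) (hG : Measurable G)
    {φ₁ φ₂ : ℝ → ℝ} (h₁ : Measurable φ₁) (h₂ : Measurable φ₂) {J : Set ℝ}
    (hJm : MeasurableSet J) (hJ : J ⊆ Set.Ioc 0 (2 * Real.pi)) {ρ θ : ℝ} (hρ : 1 ≤ ρ)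
    (h₀ : 0 ≤ θ) (hθ : θ ≤ 2 * Real.pi) (h : ∀ t, φ₂ t - φ₁ t = ρ * Real.cos (t + θ))
    (hs : ∀ t ∈ J, 1 / 4 ≤ |Real.sin (t + θ)|) :
    ∫⁻ p, F (p.1 + φ₁ p.2) * G (p.1 + φ₂ p.2) ∂(volume : Measure ℝ).prod (volume.restrict J) ≤
      32 * ((∫⁻ x, F x) * ∫⁻ x, G x) := by
  rw [lintegral_prod_shift (Φ := fun x y => F x * G y)
    ((hF.comp measurable_fst).mul (hG.comp measurable_snd)) h₁ h₂ J, ← mul_assoc, mul_comm 32,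
    mul_assoc, ← lintegral_mul_const _ hF]
  refine lintegral_mono fun x => ?_
  simp only [h]
  rw [lintegral_const_mul _ (by fun_prop)]
  gcongr
  calc
    _ ≤ ∫⁻ t in J, 4 *
        (G (x + ρ * Real.cos (t + θ)) * ENNReal.ofReal |Real.sin (t + θ)|) := by
      refine setLIntegral_mono' hJm fun t ht => ?_
      rw [mul_left_comm]
      refine le_mul_of_one_le_right zero_le ?_
      rw [← ENNReal.ofReal_ofNat, ← ENNReal.ofReal_mul (by norm_num), ENNReal.one_le_ofReal]
      linarith [hs t ht]
    _ ≤ ∫⁻ t in Set.Ioc 0 (2 * Real.pi), 4 *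
        (G (x + ρ * Real.cos (t + θ)) * ENNReal.ofReal |Real.sin (t + θ)|) :=
      lintegral_mono_set hJ
    _ ≤ 4 * (8 * ∫⁻ y, G y) := by
      rw [lintegral_const_mul _ (by fun_prop)]
      gcongr
      exact setLIntegral_comp_cos_add_mul_sin_le G hρ h₀ hθ x
    _ = _ := by rw [← mul_assoc]; norm_num

theorem lintegral_prod_truncate_le {F G : ℝ → ℝ≥0∞} (hF : Measurable F) (hG : Measurable G)
    (hF1 : ∫⁻ x, F x ^ (4 / 3 : ℝ) ≤ 1) (hG1 : ∫⁻ x, G x ^ (4 / 3 : ℝ) ≤ 1)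
    {φ₁ φ₂ : ℝ → ℝ} (h₁ : Measurable φ₁) (h₂ : Measurable φ₂) {ρ θ : ℝ} (hρ : 1 ≤ ρ)
    (h₀ : 0 ≤ θ) (hθ : θ ≤ 2 * Real.pi) (h : ∀ t, φ₂ t - φ₁ t = ρ * Real.cos (t + θ)) :
    ∫⁻ p, F (p.1 + φ₁ p.2) * {y | G y ≤ F (p.1 + φ₁ p.2)}.indicator G (p.1 + φ₂ p.2)
      ∂(volume : Measure ℝ).prod (volume.restrict (Set.Ioc 0 (2 * Real.pi))) ≤ 100 := by
  have hm : Measurable fun p : ℝ × ℝ => {y | G y ≤ F p.1}.indicator G p.2 := by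
    have : (fun p : ℝ × ℝ => {y | G y ≤ F p.1}.indicator G p.2) =
        {p : ℝ × ℝ | G p.2 ≤ F p.1}.indicator fun p => G p.2 := by
      ext p; simp [Set.indicator_apply]
    rw [this]
    exact (hG.comp measurable_snd).indicator
      (measurableSet_le (hG.comp measurable_snd) (hF.comp measurable_fst))
  rw [lintegral_prod_shift (Φ := fun x y => F x * {y | G y ≤ F x}.indicator G y)
    ((hF.comp measurable_fst).mul hm) h₁ h₂]
  simp only [h]
  calc
    _ ≤ ∫⁻ x, 100 * F x ^ (4 / 3 : ℝ) := by
      refine lintegral_mono fun x => ?_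
      have hm' : Measurable fun t => {y | G y ≤ F x}.indicator G (x + ρ * Real.cos (t + θ)) :=
        hm.comp (f := fun t => (x, x + ρ * Real.cos (t + θ))) (by fun_prop)
      dsimp only
      rw [lintegral_const_mul _ hm']
      refine (mul_le_mul_right
        (setLIntegral_truncate_comp_cos_add_le hG hG1 hρ h₀ hθ x (F x)) _).trans (le_of_eq ?_)
      rw [mul_left_comm]
      congr 1
      conv_lhs => rw [← ENNReal.rpow_one (F x)]
      rw [← ENNReal.rpow_mul, one_mul,
        ← ENNReal.rpow_add_of_nonneg _ _ (by norm_num) (by norm_num)]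
      norm_num
    _ = 100 * ∫⁻ x, F x ^ (4 / 3 : ℝ) := lintegral_const_mul _ (by fun_prop)
    _ ≤ 100 * 1 := by gcongr
    _ = 100 := mul_one _

theorem lintegral_prod_mul_eq_zero {F G : ℝ → ℝ≥0∞} (hF : Measurable F) (hG : Measurable G)
    (h0 : F =ᵐ[volume] 0) {φ₁ φ₂ : ℝ → ℝ} (h₁ : Measurable φ₁) (h₂ : Measurable φ₂)
    (J : Set ℝ) :
    ∫⁻ p, F (p.1 + φ₁ p.2) * G (p.1 + φ₂ p.2)
      ∂(volume : Measure ℝ).prod (volume.restrict J) = 0 := by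
  rw [lintegral_prod_shift (Φ := fun x y => F x * G y)
    ((hF.comp measurable_fst).mul (hG.comp measurable_snd)) h₁ h₂ J]
  refine lintegral_eq_zero_of_ae_eq_zero ?_
  filter_upwards [h0] with x hx
  simp [hx]

theorem lintegral_prod_fold_le_of_le_one {F G : ℝ → ℝ≥0∞} (hF : Measurable F)
    (hG : Measurable G) (hF1 : ∫⁻ x, F x ^ (4 / 3 : ℝ) ≤ 1) (hG1 : ∫⁻ x, G x ^ (4 / 3 : ℝ) ≤ 1)
    {φ₁ φ₂ : ℝ → ℝ} (h₁ : Measurable φ₁) (h₂ : Measurable φ₂) {ρ θ θ' : ℝ} (hρ : 1 ≤ ρ)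
    (h₀ : 0 ≤ θ) (hθ : θ ≤ 2 * Real.pi) (h₀' : 0 ≤ θ') (hθ' : θ' ≤ 2 * Real.pi)
    (h : ∀ t, φ₂ t - φ₁ t = ρ * Real.cos (t + θ))
    (h' : ∀ t, φ₁ t - φ₂ t = ρ * Real.cos (t + θ')) :
    ∫⁻ p, F (p.1 + φ₁ p.2) * G (p.1 + φ₂ p.2)
      ∂(volume : Measure ℝ).prod (volume.restrict (Set.Ioc 0 (2 * Real.pi))) ≤ 200 := by
  have k1 := lintegral_prod_truncate_le hF hG hF1 hG1 h₁ h₂ hρ h₀ hθ h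
  have k2 := lintegral_prod_truncate_le hG hF hG1 hF1 h₂ h₁ hρ h₀' hθ' h'
  calc
    _ ≤ ∫⁻ p, (F (p.1 + φ₁ p.2) * {y | G y ≤ F (p.1 + φ₁ p.2)}.indicator G (p.1 + φ₂ p.2) +
          G (p.1 + φ₂ p.2) * {y | F y ≤ G (p.1 + φ₂ p.2)}.indicator F (p.1 + φ₁ p.2))
        ∂(volume : Measure ℝ).prod (volume.restrict (Set.Ioc 0 (2 * Real.pi))) := by
      refine lintegral_mono fun p => ?_
      rcases le_total (G (p.1 + φ₂ p.2)) (F (p.1 + φ₁ p.2)) with hle | hle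
      · refine le_trans (le_of_eq ?_) le_self_add
        simp [hle]
      · refine le_trans (le_of_eq ?_) le_add_self
        simp [hle, mul_comm]
    _ ≤ 100 + 100 := by
      rw [lintegral_add_left]
      · exact add_le_add k1 k2
      · refine Measurable.mul (by fun_prop) ?_
        have : (fun p : ℝ × ℝ => {y | G y ≤ F (p.1 + φ₁ p.2)}.indicator G (p.1 + φ₂ p.2)) =
            {p : ℝ × ℝ | G (p.1 + φ₂ p.2) ≤ F (p.1 + φ₁ p.2)}.indicator
              fun p => G (p.1 + φ₂ p.2) := by
          ext p; simp [Set.indicator_apply]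
        rw [this]
        exact Measurable.indicator (by fun_prop) (measurableSet_le (by fun_prop) (by fun_prop))
    _ = 200 := by norm_num

theorem lintegral_prod_fold_le {F G : ℝ → ℝ≥0∞} (hF : Measurable F)
    (hG : Measurable G) {φ₁ φ₂ : ℝ → ℝ} (h₁ : Measurable φ₁) (h₂ : Measurable φ₂)
    {ρ θ θ' : ℝ} (hρ : 1 ≤ ρ)
    (h₀ : 0 ≤ θ) (hθ : θ ≤ 2 * Real.pi) (h₀' : 0 ≤ θ') (hθ' : θ' ≤ 2 * Real.pi)
    (h : ∀ t, φ₂ t - φ₁ t = ρ * Real.cos (t + θ))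
    (h' : ∀ t, φ₁ t - φ₂ t = ρ * Real.cos (t + θ')) :
    ∫⁻ p, F (p.1 + φ₁ p.2) * G (p.1 + φ₂ p.2)
      ∂(volume : Measure ℝ).prod (volume.restrict (Set.Ioc 0 (2 * Real.pi))) ≤
    200 * ((∫⁻ x, F x ^ (4 / 3 : ℝ)) * ∫⁻ x, G x ^ (4 / 3 : ℝ)) ^ (3 / 4 : ℝ) := by
  have zero : ∀ {E : ℝ → ℝ≥0∞}, Measurable E → ∫⁻ x, E x ^ (4 / 3 : ℝ) = 0 →
      E =ᵐ[volume] 0 := by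
    intro E hE h0
    rw [lintegral_eq_zero_iff (by fun_prop)] at h0
    filter_upwards [h0] with x hx
    exact (ENNReal.rpow_eq_zero_iff_of_pos (by norm_num)).1 hx
  have unit : ∀ {E : ℝ → ℝ≥0∞}, Measurable E → ∫⁻ x, E x ^ (4 / 3 : ℝ) ≠ 0 →
      ∫⁻ x, E x ^ (4 / 3 : ℝ) ≠ ∞ →
      ∫⁻ x, ((∫⁻ x, E x ^ (4 / 3 : ℝ)) ^ (-(3 / 4) : ℝ) * E x) ^ (4 / 3 : ℝ) ≤ 1 := by
    intro E hE h0 hT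
    simp_rw [ENNReal.mul_rpow_of_nonneg _ _ (by norm_num : (0 : ℝ) ≤ 4 / 3)]
    rw [lintegral_const_mul _ (by fun_prop), ← ENNReal.rpow_mul]
    norm_num
    rw [ENNReal.rpow_neg_one, ENNReal.inv_mul_cancel h0 hT]
  have split : ∀ {a : ℝ≥0∞}, a ≠ 0 → a ≠ ∞ → ∀ y, y = a ^ (3 / 4 : ℝ) *
      (a ^ (-(3 / 4) : ℝ) * y) := by
    intro a h0 hT y
    rw [← mul_assoc, ← ENNReal.rpow_add _ _ h0 hT]
    simp
  rcases eq_or_ne (∫⁻ x, F x ^ (4 / 3 : ℝ)) 0 with ha | ha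
  · rw [lintegral_prod_mul_eq_zero hF hG (zero hF ha) h₁ h₂]
    exact zero_le
  rcases eq_or_ne (∫⁻ x, G x ^ (4 / 3 : ℝ)) 0 with hb | hb
  · simp_rw [mul_comm (F _)]
    rw [lintegral_prod_mul_eq_zero hG hF (zero hG hb) h₂ h₁]
    exact zero_le
  rcases eq_or_ne (∫⁻ x, F x ^ (4 / 3 : ℝ)) ∞ with ha' | ha'
  · rw [ha', ENNReal.top_mul hb, ENNReal.top_rpow_of_pos (by norm_num)]
    simp
  rcases eq_or_ne (∫⁻ x, G x ^ (4 / 3 : ℝ)) ∞ with hb' | hb'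
  · rw [hb', ENNReal.mul_top ha, ENNReal.top_rpow_of_pos (by norm_num)]
    simp
  have uF := unit hF ha ha'
  have uG := unit hG hb hb'
  have sF := split ha ha'
  have sG := split hb hb'
  set a := ∫⁻ x, F x ^ (4 / 3 : ℝ)
  set b := ∫⁻ x, G x ^ (4 / 3 : ℝ)
  have key := lintegral_prod_fold_le_of_le_one (F := fun x => a ^ (-(3 / 4) : ℝ) * F x)
    (G := fun x => b ^ (-(3 / 4) : ℝ) * G x) (by fun_prop) (by fun_prop) uF uG h₁ h₂ hρ
    h₀ hθ h₀' hθ' h h'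
  calc
    _ = ∫⁻ p, (a * b) ^ (3 / 4 : ℝ) * ((a ^ (-(3 / 4) : ℝ) * F (p.1 + φ₁ p.2)) *
          (b ^ (-(3 / 4) : ℝ) * G (p.1 + φ₂ p.2)))
        ∂(volume : Measure ℝ).prod (volume.restrict (Set.Ioc 0 (2 * Real.pi))) := by
      refine lintegral_congr fun p => ?_
      conv_lhs => rw [sF (F _), sG (G _)]
      rw [ENNReal.mul_rpow_of_nonneg _ _ (by norm_num : (0 : ℝ) ≤ 3 / 4)]
      ring
    _ ≤ (a * b) ^ (3 / 4 : ℝ) * 200 := by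
      rw [lintegral_const_mul _ (by fun_prop)]
      gcongr
    _ = _ := mul_comm _ _

theorem lintegral_mul_mul_le_of_pairs {α : Type*} [MeasurableSpace α] {μ : Measure α}
    {A B D : α → ℝ≥0∞} (hA : Measurable A) (hB : Measurable B) (hD : Measurable D)
    {a b d K : ℝ≥0∞}
    (hAB : ∫⁻ p, A p ^ (5 / 3 : ℝ) * B p ^ (5 / 3 : ℝ) ∂μ ≤ K * (a * b))
    (hBD : ∫⁻ p, B p ^ (5 / 3 : ℝ) * D p ^ (5 / 3 : ℝ) ∂μ ≤ K * (b * d))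
    (hAD : ∫⁻ p, A p ^ (5 / 4 : ℝ) * D p ^ (5 / 4 : ℝ) ∂μ ≤ K * (a * d) ^ (3 / 4 : ℝ)) :
    ∫⁻ p, A p * B p * D p ∂μ ≤ K * (a * b * d) ^ (3 / 5 : ℝ) := by
  have hh : ∀ y : ℝ≥0∞, y = y ^ (1 / 2 : ℝ) * y ^ (1 / 2 : ℝ) := by
    intro y
    rw [← ENNReal.rpow_add_of_nonneg _ _ (by norm_num) (by norm_num)]
    norm_num
  have key := ENNReal.lintegral_prod_norm_pow_le (μ := μ) (Finset.univ : Finset (Fin 3))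
    (f := ![fun p => A p ^ (5 / 3 : ℝ) * B p ^ (5 / 3 : ℝ),
      fun p => B p ^ (5 / 3 : ℝ) * D p ^ (5 / 3 : ℝ),
      fun p => A p ^ (5 / 4 : ℝ) * D p ^ (5 / 4 : ℝ)])
    (by
      intro i _
      fin_cases i
      · exact ((hA.pow_const _).mul (hB.pow_const _)).aemeasurable
      · exact ((hB.pow_const _).mul (hD.pow_const _)).aemeasurable
      · exact ((hA.pow_const _).mul (hD.pow_const _)).aemeasurable)
    (p := ![3 / 10, 3 / 10, 2 / 5])
    (by simp [Fin.sum_univ_three]; norm_num)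
    (by intro i _; fin_cases i <;> simp <;> norm_num)
  simp only [Fin.prod_univ_three, Matrix.cons_val] at key
  calc
    _ = ∫⁻ p, (A p ^ (5 / 3 : ℝ) * B p ^ (5 / 3 : ℝ)) ^ (3 / 10 : ℝ) *
          (B p ^ (5 / 3 : ℝ) * D p ^ (5 / 3 : ℝ)) ^ (3 / 10 : ℝ) *
          (A p ^ (5 / 4 : ℝ) * D p ^ (5 / 4 : ℝ)) ^ (2 / 5 : ℝ) ∂μ := by
      refine lintegral_congr fun p => ?_
      simp only [ENNReal.mul_rpow_of_nonneg _ _ (by norm_num : (0 : ℝ) ≤ 3 / 10),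
        ENNReal.mul_rpow_of_nonneg _ _ (by norm_num : (0 : ℝ) ≤ 2 / 5), ← ENNReal.rpow_mul]
      norm_num only
      conv_lhs => rw [hh (A p), hh (B p), hh (D p)]
      ring
    _ ≤ _ := key
    _ ≤ (K * (a * b)) ^ (3 / 10 : ℝ) * (K * (b * d)) ^ (3 / 10 : ℝ) *
          (K * (a * d) ^ (3 / 4 : ℝ)) ^ (2 / 5 : ℝ) := by gcongr
    _ = K * (a * b * d) ^ (3 / 5 : ℝ) := by
      have h6 : ∀ y : ℝ≥0∞, y ^ (3 / 5 : ℝ) = y ^ (3 / 10 : ℝ) * y ^ (3 / 10 : ℝ) := by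
        intro y
        rw [← ENNReal.rpow_add_of_nonneg _ _ (by norm_num) (by norm_num)]
        norm_num
      have hK : K = K ^ (3 / 10 : ℝ) * K ^ (3 / 10 : ℝ) * K ^ (2 / 5 : ℝ) := by
        rw [← ENNReal.rpow_add_of_nonneg _ _ (by norm_num) (by norm_num),
          ← ENNReal.rpow_add_of_nonneg _ _ (by norm_num) (by norm_num)]
        norm_num
      conv_rhs => rw [hK]
      simp only [ENNReal.mul_rpow_of_nonneg _ _ (by norm_num : (0 : ℝ) ≤ 3 / 10),
        ENNReal.mul_rpow_of_nonneg _ _ (by norm_num : (0 : ℝ) ≤ 2 / 5),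
        ENNReal.mul_rpow_of_nonneg _ _ (by norm_num : (0 : ℝ) ≤ 3 / 4),
        ENNReal.mul_rpow_of_nonneg _ _ (by norm_num : (0 : ℝ) ≤ 3 / 5), ← ENNReal.rpow_mul, h6]
      norm_num only
      ring

theorem rpow_lintegral_le_of_forall_lintegral_mul_le {T : ℝ → ℝ≥0∞} (hT : Measurable T)
    {A : ℝ≥0∞} (hA : ∀ h : ℝ → ℝ≥0∞, Measurable h →
      ∫⁻ x, T x * h x ≤ A * (∫⁻ x, h x ^ (5 / 3 : ℝ)) ^ (3 / 5 : ℝ)) :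
    (∫⁻ x, T x ^ (5 / 2 : ℝ)) ^ (2 / 5 : ℝ) ≤ A := by
  set Tn : ℕ → ℝ → ℝ≥0∞ := fun n =>
    (Set.Icc (-n : ℝ) n).indicator fun x => min (T x) n with hTn
  have hm : ∀ n, Measurable (Tn n) := fun n =>
    (hT.min measurable_const).indicator measurableSet_Icc
  have hle : ∀ n x, Tn n x ≤ T x := fun n x =>
    Set.indicator_apply_le' (fun _ => min_le_left _ _) fun _ => zero_le
  have hbound : ∀ n, ∫⁻ x, Tn n x ^ (5 / 2 : ℝ) ≤ A ^ (5 / 2 : ℝ) := by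
    intro n
    set I := ∫⁻ x, Tn n x ^ (5 / 2 : ℝ) with hI
    have hfin : I ≠ ∞ := by
      have : I ≤ ∫⁻ x in Set.Icc (-n : ℝ) n, (n : ℝ≥0∞) ^ (5 / 2 : ℝ) := by
        rw [hI, ← lintegral_indicator measurableSet_Icc]
        refine lintegral_mono fun x => ?_
        by_cases hx : x ∈ Set.Icc (-n : ℝ) n
        · simp only [hTn, Set.indicator_of_mem hx]
          gcongr
          exact min_le_right _ _
        · simp only [hTn, Set.indicator_of_notMem hx]
          norm_num
      refine (this.trans_lt ?_).ne
      rw [setLIntegral_const]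
      exact ENNReal.mul_lt_top
        (ENNReal.rpow_lt_top_of_nonneg (by norm_num) (ENNReal.natCast_ne_top n))
        isCompact_Icc.measure_lt_top
    have h1 : I ≤ A * I ^ (3 / 5 : ℝ) := by
      calc
        I ≤ ∫⁻ x, T x * Tn n x ^ (3 / 2 : ℝ) := by
          refine lintegral_mono fun x => ?_
          calc Tn n x ^ (5 / 2 : ℝ) = Tn n x ^ (1 : ℝ) * Tn n x ^ (3 / 2 : ℝ) := by
                rw [← ENNReal.rpow_add_of_nonneg _ _ (by norm_num) (by norm_num)]
                norm_num
            _ ≤ _ := by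
                rw [ENNReal.rpow_one]
                gcongr
                exact hle n x
        _ ≤ A * (∫⁻ x, (Tn n x ^ (3 / 2 : ℝ)) ^ (5 / 3 : ℝ)) ^ (3 / 5 : ℝ) :=
          hA _ ((hm n).pow_const _)
        _ = _ := by
          simp only [← ENNReal.rpow_mul, hI]
          norm_num
    rcases eq_or_ne I 0 with h0 | h0
    · simp [h0]
    have h2 : I ^ (2 / 5 : ℝ) ≤ A := by
      have h3 : I ^ (2 / 5 : ℝ) * I ^ (3 / 5 : ℝ) ≤ A * I ^ (3 / 5 : ℝ) := by
        rw [← ENNReal.rpow_add_of_nonneg _ _ (by norm_num) (by norm_num)]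
        norm_num
        exact h1
      exact (ENNReal.mul_le_mul_iff_left (by simp [h0, hfin])
        (ENNReal.rpow_ne_top_of_nonneg (by norm_num) hfin)).1 h3
    calc I = (I ^ (2 / 5 : ℝ)) ^ (5 / 2 : ℝ) := by
          rw [← ENNReal.rpow_mul]; norm_num
      _ ≤ _ := by gcongr
  have hlim : ∀ x, Filter.Tendsto (fun n => Tn n x ^ (5 / 2 : ℝ)) Filter.atTop
      (nhds (T x ^ (5 / 2 : ℝ))) := by
    intro x
    refine (ENNReal.continuous_rpow_const.tendsto _).comp ?_
    have h1 : Filter.Tendsto (fun n : ℕ => min (T x) (n : ℝ≥0∞)) Filter.atTop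
        (nhds (min (T x) ∞)) :=
      tendsto_const_nhds.min ENNReal.tendsto_nat_nhds_top
    rw [min_eq_left le_top] at h1
    refine h1.congr' ?_
    obtain ⟨N, hN⟩ := exists_nat_ge |x|
    filter_upwards [Filter.eventually_ge_atTop N] with n hn
    have hx : |x| ≤ n := hN.trans (by exact_mod_cast hn)
    simp only [hTn]
    rw [Set.indicator_of_mem]
    exact ⟨by linarith [neg_abs_le x], (le_abs_self x).trans hx⟩
  have h : ∫⁻ x, T x ^ (5 / 2 : ℝ) ≤ A ^ (5 / 2 : ℝ) := by
    calc
      _ = ∫⁻ x, Filter.liminf (fun n => Tn n x ^ (5 / 2 : ℝ)) Filter.atTop :=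
        lintegral_congr fun x => (hlim x).liminf_eq.symm
      _ ≤ Filter.liminf (fun n => ∫⁻ x, Tn n x ^ (5 / 2 : ℝ)) Filter.atTop :=
        lintegral_liminf_le fun n => (hm n).pow_const _
      _ ≤ Filter.liminf (fun _ : ℕ => A ^ (5 / 2 : ℝ)) Filter.atTop :=
        Filter.liminf_le_liminf (Filter.Eventually.of_forall hbound)
      _ = _ := by simp
  calc _ ≤ (A ^ (5 / 2 : ℝ)) ^ (2 / 5 : ℝ) := by gcongr
    _ = A := by rw [← ENNReal.rpow_mul]; norm_num

theorem lintegral_prod_triple_le {F₁ F₂ F₃ : ℝ → ℝ≥0∞} (hF₁ : Measurable F₁)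
    (hF₂ : Measurable F₂) (hF₃ : Measurable F₃) {φ₁ φ₂ φ₃ : ℝ → ℝ} (h₁ : Measurable φ₁)
    (h₂ : Measurable φ₂) (h₃ : Measurable φ₃) {J : Set ℝ} (hJm : MeasurableSet J)
    (hJ : J ⊆ Set.Ioc 0 (2 * Real.pi)) {ρ₁ ρ₂ ρ₃ θ₁ θ₂ θ₃ θ₄ : ℝ}
    (hρ₁ : 1 ≤ ρ₁) (hρ₂ : 1 ≤ ρ₂) (hρ₃ : 1 ≤ ρ₃)
    (hθ₁ : θ₁ ∈ Set.Icc 0 (2 * Real.pi)) (hθ₂ : θ₂ ∈ Set.Icc 0 (2 * Real.pi))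
    (hθ₃ : θ₃ ∈ Set.Icc 0 (2 * Real.pi)) (hθ₄ : θ₄ ∈ Set.Icc 0 (2 * Real.pi))
    (h12 : ∀ t, φ₂ t - φ₁ t = ρ₁ * Real.cos (t + θ₁))
    (h23 : ∀ t, φ₃ t - φ₂ t = ρ₂ * Real.cos (t + θ₂))
    (h13 : ∀ t, φ₃ t - φ₁ t = ρ₃ * Real.cos (t + θ₃))
    (h31 : ∀ t, φ₁ t - φ₃ t = ρ₃ * Real.cos (t + θ₄))
    (hs₁ : ∀ t ∈ J, 1 / 4 ≤ |Real.sin (t + θ₁)|)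
    (hs₂ : ∀ t ∈ J, 1 / 4 ≤ |Real.sin (t + θ₂)|) :
    ∫⁻ p, F₁ (p.1 + φ₁ p.2) * F₂ (p.1 + φ₂ p.2) * F₃ (p.1 + φ₃ p.2)
      ∂(volume : Measure ℝ).prod (volume.restrict J) ≤
    200 * ((∫⁻ x, F₁ x ^ (5 / 3 : ℝ)) * (∫⁻ x, F₂ x ^ (5 / 3 : ℝ)) *
      ∫⁻ x, F₃ x ^ (5 / 3 : ℝ)) ^ (3 / 5 : ℝ) := by
  have e : ∀ F : ℝ → ℝ≥0∞,
      ∫⁻ x, (F x ^ (5 / 4 : ℝ)) ^ (4 / 3 : ℝ) = ∫⁻ x, F x ^ (5 / 3 : ℝ) := by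
    intro F
    simp only [← ENNReal.rpow_mul]
    norm_num
  refine lintegral_mul_mul_le_of_pairs (by fun_prop) (by fun_prop) (by fun_prop) ?_ ?_ ?_
  · refine (lintegral_prod_nondegenerate_le (F := fun x => F₁ x ^ (5 / 3 : ℝ))
      (G := fun x => F₂ x ^ (5 / 3 : ℝ)) (by fun_prop) (by fun_prop) h₁ h₂ hJm hJ hρ₁
      hθ₁.1 hθ₁.2 h12 hs₁).trans ?_
    gcongr
    norm_num
  · refine (lintegral_prod_nondegenerate_le (F := fun x => F₂ x ^ (5 / 3 : ℝ))
      (G := fun x => F₃ x ^ (5 / 3 : ℝ)) (by fun_prop) (by fun_prop) h₂ h₃ hJm hJ hρ₂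
      hθ₂.1 hθ₂.2 h23 hs₂).trans ?_
    gcongr
    norm_num
  · have h := lintegral_prod_fold_le (F := fun x => F₁ x ^ (5 / 4 : ℝ))
      (G := fun x => F₃ x ^ (5 / 4 : ℝ)) (by fun_prop) (by fun_prop) h₁ h₃ hρ₃
      hθ₃.1 hθ₃.2 hθ₄.1 hθ₄.2 h13 h31
    rw [e, e] at h
    refine le_trans (lintegral_mono' ?_ le_rfl) h
    rw [← Measure.restrict_univ (μ := (volume : Measure ℝ)), Measure.prod_restrict,
      Measure.prod_restrict]
    exact Measure.restrict_mono (Set.prod_mono le_rfl (by simpa using hJ)) (by simp)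

theorem lintegral_prod_circle_le {f g h : ℝ → ℝ≥0∞} (hf : Measurable f) (hg : Measurable g)
    (hh : Measurable h) :
    ∫⁻ p, f (p.1 + -Real.cos p.2) * g (p.1 + -Real.sin p.2) * h (p.1 + 0)
      ∂(volume : Measure ℝ).prod (volume.restrict (Set.Ioc 0 (2 * Real.pi))) ≤
    600 * ((∫⁻ x, f x ^ (5 / 3 : ℝ)) * (∫⁻ x, g x ^ (5 / 3 : ℝ)) *
      ∫⁻ x, h x ^ (5 / 3 : ℝ)) ^ (3 / 5 : ℝ) := by
  have hpi := Real.pi_pos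
  have s2 : √(2 : ℝ) * √2 = 2 := Real.mul_self_sqrt (by norm_num)
  have s1 : (1 : ℝ) ≤ √2 := Real.one_le_sqrt.2 (by norm_num)
  have c1 : ∀ t, Real.cos t - Real.sin t = √2 * Real.cos (t + Real.pi / 4) := by
    intro t
    rw [Real.cos_add, Real.cos_pi_div_four, Real.sin_pi_div_four]
    linear_combination (-(Real.cos t - Real.sin t) / 2) * s2
  have c2 : ∀ t, Real.sin t - Real.cos t = √2 * Real.cos (t + (Real.pi / 4 + Real.pi)) := by
    intro t
    rw [← add_assoc, Real.cos_add_pi, mul_neg, ← c1]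
    ring
  have c3 : ∀ t, √2 * Real.sin (t + Real.pi / 4) = Real.sin t + Real.cos t := by
    intro t
    rw [Real.sin_add, Real.cos_pi_div_four, Real.sin_pi_div_four]
    linear_combination ((Real.cos t + Real.sin t) / 2) * s2
  have c4 : ∀ t, Real.cos (t + (Real.pi / 2 + Real.pi)) = Real.sin t := by
    intro t
    rw [← add_assoc, Real.cos_add_pi, Real.cos_add_pi_div_two, neg_neg]
  have c5 : ∀ t, |Real.sin (t + (Real.pi / 2 + Real.pi))| = |Real.cos t| := by
    intro t
    rw [← add_assoc, Real.sin_add_pi, Real.sin_add_pi_div_two, abs_neg]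
  have big : ∀ u v : ℝ, u ^ 2 + v ^ 2 = 1 → |u| ≤ 1 / 4 → 3 / 4 ≤ |v| := by
    intro u v huv hu
    rw [← sq_abs u, ← sq_abs v] at huv
    nlinarith [abs_nonneg u, abs_nonneg v]
  have low : ∀ t, 1 / 2 ≤ |Real.sin t + Real.cos t| →
      1 / 4 ≤ |Real.sin (t + Real.pi / 4)| := by
    intro t ht
    rw [← c3, abs_mul, abs_of_nonneg (Real.sqrt_nonneg 2)] at ht
    have h2 : √(2 : ℝ) ≤ 2 := by nlinarith
    nlinarith [abs_nonneg (Real.sin (t + Real.pi / 4))]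
  set J₁ : Set ℝ := Set.Ioc 0 (2 * Real.pi) ∩ {t | |Real.sin t| ≤ 1 / 4}
  set J₂ : Set ℝ := Set.Ioc 0 (2 * Real.pi) ∩ {t | |Real.cos t| ≤ 1 / 4}
  set J₃ : Set ℝ := Set.Ioc 0 (2 * Real.pi) ∩
    {t | 1 / 4 ≤ |Real.sin t| ∧ 1 / 4 ≤ |Real.cos t|}
  have m₁ : MeasurableSet J₁ :=
    measurableSet_Ioc.inter (measurableSet_le (by fun_prop) measurable_const)
  have m₂ : MeasurableSet J₂ :=
    measurableSet_Ioc.inter (measurableSet_le (by fun_prop) measurable_const)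
  have m₃ : MeasurableSet J₃ :=
    measurableSet_Ioc.inter (.inter (s₁ := {t | 1 / 4 ≤ |Real.sin t|})
      (s₂ := {t | 1 / 4 ≤ |Real.cos t|}) (measurableSet_le measurable_const (by fun_prop))
      (measurableSet_le measurable_const (by fun_prop)))
  have k₁ := lintegral_prod_triple_le hf hg hh (φ₁ := fun t => -Real.cos t)
    (φ₂ := fun t => -Real.sin t) (φ₃ := fun _ => 0) (by fun_prop) (by fun_prop) (by fun_prop)
    m₁ Set.inter_subset_left s1 (le_refl 1) (le_refl 1) (θ₁ := Real.pi / 4)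
    (θ₂ := Real.pi / 2 + Real.pi) (θ₃ := 0) (θ₄ := Real.pi)
    ⟨by linarith, by linarith⟩ ⟨by linarith, by linarith⟩ ⟨by linarith, by linarith⟩
    ⟨by linarith, by linarith⟩
    (fun t => by rw [← c1]; ring) (fun t => by rw [c4]; ring) (fun t => by simp)
    (fun t => by simp)
    (fun t ht => by
      have h1 := big _ _ (Real.sin_sq_add_cos_sq t) ht.2
      have h2 := abs_sub_abs_le_abs_sub (Real.cos t) (-Real.sin t)
      rw [abs_neg, sub_neg_eq_add, add_comm (Real.cos t)] at h2
      exact low t (by linarith [ht.2.out]))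
    (fun t ht => by
      have h1 := big _ _ (Real.sin_sq_add_cos_sq t) ht.2
      rw [c5]; linarith)
  have k₂ := lintegral_prod_triple_le hg hf hh (φ₁ := fun t => -Real.sin t)
    (φ₂ := fun t => -Real.cos t) (φ₃ := fun _ => 0) (by fun_prop) (by fun_prop) (by fun_prop)
    m₂ Set.inter_subset_left s1 (le_refl 1) (le_refl 1) (θ₁ := Real.pi / 4 + Real.pi)
    (θ₂ := 0) (θ₃ := Real.pi / 2 + Real.pi) (θ₄ := Real.pi / 2)
    ⟨by linarith, by linarith⟩ ⟨by linarith, by linarith⟩ ⟨by linarith, by linarith⟩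
    ⟨by linarith, by linarith⟩
    (fun t => by rw [← c2]; ring) (fun t => by simp) (fun t => by rw [c4]; ring)
    (fun t => by simp [Real.cos_add_pi_div_two])
    (fun t ht => by
      have h1 := big _ _ (Real.cos_sq_add_sin_sq t) ht.2
      have h2 := abs_sub_abs_le_abs_sub (Real.sin t) (-Real.cos t)
      rw [abs_neg, sub_neg_eq_add] at h2
      rw [← add_assoc, Real.sin_add_pi, abs_neg]
      exact low t (by linarith [ht.2.out]))
    (fun t ht => by
      have h1 := big _ _ (Real.cos_sq_add_sin_sq t) ht.2
      rw [add_zero]; linarith)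
  have k₃ := lintegral_prod_triple_le hf hh hg (φ₁ := fun t => -Real.cos t)
    (φ₂ := fun _ => 0) (φ₃ := fun t => -Real.sin t) (by fun_prop) (by fun_prop) (by fun_prop)
    m₃ Set.inter_subset_left (le_refl 1) (le_refl 1) s1 (θ₁ := 0)
    (θ₂ := Real.pi / 2) (θ₃ := Real.pi / 4) (θ₄ := Real.pi / 4 + Real.pi)
    ⟨by linarith, by linarith⟩ ⟨by linarith, by linarith⟩ ⟨by linarith, by linarith⟩
    ⟨by linarith, by linarith⟩
    (fun t => by simp) (fun t => by simp [Real.cos_add_pi_div_two])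
    (fun t => by rw [← c1]; ring) (fun t => by rw [← c2]; ring)
    (fun t ht => by rw [add_zero]; exact ht.2.1)
    (fun t ht => by rw [Real.sin_add_pi_div_two]; exact ht.2.2)
  have cover : Set.Ioc 0 (2 * Real.pi) ⊆ J₁ ∪ (J₂ ∪ J₃) := by
    intro t ht
    by_cases hs : |Real.sin t| ≤ 1 / 4
    · exact Or.inl ⟨ht, hs⟩
    by_cases hc : |Real.cos t| ≤ 1 / 4
    · exact Or.inr (Or.inl ⟨ht, hc⟩)
    · exact Or.inr (Or.inr ⟨ht, (not_le.1 hs).le, (not_le.1 hc).le⟩)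
  have restr : ∀ J : Set ℝ, (volume : Measure ℝ).prod (volume.restrict J) =
      ((volume : Measure ℝ).prod volume).restrict (Set.univ ×ˢ J) := by
    intro J
    rw [← Measure.prod_restrict, Measure.restrict_univ]
  rw [restr] at k₁ k₂ k₃ ⊢
  set Φ : ℝ × ℝ → ℝ≥0∞ := fun p =>
    f (p.1 + -Real.cos p.2) * g (p.1 + -Real.sin p.2) * h (p.1 + 0) with hΦ
  set R := ((∫⁻ x, f x ^ (5 / 3 : ℝ)) * (∫⁻ x, g x ^ (5 / 3 : ℝ)) *
      ∫⁻ x, h x ^ (5 / 3 : ℝ)) ^ (3 / 5 : ℝ)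
  have k₂' : ∫⁻ p in Set.univ ×ˢ J₂, Φ p ∂(volume : Measure ℝ).prod volume ≤ 200 * R := by
    convert k₂ using 3
    · simp only [hΦ]; ring
    · ring
  have k₃' : ∫⁻ p in Set.univ ×ˢ J₃, Φ p ∂(volume : Measure ℝ).prod volume ≤ 200 * R := by
    convert k₃ using 3
    · simp only [hΦ]; ring
    · ring
  calc
    _ ≤ ∫⁻ p in Set.univ ×ˢ J₁ ∪ (Set.univ ×ˢ J₂ ∪ Set.univ ×ˢ J₃), Φ p
        ∂(volume : Measure ℝ).prod volume := by
      refine lintegral_mono_set ?_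
      rw [← Set.prod_union, ← Set.prod_union]
      exact Set.prod_mono le_rfl cover
    _ ≤ 200 * R + (200 * R + 200 * R) :=
      (lintegral_union_le _ _ _).trans (add_le_add k₁
        ((lintegral_union_le _ _ _).trans (add_le_add k₂' k₃')))
    _ = 600 * R := by ring

theorem strong_type_at_M :
    ∃ C : ℝ, 0 < C ∧ ∀ f₁ f₂ : ℝ → ℝ, Measurable f₁ → Measurable f₂ →
      (∀ x, 0 ≤ f₁ x) → (∀ x, 0 ≤ f₂ x) →
      lpNorm (5 / 2) (T2 f₁ f₂) ≤ ENNReal.ofReal C *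
        lpNorm (5 / 3) (fun x => ENNReal.ofReal (f₁ x)) *
        lpNorm (5 / 3) (fun x => ENNReal.ofReal (f₂ x)) := by
  refine ⟨600, by norm_num, fun f₁ f₂ hf₁ hf₂ _ _ => ?_⟩
  have t1 : (5 / 2 : ℝ≥0∞) ≠ ∞ := ENNReal.div_ne_top (by norm_num) (by norm_num)
  have t2 : (5 / 3 : ℝ≥0∞) ≠ ∞ := ENNReal.div_ne_top (by norm_num) (by norm_num)
  have r1 : (5 / 2 : ℝ≥0∞).toReal = 5 / 2 := by simp [ENNReal.toReal_div]
  have r2 : (5 / 3 : ℝ≥0∞).toReal = 5 / 3 := by simp [ENNReal.toReal_div]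
  simp only [_root_.lpNorm, if_neg t1, if_neg t2, r1, r2, one_div_div]
  have hF : Measurable fun x => ENNReal.ofReal (f₁ x) := hf₁.ennreal_ofReal
  have hG : Measurable fun x => ENNReal.ofReal (f₂ x) := hf₂.ennreal_ofReal
  set F := fun x => ENNReal.ofReal (f₁ x)
  set G := fun x => ENNReal.ofReal (f₂ x)
  have hm : Measurable fun p : ℝ × ℝ => F (p.1 - Real.cos p.2) * G (p.1 - Real.sin p.2) := by
    fun_prop
  have hTm : Measurable (T2 f₁ f₂) := hm.lintegral_prod_right'.const_mul _
  have hc : (ENNReal.ofReal (2 * Real.pi))⁻¹ ≤ 1 := by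
    rw [ENNReal.inv_le_one, ENNReal.one_le_ofReal]
    linarith [Real.pi_gt_three]
  refine rpow_lintegral_le_of_forall_lintegral_mul_le hTm fun h hh => ?_
  calc
    _ ≤ ∫⁻ x, ∫⁻ t in Set.Ioc 0 (2 * Real.pi),
        F (x + -Real.cos t) * G (x + -Real.sin t) * h (x + 0) := by
      refine lintegral_mono fun x => ?_
      simp only [add_zero, ← sub_eq_add_neg]
      rw [lintegral_mul_const _ (by fun_prop)]
      gcongr
      exact mul_le_of_le_one_left zero_le hc
    _ = ∫⁻ p, F (p.1 + -Real.cos p.2) * G (p.1 + -Real.sin p.2) * h (p.1 + 0)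
        ∂(volume : Measure ℝ).prod (volume.restrict (Set.Ioc 0 (2 * Real.pi))) :=
      (lintegral_prod (fun p : ℝ × ℝ =>
        F (p.1 + -Real.cos p.2) * G (p.1 + -Real.sin p.2) * h (p.1 + 0)) (by fun_prop)).symm
    _ ≤ _ := lintegral_prod_circle_le hF hG hh
    _ = _ := by
      simp only [ENNReal.mul_rpow_of_nonneg _ _ (by norm_num : (0 : ℝ) ≤ 3 / 5)]
      rw [ENNReal.ofReal_ofNat]
      ring
end

section
/- There is no finite constant C > 0 such that ‖T(f₁,f₂)‖_1 ≤ C ‖f₁‖_2 ‖f₂‖_1 holds for all nonnegative measurable functions f₁, f₂ on ℝ; that is, in dimension n = 2 the bilinear spherical average T fails to be of strong type at the point P = (1/2, 1; 1). -/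
open MeasureTheory ENNReal

/-- The function `v ↦ v ^ (-1/2)` restricted to `[δ, 1]`. -/
noncomputable def truncInvSqrt (δ v : ℝ) : ℝ :=
  (Set.Icc δ 1).indicator (fun v => (√v)⁻¹) v

lemma truncInvSqrt_nonneg (δ v : ℝ) : 0 ≤ truncInvSqrt δ v :=
  Set.indicator_nonneg (fun _ _ => by positivity) v

lemma measurable_truncInvSqrt (δ : ℝ) : Measurable (truncInvSqrt δ) :=
  Measurable.indicator (by fun_prop) measurableSet_Icc

lemma measurable_truncInvSqrt_const_sub (δ c : ℝ) :
    Measurable fun x => truncInvSqrt δ (c - x) :=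
  (measurable_truncInvSqrt δ).comp (measurable_const.sub measurable_id)

lemma lpNorm_one (g : ℝ → ℝ≥0∞) : _root_.lpNorm 1 g = ∫⁻ x, g x := by
  simp [_root_.lpNorm]

lemma lpNorm_two (g : ℝ → ℝ≥0∞) :
    _root_.lpNorm 2 g = (∫⁻ x, g x ^ 2) ^ (1 / 2 : ℝ) := by
  simp [_root_.lpNorm]

lemma lintegral_Icc_inv {a b : ℝ} (ha : 0 < a) (hab : a ≤ b) :
    ∫⁻ v in Set.Icc a b, ENNReal.ofReal v⁻¹ = ENNReal.ofReal (Real.log (b / a)) := by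
  have h0 : (0 : ℝ) ∉ Set.uIcc a b := by
    rw [Set.uIcc_of_le hab]; exact fun h => absurd h.1 (not_le.2 ha)
  rw [← restrict_Ioc_eq_restrict_Icc, ← integral_inv h0, intervalIntegral.integral_of_le hab,
    ofReal_integral_eq_lintegral_ofReal]
  · exact (intervalIntegrable_iff_integrableOn_Ioc_of_le hab).1
      (intervalIntegral.intervalIntegrable_inv (fun x hx h => h0 (h ▸ hx)) continuousOn_id)
  · exact (ae_restrict_iff' measurableSet_Ioc).2
      (.of_forall fun x hx => inv_nonneg.2 (ha.trans hx.1).le)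

lemma lpNorm_two_truncInvSqrt {δ : ℝ} (hδ : 0 < δ) (hδ1 : δ ≤ 1) (c : ℝ) :
    _root_.lpNorm 2 (fun x => ENNReal.ofReal (truncInvSqrt δ (c - x))) =
      ENNReal.ofReal √(Real.log (1 / δ)) := by
  have key : ∀ v, ENNReal.ofReal (truncInvSqrt δ v) ^ 2 =
      (Set.Icc δ 1).indicator (fun v => ENNReal.ofReal v⁻¹) v := by
    intro v
    by_cases hv : v ∈ Set.Icc δ 1
    · rw [truncInvSqrt, Set.indicator_of_mem hv, Set.indicator_of_mem hv,
        ← ENNReal.ofReal_pow (by positivity), inv_pow, Real.sq_sqrt (hδ.le.trans hv.1)]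
    · simp [truncInvSqrt, Set.indicator_of_notMem hv]
  rw [lpNorm_two, lintegral_sub_left_eq_self (fun v => ENNReal.ofReal (truncInvSqrt δ v) ^ 2) c]
  simp_rw [key]
  rw [lintegral_indicator measurableSet_Icc, lintegral_Icc_inv hδ hδ1,
    ENNReal.ofReal_rpow_of_nonneg (Real.log_nonneg (by rw [le_div_iff₀ hδ]; linarith))
      (by norm_num), Real.sqrt_eq_rpow]

/-- The `L¹` norm of `T2`, after Fubini and a translation. -/
lemma lpNorm_one_T2 {f₁ f₂ : ℝ → ℝ} (h₁ : Measurable f₁) (h₂ : Measurable f₂) :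
    _root_.lpNorm 1 (T2 f₁ f₂) = (ENNReal.ofReal (2 * Real.pi))⁻¹ *
      ∫⁻ t in Set.Ioc 0 (2 * Real.pi), ∫⁻ y,
        ENNReal.ofReal (f₁ (y + Real.sin t - Real.cos t)) * ENNReal.ofReal (f₂ y) := by
  rw [lpNorm_one]
  unfold T2
  rw [lintegral_const_mul' _ _ (by simp [Real.pi_pos]), lintegral_lintegral_swap]
  · congr 1
    refine lintegral_congr fun t => ?_
    rw [← lintegral_add_right_eq_self _ (Real.sin t)]
    simp
  · refine Measurable.aemeasurable ?_
    fun_prop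

lemma sin_sub_cos_three_pi_div_four_add (θ : ℝ) :
    Real.sin (3 * Real.pi / 4 + θ) - Real.cos (3 * Real.pi / 4 + θ) = √2 * Real.cos θ := by
  have h : 3 * Real.pi / 4 = Real.pi - Real.pi / 4 := by ring
  rw [Real.sin_add, Real.cos_add, h, Real.sin_pi_sub, Real.cos_pi_sub, Real.sin_pi_div_four,
    Real.cos_pi_div_four]
  ring

lemma le_truncInvSqrt {ε θ y : ℝ} (hε : 0 < ε) (hεθ : ε ≤ θ) (hθ : θ ≤ 1 / 2)
    (hy : y ∈ Set.Icc (-ε ^ 2) 0) :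
    (√3)⁻¹ * θ⁻¹ ≤ truncInvSqrt (ε ^ 2) (√2 + ε ^ 2 - (y + √2 * Real.cos θ)) := by
  have hθ0 : 0 < θ := hε.trans_le hεθ
  have hsq : ε ^ 2 ≤ θ ^ 2 := by gcongr
  have hs : √2 ≤ 2 := by rw [Real.sqrt_le_left] <;> norm_num
  have hs0 : (0 : ℝ) ≤ √2 := by positivity
  have hc := Real.one_sub_sq_div_two_le_cos (x := θ)
  have hc1 := Real.cos_le_one θ
  have h1 : √2 * (1 - Real.cos θ) ≤ 2 * (θ ^ 2 / 2) := by
    gcongr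
    linarith
  have h0 : 0 ≤ √2 * (1 - Real.cos θ) := mul_nonneg hs0 (by linarith)
  obtain ⟨hy1, hy2⟩ := hy
  have hup : √2 + ε ^ 2 - (y + √2 * Real.cos θ) ≤ 3 * θ ^ 2 := by linarith
  have hlo : ε ^ 2 ≤ √2 + ε ^ 2 - (y + √2 * Real.cos θ) := by linarith
  have hmem : √2 + ε ^ 2 - (y + √2 * Real.cos θ) ∈ Set.Icc (ε ^ 2) 1 :=
    ⟨hlo, hup.trans (by nlinarith)⟩
  rw [truncInvSqrt, Set.indicator_of_mem hmem, ← mul_inv]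
  refine inv_anti₀ (Real.sqrt_pos.2 (lt_of_lt_of_le (by positivity) hlo)) ?_
  calc √(√2 + ε ^ 2 - (y + √2 * Real.cos θ)) ≤ √(3 * θ ^ 2) := Real.sqrt_le_sqrt hup
    _ = √3 * θ := by rw [Real.sqrt_mul (by norm_num), Real.sqrt_sq hθ0.le]

lemma le_lpNorm_one_T2 {ε : ℝ} (hε : 0 < ε) (hε2 : ε ≤ 1 / 2) :
    (ENNReal.ofReal (2 * Real.pi))⁻¹ * (ENNReal.ofReal (ε ^ 2 * (√3)⁻¹) *
        ENNReal.ofReal (Real.log (1 / 2 / ε))) ≤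
      _root_.lpNorm 1 (T2 (fun x => truncInvSqrt (ε ^ 2) (√2 + ε ^ 2 - x))
        ((Set.Icc (-ε ^ 2) 0).indicator 1)) := by
  rw [lpNorm_one_T2 (measurable_truncInvSqrt_const_sub _ _)
    (measurable_one.indicator measurableSet_Icc)]
  gcongr
  have hπ := Real.pi_gt_three
  have hsub : Set.Icc (3 * Real.pi / 4 + ε) (3 * Real.pi / 4 + 1 / 2) ⊆
      Set.Ioc 0 (2 * Real.pi) := fun t ht => ⟨by linarith [ht.1], by linarith [ht.2]⟩
  refine le_trans ?_ (lintegral_mono_set hsub)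
  have hshift : ENNReal.ofReal (Real.log (1 / 2 / ε)) =
      ∫⁻ t in Set.Icc (3 * Real.pi / 4 + ε) (3 * Real.pi / 4 + 1 / 2),
        ENNReal.ofReal (t - 3 * Real.pi / 4)⁻¹ := by
    rw [← lintegral_Icc_inv hε hε2, ← lintegral_indicator measurableSet_Icc,
      ← lintegral_indicator measurableSet_Icc,
      ← lintegral_sub_right_eq_self _ (3 * Real.pi / 4)]
    refine lintegral_congr fun t => ?_
    simp only [Set.indicator, Set.mem_Icc, le_sub_iff_add_le', sub_le_iff_le_add']
  rw [hshift, ← lintegral_const_mul' _ _ ENNReal.ofReal_ne_top]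
  refine setLIntegral_mono' measurableSet_Icc fun t ht => ?_
  obtain ⟨θ, rfl⟩ : ∃ θ, t = 3 * Real.pi / 4 + θ := ⟨t - 3 * Real.pi / 4, by ring⟩
  have hθ1 : ε ≤ θ := by linarith [ht.1]
  have hθ2 : θ ≤ 1 / 2 := by linarith [ht.2]
  have hθ0 : 0 < θ := hε.trans_le hθ1
  calc ENNReal.ofReal (ε ^ 2 * (√3)⁻¹) *
        ENNReal.ofReal (3 * Real.pi / 4 + θ - 3 * Real.pi / 4)⁻¹
      = ∫⁻ _ in Set.Icc (-ε ^ 2) 0, ENNReal.ofReal ((√3)⁻¹ * θ⁻¹) := by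
        rw [setLIntegral_const, Real.volume_Icc, add_sub_cancel_left,
          ← ENNReal.ofReal_mul (by positivity), ← ENNReal.ofReal_mul (by positivity)]
        congr 1
        ring
    _ ≤ ∫⁻ y in Set.Icc (-ε ^ 2) 0, ENNReal.ofReal
          (truncInvSqrt (ε ^ 2) (√2 + ε ^ 2 - (y + √2 * Real.cos θ))) :=
        setLIntegral_mono' measurableSet_Icc fun y hy =>
          ENNReal.ofReal_le_ofReal (le_truncInvSqrt hε hθ1 hθ2 hy)
    _ = _ := by
        rw [← lintegral_indicator measurableSet_Icc]
        refine lintegral_congr fun y => ?_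
        rw [add_sub_assoc y, sin_sub_cos_three_pi_div_four_add]
        by_cases hy : y ∈ Set.Icc (-ε ^ 2) 0
        · simp only [Set.indicator_of_mem hy, Pi.one_apply, ENNReal.ofReal_one, mul_one]
        · simp only [Set.indicator_of_notMem hy, ENNReal.ofReal_zero, mul_zero]

theorem not_strong_type_at_P :
    ¬ ∃ C : ℝ, 0 < C ∧ ∀ f₁ f₂ : ℝ → ℝ, Measurable f₁ → Measurable f₂ →
      (∀ x, 0 ≤ f₁ x) → (∀ x, 0 ≤ f₂ x) →
      lpNorm 1 (T2 f₁ f₂) ≤ ENNReal.ofReal C *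
        lpNorm 2 (fun x => ENNReal.ofReal (f₁ x)) *
        lpNorm 1 (fun x => ENNReal.ofReal (f₂ x)) := by
  rintro ⟨C, hC, H⟩
  set K : ℝ := 2 * Real.pi * √3 * C with hK
  set n : ℝ := 2 * K ^ 2 + 2 with hn
  have hn2 : 2 ≤ n := by rw [hn]; nlinarith [sq_nonneg K]
  set ε : ℝ := Real.exp (-n) with hεdef
  have hε : 0 < ε := Real.exp_pos _
  have hε2 : ε ≤ 1 / 2 := by
    rw [hεdef, Real.exp_neg, one_div]
    exact inv_anti₀ (by norm_num) (by linarith [Real.add_one_le_exp n])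
  have hlogε : Real.log ε = -n := Real.log_exp _
  have hlog1 : Real.log (1 / ε ^ 2) = 2 * n := by
    rw [one_div, Real.log_inv, Real.log_pow, hlogε]; push_cast; ring
  have hlog2 : n - 1 ≤ Real.log (1 / 2 / ε) := by
    rw [Real.log_div (by norm_num) hε.ne', hlogε, one_div, Real.log_inv]
    linarith [Real.log_two_lt_d9]
  have hf₂ : _root_.lpNorm 1 (fun x => ENNReal.ofReal
      ((Set.Icc (-ε ^ 2) 0).indicator (1 : ℝ → ℝ) x)) = ENNReal.ofReal (ε ^ 2) := by
    have h : ∀ x, ENNReal.ofReal ((Set.Icc (-ε ^ 2) 0).indicator (1 : ℝ → ℝ) x) =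
        (Set.Icc (-ε ^ 2) 0).indicator 1 x := fun x => by
      by_cases hx : x ∈ Set.Icc (-ε ^ 2) 0
      · simp only [Set.indicator_of_mem hx, Pi.one_apply, ENNReal.ofReal_one]
      · simp only [Set.indicator_of_notMem hx, ENNReal.ofReal_zero]
    rw [lpNorm_one]
    simp_rw [h]
    rw [lintegral_indicator_one measurableSet_Icc, Real.volume_Icc]
    simp
  have hmain := (le_lpNorm_one_T2 hε hε2).trans
    (H (fun x => truncInvSqrt (ε ^ 2) (√2 + ε ^ 2 - x)) ((Set.Icc (-ε ^ 2) 0).indicator 1)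
      (measurable_truncInvSqrt_const_sub _ _)
      (measurable_one.indicator measurableSet_Icc)
      (fun _ => truncInvSqrt_nonneg _ _)
      (Set.indicator_nonneg fun _ _ => zero_le_one))
  rw [hf₂, lpNorm_two_truncInvSqrt (by positivity) (by nlinarith), hlog1,
    ← ENNReal.ofReal_inv_of_pos (by positivity), ← ENNReal.ofReal_mul (by positivity),
    ← ENNReal.ofReal_mul (by positivity), ← ENNReal.ofReal_mul (by positivity),
    ← ENNReal.ofReal_mul (by positivity), ENNReal.ofReal_le_ofReal_iff (by positivity)] at hmain
  have hlog3 : Real.log (1 / 2 / ε) ≤ K * √(2 * n) := by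
    have hpos : 0 < 2 * Real.pi * √3 / ε ^ 2 := by positivity
    have := mul_le_mul_of_nonneg_left hmain hpos.le
    have hπ := Real.pi_pos.ne'
    have h3 : √(3 : ℝ) ≠ 0 := by positivity
    calc Real.log (1 / 2 / ε) = 2 * Real.pi * √3 / ε ^ 2 *
          ((2 * Real.pi)⁻¹ * (ε ^ 2 * (√3)⁻¹ * Real.log (1 / 2 / ε))) := by
          field_simp
      _ ≤ _ := this
      _ = K * √(2 * n) := by rw [hK]; field_simp
  have hsq : (n - 1) ^ 2 ≤ (K * √(2 * n)) ^ 2 :=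
    pow_le_pow_left₀ (by linarith) (hlog2.trans hlog3) 2
  rw [mul_pow, Real.sq_sqrt (by linarith)] at hsq
  have : K ^ 2 = (n - 2) / 2 := by rw [hn]; ring
  rw [this] at hsq
  nlinarith
end

section
/- There exists a finite constant C > 0 such that for every measurable set E ⊆ ℝ of finite Lebesgue measure and every nonnegative measurable function f₂ on ℝ, ‖T(χ_E, f₂)‖_{3/2} ≤ C |E|^{1/3} ‖f₂‖_1; that is, in dimension n = 2 the operator T is of restricted type at the point G = (1/3, 1; 2/3). -/
open MeasureTheory ENNReal

/-- A monotone branch of `t ↦ r sin (t + c)` pushes the weight `|r cos (t + c)|` forward to at most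
Lebesgue measure. -/
lemma lintegral_abs_cos_mul_comp_sin_branch_le (r c : ℝ) (hr : r ≠ 0) (k : ℤ) (g : ℝ → ℝ≥0∞) :
    ∫⁻ t in Set.Icc (k * Real.pi - Real.pi / 2 - c) (k * Real.pi + Real.pi / 2 - c),
      ENNReal.ofReal |r * Real.cos (t + c)| * g (r * Real.sin (t + c)) ≤ ∫⁻ s, g s := by
  rw [← lintegral_image_eq_lintegral_abs_deriv_mul (f := fun t => r * Real.sin (t + c))
    measurableSet_Icc]
  · exact setLIntegral_le_lintegral _ _
  · intro x _
    have h := ((Real.hasDerivAt_sin (x + c)).comp x ((hasDerivAt_id x).add_const c)).const_mul r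
    simpa using h.hasDerivWithinAt
  · intro x hx y hy hxy
    have h : Real.sin (x + c) = Real.sin (y + c) := mul_left_cancel₀ hr hxy
    have h' : Real.sin (x + c - k * Real.pi) = Real.sin (y + c - k * Real.pi) := by
      rw [Real.sin_sub_int_mul_pi, Real.sin_sub_int_mul_pi, h]
    have := Real.injOn_sin (x₁ := x + c - k * Real.pi) (x₂ := y + c - k * Real.pi)
      ⟨by linarith [hx.1], by linarith [hx.2]⟩ ⟨by linarith [hy.1], by linarith [hy.2]⟩ h'
    linarith

lemma lintegral_abs_cos_mul_comp_sin_le (r c : ℝ) (hr : r ≠ 0) (hc : |c| ≤ Real.pi / 2)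
    (g : ℝ → ℝ≥0∞) :
    ∫⁻ t in Set.Ioc 0 (2 * Real.pi),
      ENNReal.ofReal |r * Real.cos (t + c)| * g (r * Real.sin (t + c)) ≤ 3 * ∫⁻ s, g s := by
  obtain ⟨hc1, hc2⟩ := abs_le.1 hc
  set J : ℤ → Set ℝ := fun k =>
    Set.Icc (k * Real.pi - Real.pi / 2 - c) (k * Real.pi + Real.pi / 2 - c) with hJ
  have hsub : Set.Ioc 0 (2 * Real.pi) ⊆ J 0 ∪ J 1 ∪ J 2 := by
    intro t ht
    simp only [hJ, Set.mem_union, Set.mem_Icc]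
    push_cast
    rcases le_total (t + c) (Real.pi / 2) with h1 | h1
    · exact Or.inl (Or.inl ⟨by linarith [ht.1], by linarith⟩)
    rcases le_total (t + c) (3 * Real.pi / 2) with h2 | h2
    · exact Or.inl (Or.inr ⟨by linarith, by linarith⟩)
    · exact Or.inr ⟨by linarith, by linarith [ht.2]⟩
  have hb := fun k => lintegral_abs_cos_mul_comp_sin_branch_le r c hr k g
  calc _ ≤ _ := lintegral_mono_set hsub
    _ ≤ _ := lintegral_union_le _ _ _
    _ ≤ _ := add_le_add_left (lintegral_union_le _ _ _) _
    _ ≤ ((∫⁻ s, g s) + ∫⁻ s, g s) + ∫⁻ s, g s :=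
        add_le_add (add_le_add (hb 0) (hb 1)) (hb 2)
    _ = 3 * ∫⁻ s, g s := by ring

lemma sqrt_two_mul_sin_add_pi_div_four (t : ℝ) :
    √2 * Real.sin (t + Real.pi / 4) = Real.sin t + Real.cos t := by
  have h : √2 * √2 = 2 := Real.mul_self_sqrt (by norm_num)
  rw [Real.sin_add, Real.cos_pi_div_four, Real.sin_pi_div_four]
  linear_combination (Real.sin t + Real.cos t) / 2 * h

lemma sqrt_two_mul_cos_add_pi_div_four (t : ℝ) :
    √2 * Real.cos (t + Real.pi / 4) = Real.cos t - Real.sin t := by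
  have h : √2 * √2 = 2 := Real.mul_self_sqrt (by norm_num)
  rw [Real.cos_add, Real.cos_pi_div_four, Real.sin_pi_div_four]
  linear_combination (Real.cos t - Real.sin t) / 2 * h

lemma sqrt_two_mul_sin_sub_pi_div_four (t : ℝ) :
    √2 * Real.sin (t + -(Real.pi / 4)) = Real.sin t - Real.cos t := by
  have h : √2 * √2 = 2 := Real.mul_self_sqrt (by norm_num)
  rw [← sub_eq_add_neg, Real.sin_sub, Real.cos_pi_div_four, Real.sin_pi_div_four]
  linear_combination (Real.sin t - Real.cos t) / 2 * h

lemma sqrt_two_mul_cos_sub_pi_div_four (t : ℝ) :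
    √2 * Real.cos (t + -(Real.pi / 4)) = Real.sin t + Real.cos t := by
  have h : √2 * √2 = 2 := Real.mul_self_sqrt (by norm_num)
  rw [← sub_eq_add_neg, Real.cos_sub, Real.cos_pi_div_four, Real.sin_pi_div_four]
  linear_combination (Real.sin t + Real.cos t) / 2 * h

lemma abs_pi_div_four_le : |Real.pi / 4| ≤ Real.pi / 2 := by
  rw [abs_of_pos (by positivity)]; linarith [Real.pi_pos]

lemma lintegral_abs_sin_add_cos_mul_le (g : ℝ → ℝ≥0∞) :
    ∫⁻ t in Set.Ioc 0 (2 * Real.pi),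
      ENNReal.ofReal |Real.sin t + Real.cos t| * g (Real.sin t - Real.cos t) ≤
        3 * ∫⁻ s, g s := by
  simpa only [sqrt_two_mul_sin_sub_pi_div_four, sqrt_two_mul_cos_sub_pi_div_four] using
    lintegral_abs_cos_mul_comp_sin_le (√2) (-(Real.pi / 4)) (by positivity)
      (by simpa using abs_pi_div_four_le) g

lemma lintegral_abs_cos_sub_sin_mul_le (g : ℝ → ℝ≥0∞) :
    ∫⁻ t in Set.Ioc 0 (2 * Real.pi),
      ENNReal.ofReal |Real.cos t - Real.sin t| * g (Real.sin t + Real.cos t) ≤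
        3 * ∫⁻ s, g s := by
  simpa only [sqrt_two_mul_sin_add_pi_div_four, sqrt_two_mul_cos_add_pi_div_four] using
    lintegral_abs_cos_mul_comp_sin_le (√2) (Real.pi / 4) (by positivity) abs_pi_div_four_le g

lemma lintegral_abs_cos_mul_le (g : ℝ → ℝ≥0∞) :
    ∫⁻ t in Set.Ioc 0 (2 * Real.pi), ENNReal.ofReal |Real.cos t| * g (Real.sin t) ≤
      3 * ∫⁻ s, g s := by
  simpa using lintegral_abs_cos_mul_comp_sin_le 1 0 one_ne_zero (by simp; positivity) g

lemma lintegral_abs_sin_mul_le (g : ℝ → ℝ≥0∞) :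
    ∫⁻ t in Set.Ioc 0 (2 * Real.pi), ENNReal.ofReal |Real.sin t| * g (Real.cos t) ≤
      3 * ∫⁻ s, g s := by
  have h := lintegral_abs_cos_mul_comp_sin_le 1 (Real.pi / 2) one_ne_zero
    (by rw [abs_of_pos (by positivity)]) g
  simpa [Real.sin_add_pi_div_two, Real.cos_add_pi_div_two] using h

lemma lintegral_indicator_Ioo_sin_add_cos_le {r : ℝ} (hr : 0 < r) :
    ∫⁻ t in Set.Ioc 0 (2 * Real.pi),
      (Set.Ioo (-r) r).indicator (1 : ℝ → ℝ≥0∞) (Real.sin t + Real.cos t) ≤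
        ENNReal.ofReal (28 * r) := by
  set χ := (Set.Ioo (-r) r).indicator (1 : ℝ → ℝ≥0∞) with hχ
  have hpt : ∀ t, χ (Real.sin t + Real.cos t) ≤
      2 * (ENNReal.ofReal |Real.cos t - Real.sin t| * χ (Real.sin t + Real.cos t)) +
        ENNReal.ofReal (2 * r) := by
    intro t
    by_cases hm : Real.sin t + Real.cos t ∈ Set.Ioo (-r) r
    · simp only [hχ, Set.indicator_of_mem hm, Pi.one_apply, mul_one]
      rw [← ENNReal.ofReal_ofNat 2, ← ENNReal.ofReal_mul (by norm_num),
        ← ENNReal.ofReal_add (by positivity) (by positivity), ← ENNReal.ofReal_one]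
      apply ENNReal.ofReal_le_ofReal
      by_contra! hlt
      have h1 : |Real.cos t - Real.sin t| < 1 / 2 := by linarith
      have h2 : |Real.sin t + Real.cos t| < 1 / 2 := by
        have := abs_lt.2 hm
        have := abs_nonneg (Real.cos t - Real.sin t)
        linarith
      nlinarith [Real.sin_sq_add_cos_sq t, abs_lt.1 h1, abs_lt.1 h2,
        abs_le_of_sq_le_sq' (a := Real.sin t) (b := 1) (by nlinarith [Real.sin_sq_add_cos_sq t]),
        (sq_lt_sq' (abs_lt.1 h1).1 (abs_lt.1 h1).2), (sq_lt_sq' (abs_lt.1 h2).1 (abs_lt.1 h2).2)]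
    · simp [hχ, Set.indicator_of_notMem hm]
  have hint : ∫⁻ s, χ s = ENNReal.ofReal (2 * r) := by
    rw [hχ, lintegral_indicator_one measurableSet_Ioo, Real.volume_Ioo]
    congr 1; ring
  calc _ ≤ _ := lintegral_mono hpt
    _ = 2 * (∫⁻ t in Set.Ioc 0 (2 * Real.pi),
          ENNReal.ofReal |Real.cos t - Real.sin t| * χ (Real.sin t + Real.cos t)) +
          ENNReal.ofReal (2 * r) * ENNReal.ofReal (2 * Real.pi) := by
      rw [lintegral_add_right _ measurable_const, lintegral_const_mul' _ _ (by simp)]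
      simp
    _ ≤ 2 * (3 * ENNReal.ofReal (2 * r)) + ENNReal.ofReal (2 * r) * ENNReal.ofReal (2 * Real.pi) := by
      gcongr
      exact (lintegral_abs_cos_sub_sin_mul_le χ).trans_eq (by rw [hint])
    _ ≤ ENNReal.ofReal (28 * r) := by
      rw [← ENNReal.ofReal_ofNat 2, ← ENNReal.ofReal_ofNat 3,
        ← ENNReal.ofReal_mul (by norm_num), ← ENNReal.ofReal_mul (by norm_num),
        ← ENNReal.ofReal_mul (by positivity), ← ENNReal.ofReal_add (by positivity) (by positivity)]
      apply ENNReal.ofReal_le_ofReal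
      nlinarith [Real.pi_le_four]

lemma lintegral_Ioc_rpow_neg_half {a : ℝ} (ha : 0 < a) :
    ∫⁻ s in Set.Ioc 0 a, ENNReal.ofReal (|s| ^ (-(1 / 2) : ℝ)) = ENNReal.ofReal (2 * √a) := by
  have hi : IntervalIntegrable (fun s : ℝ => s ^ (-(1 / 2) : ℝ)) volume 0 a :=
    intervalIntegral.intervalIntegrable_rpow' (by norm_num)
  rw [setLIntegral_congr_fun measurableSet_Ioc
    (g := fun s => ENNReal.ofReal (s ^ (-(1 / 2) : ℝ)))
    (fun s hs => by simp only [abs_of_pos hs.1]),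
    ← ofReal_integral_eq_lintegral_ofReal ((intervalIntegrable_iff_integrableOn_Ioc_of_le ha.le).1 hi)
    ((ae_restrict_iff' measurableSet_Ioc).2 (.of_forall fun s hs => Real.rpow_nonneg hs.1.le _)),
    ← intervalIntegral.integral_of_le ha.le, integral_rpow (Or.inl (by norm_num))]
  congr 1
  rw [Real.sqrt_eq_rpow]
  norm_num
  ring

lemma lintegral_indicator_Ioo_rpow_neg_half_le {a : ℝ} (ha : 0 < a) :
    ∫⁻ s, (Set.Ioo (-a) a).indicator (fun s => ENNReal.ofReal (|s| ^ (-(1 / 2) : ℝ))) s ≤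
      ENNReal.ofReal (4 * √a) := by
  set φ : ℝ → ℝ≥0∞ := (Set.Ioc 0 a).indicator fun s => ENNReal.ofReal (|s| ^ (-(1 / 2) : ℝ))
    with hφ
  have hφi : ∫⁻ s, φ s = ENNReal.ofReal (2 * √a) := by
    rw [hφ, lintegral_indicator measurableSet_Ioc, lintegral_Ioc_rpow_neg_half ha]
  have hφm : Measurable φ := Measurable.indicator (by fun_prop) measurableSet_Ioc
  calc _ ≤ ∫⁻ s, (φ s + φ (-s)) := by
        refine lintegral_mono fun s => Set.indicator_apply_le' (fun hs => ?_) fun _ => zero_le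
        rcases lt_trichotomy s 0 with h | h | h
        · refine le_add_left (le_of_eq ?_)
          rw [hφ, Set.indicator_of_mem (Set.mem_Ioc.2 ⟨by linarith, by linarith [hs.1]⟩), abs_neg]
        · subst h
          rw [abs_zero, Real.zero_rpow (by norm_num)]
          simp
        · refine le_add_right (le_of_eq ?_)
          rw [hφ, Set.indicator_of_mem (Set.mem_Ioc.2 ⟨h, hs.2.le⟩)]
    _ = ENNReal.ofReal (4 * √a) := by
        rw [lintegral_add_left hφm, lintegral_neg_eq_self φ, hφi,
          ← ENNReal.ofReal_add (by positivity) (by positivity)]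
        congr 1; ring

/-- The weight `|cos t| ^ (-1/2)` is controlled by the Jacobian
`|sin t + cos t|` away from the two small exceptional sets of size `r`. -/
lemma rpow_abs_cos_le_cases {r : ℝ} (hr : 0 < r) (t : ℝ) :
    |Real.cos t| ^ (-(1 / 2) : ℝ) ≤ 2 / r * |Real.sin t + Real.cos t| ∨
      (|Real.cos t| ^ (-(1 / 2) : ℝ) ≤ 2 ∧ |Real.sin t + Real.cos t| < r) ∨
      (1 ≤ 2 * |Real.sin t| ∧ |Real.cos t| < r ^ 2) := by
  have hsc := Real.sin_sq_add_cos_sq t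
  rcases le_or_gt (1 / 4) |Real.cos t| with hc | hc
  · have hw : |Real.cos t| ^ (-(1 / 2) : ℝ) ≤ 2 := by
      refine (Real.rpow_le_rpow_of_nonpos (by norm_num) hc (by norm_num)).trans_eq ?_
      rw [show (1 / 4 : ℝ) = 2 ^ (-2 : ℝ) by norm_num [Real.rpow_neg], ← Real.rpow_mul (by norm_num)]
      norm_num
    rcases lt_or_ge |Real.sin t + Real.cos t| r with hd | hd
    · exact Or.inr (Or.inl ⟨hw, hd⟩)
    · refine Or.inl (hw.trans ?_)
      rw [div_mul_eq_mul_div, le_div_iff₀ hr]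
      linarith
  · have hs : 3 / 4 ≤ |Real.sin t| := by
      refine abs_le_of_sq_le_sq' ?_ (abs_nonneg _) |>.2
      rw [sq_abs]
      nlinarith [sq_abs (Real.cos t), abs_nonneg (Real.cos t)]
    rcases lt_or_ge |Real.cos t| (r ^ 2) with hcr | hcr
    · exact Or.inr (Or.inr ⟨by linarith, hcr⟩)
    · have hw : |Real.cos t| ^ (-(1 / 2) : ℝ) ≤ 1 / r := by
        refine (Real.rpow_le_rpow_of_nonpos (by positivity) hcr (by norm_num)).trans_eq ?_
        rw [← Real.rpow_natCast, ← Real.rpow_mul hr.le]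
        norm_num [Real.rpow_neg hr.le]
      have hd : 1 / 2 ≤ |Real.sin t + Real.cos t| := by
        have := abs_sub_abs_le_abs_sub (Real.sin t) (-Real.cos t)
        rw [abs_neg, sub_neg_eq_add] at this
        linarith
      refine Or.inl (hw.trans ?_)
      rw [div_mul_eq_mul_div]
      gcongr
      linarith

lemma lintegral_indicator_mul_rpow_cos_le_of_volume_le {E : Set ℝ} {r : ℝ} (hr : 0 < r)
    (hEr : volume E ≤ ENNReal.ofReal (r ^ 2)) (hE : MeasurableSet E) :
    ∫⁻ t in Set.Ioc 0 (2 * Real.pi), E.indicator (1 : ℝ → ℝ≥0∞) (Real.sin t - Real.cos t) *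
      ENNReal.ofReal (|Real.cos t| ^ (-(1 / 2) : ℝ)) ≤ ENNReal.ofReal (100 * r) := by
  set χ := E.indicator (1 : ℝ → ℝ≥0∞) with hχ
  set ρ := (Set.Ioo (-r) r).indicator (1 : ℝ → ℝ≥0∞) with hρ
  set ψ := (Set.Ioo (-r ^ 2) (r ^ 2)).indicator
    (fun s => ENNReal.ofReal (|s| ^ (-(1 / 2) : ℝ))) with hψ
  have hχ1 : ∀ s, χ s ≤ 1 := fun s => Set.indicator_le_self' (fun _ _ => zero_le) s
  have hχm : Measurable χ := measurable_one.indicator hE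
  have hρm : Measurable ρ := measurable_one.indicator measurableSet_Ioo
  have hψm : Measurable ψ := Measurable.indicator (by fun_prop) measurableSet_Ioo
  have hpt : ∀ t, χ (Real.sin t - Real.cos t) * ENNReal.ofReal (|Real.cos t| ^ (-(1 / 2) : ℝ)) ≤
      ENNReal.ofReal (2 / r) *
        (ENNReal.ofReal |Real.sin t + Real.cos t| * χ (Real.sin t - Real.cos t)) +
      2 * ρ (Real.sin t + Real.cos t) + 2 * (ENNReal.ofReal |Real.sin t| * ψ (Real.cos t)) := by
    intro t
    rcases rpow_abs_cos_le_cases hr t with h | ⟨h, hd⟩ | ⟨hs, hc⟩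
    · refine le_add_right (le_add_right ?_)
      rw [← mul_assoc, ← ENNReal.ofReal_mul (by positivity), mul_comm (χ _)]
      gcongr
    · refine le_add_right (le_add_left ?_)
      rw [hρ, Set.indicator_of_mem (Set.mem_Ioo.2 (abs_lt.1 hd)), Pi.one_apply]
      calc _ ≤ 1 * ENNReal.ofReal 2 := by gcongr; exact hχ1 _
        _ = _ := by simp
    · refine le_add_left ?_
      rw [hψ, Set.indicator_of_mem (Set.mem_Ioo.2 (abs_lt.1 hc)), ← mul_assoc]
      gcongr
      refine (hχ1 _).trans ?_
      rw [← ENNReal.ofReal_ofNat 2, ← ENNReal.ofReal_mul (by norm_num)]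
      simpa using ENNReal.ofReal_le_ofReal hs
  calc _ ≤ _ := lintegral_mono hpt
    _ = ENNReal.ofReal (2 / r) * (∫⁻ t in Set.Ioc 0 (2 * Real.pi),
            ENNReal.ofReal |Real.sin t + Real.cos t| * χ (Real.sin t - Real.cos t)) +
          2 * (∫⁻ t in Set.Ioc 0 (2 * Real.pi), ρ (Real.sin t + Real.cos t)) +
          2 * ∫⁻ t in Set.Ioc 0 (2 * Real.pi), ENNReal.ofReal |Real.sin t| * ψ (Real.cos t) := by
      rw [lintegral_add_right _ (by fun_prop), lintegral_add_right _ (by fun_prop),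
        lintegral_const_mul' _ _ (by simp), lintegral_const_mul' _ _ (by simp),
        lintegral_const_mul' _ _ (by simp)]
    _ ≤ ENNReal.ofReal (2 / r) * (3 * ENNReal.ofReal (r ^ 2)) + 2 * ENNReal.ofReal (28 * r) +
          2 * (3 * ENNReal.ofReal (4 * √(r ^ 2))) := by
      gcongr
      · refine (lintegral_abs_sin_add_cos_mul_le χ).trans ?_
        rw [hχ, lintegral_indicator_one hE]
        gcongr
      · exact lintegral_indicator_Ioo_sin_add_cos_le hr
      · refine (lintegral_abs_sin_mul_le ψ).trans ?_
        gcongr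
        exact lintegral_indicator_Ioo_rpow_neg_half_le (by positivity)
    _ ≤ ENNReal.ofReal (100 * r) := by
      rw [Real.sqrt_sq hr.le, ← ENNReal.ofReal_ofNat 2, ← ENNReal.ofReal_ofNat 3,
        ← ENNReal.ofReal_mul (by norm_num), ← ENNReal.ofReal_mul (by positivity),
        ← ENNReal.ofReal_mul (by positivity), ← ENNReal.ofReal_mul (by positivity),
        ← ENNReal.ofReal_mul (by positivity), ← ENNReal.ofReal_add (by positivity) (by positivity),
        ← ENNReal.ofReal_add (by positivity) (by positivity)]
      apply ENNReal.ofReal_le_ofReal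
      have : 2 / r * (3 * r ^ 2) = 6 * r := by field_simp; norm_num
      linarith

lemma lintegral_indicator_mul_rpow_cos_le {E : Set ℝ} (hE : MeasurableSet E)
    (hfin : volume E < ∞) :
    ∫⁻ t in Set.Ioc 0 (2 * Real.pi), E.indicator (1 : ℝ → ℝ≥0∞) (Real.sin t - Real.cos t) *
      ENNReal.ofReal (|Real.cos t| ^ (-(1 / 2) : ℝ)) ≤
        ENNReal.ofReal 100 * volume E ^ (1 / 2 : ℝ) := by
  set e := (volume E).toReal with he
  have hEe : volume E = ENNReal.ofReal e := (ENNReal.ofReal_toReal hfin.ne).symm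
  have he0 : 0 ≤ e := ENNReal.toReal_nonneg
  rw [hEe, ENNReal.ofReal_rpow_of_nonneg he0 (by norm_num), ← Real.sqrt_eq_rpow,
    ← ENNReal.ofReal_mul (by norm_num)]
  have hlim : Filter.Tendsto (fun r : ℝ => ENNReal.ofReal (100 * r)) (nhdsWithin √e (Set.Ioi √e))
      (nhds (ENNReal.ofReal (100 * √e))) := by
    refine Filter.Tendsto.mono_left (Continuous.tendsto ?_ _) nhdsWithin_le_nhds
    exact ENNReal.continuous_ofReal.comp (continuous_const.mul continuous_id)
  refine ge_of_tendsto hlim (eventually_nhdsWithin_of_forall fun r hr => ?_)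
  have hr0 : 0 < r := (Real.sqrt_nonneg e).trans_lt hr
  refine lintegral_indicator_mul_rpow_cos_le_of_volume_le hr0 ?_ hE
  rw [hEe]
  exact ENNReal.ofReal_le_ofReal ((Real.sqrt_le_left hr0.le).1 (le_of_lt hr))

lemma ae_cos_ne_zero : ∀ᵐ t : ℝ, Real.cos t ≠ 0 := by
  have h : {t : ℝ | Real.cos t = 0}.Countable := by
    refine (Set.countable_range fun k : ℤ => (2 * k + 1) * Real.pi / 2).mono fun t ht => ?_
    obtain ⟨k, hk⟩ := Real.cos_eq_zero_iff.1 ht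
    exact ⟨k, hk.symm⟩
  simpa [ae_iff] using h.measure_zero volume

/-- Hölder's inequality with weights `|cos t| ^ (-1/2)` and `|cos t|`. -/
lemma lintegral_mul_comp_sub_sin_rpow_le {E : Set ℝ} (hE : MeasurableSet E) {f : ℝ → ℝ≥0∞}
    (hf : Measurable f) (x : ℝ) :
    (∫⁻ t in Set.Ioc 0 (2 * Real.pi),
      E.indicator (1 : ℝ → ℝ≥0∞) (x - Real.cos t) * f (x - Real.sin t)) ^ (3 / 2 : ℝ) ≤
    (∫⁻ t in Set.Ioc 0 (2 * Real.pi), E.indicator (1 : ℝ → ℝ≥0∞) (x - Real.cos t) *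
      ENNReal.ofReal (|Real.cos t| ^ (-(1 / 2) : ℝ)) * f (x - Real.sin t)) *
      (3 * ∫⁻ s, f s) ^ (1 / 2 : ℝ) := by
  set χ := E.indicator (1 : ℝ → ℝ≥0∞) with hχ
  have hχm : Measurable χ := measurable_one.indicator hE
  have hχp : ∀ s, χ s ^ (2 / 3 : ℝ) = χ s := fun s => by
    by_cases h : s ∈ E <;> simp [hχ, h]
  set F : ℝ → ℝ≥0∞ := fun t =>
    χ (x - Real.cos t) * ENNReal.ofReal (|Real.cos t| ^ (-(1 / 2) : ℝ)) * f (x - Real.sin t) with hF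
  set G : ℝ → ℝ≥0∞ := fun t => ENNReal.ofReal |Real.cos t| * f (x - Real.sin t) with hG
  have hFm : Measurable F := by fun_prop
  have hGm : Measurable G := by fun_prop
  have hpt : ∀ t, Real.cos t ≠ 0 →
      χ (x - Real.cos t) * f (x - Real.sin t) = F t ^ (2 / 3 : ℝ) * G t ^ (1 / 3 : ℝ) := by
    intro t ht
    have hc : 0 < |Real.cos t| := abs_pos.2 ht
    have hw : ENNReal.ofReal (|Real.cos t| ^ (-(1 / 2) : ℝ)) ^ (2 / 3 : ℝ) *
        ENNReal.ofReal |Real.cos t| ^ (1 / 3 : ℝ) = 1 := by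
      rw [ENNReal.ofReal_rpow_of_nonneg (by positivity) (by norm_num),
        ENNReal.ofReal_rpow_of_nonneg (by positivity) (by norm_num),
        ← ENNReal.ofReal_mul (by positivity), ← Real.rpow_mul hc.le, ← Real.rpow_add hc]
      norm_num
    have hff : f (x - Real.sin t) ^ (2 / 3 : ℝ) * f (x - Real.sin t) ^ (1 / 3 : ℝ) =
        f (x - Real.sin t) := by
      rw [← ENNReal.rpow_add_of_nonneg _ _ (by norm_num) (by norm_num)]
      norm_num
    simp only [hF, hG]
    rw [ENNReal.mul_rpow_of_nonneg _ _ (by norm_num), ENNReal.mul_rpow_of_nonneg _ _ (by norm_num),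
      ENNReal.mul_rpow_of_nonneg _ _ (by norm_num), hχp]
    calc _ = χ (x - Real.cos t) * 1 *
          (f (x - Real.sin t) ^ (2 / 3 : ℝ) * f (x - Real.sin t) ^ (1 / 3 : ℝ)) := by
          rw [hff, mul_one]
      _ = _ := by rw [← hw]; ring
  have hGi : ∫⁻ t in Set.Ioc 0 (2 * Real.pi), G t ≤ 3 * ∫⁻ s, f s :=
    (lintegral_abs_cos_mul_le fun s => f (x - s)).trans_eq (by rw [lintegral_sub_left_eq_self])
  calc _ = (∫⁻ t in Set.Ioc 0 (2 * Real.pi), F t ^ (2 / 3 : ℝ) * G t ^ (1 / 3 : ℝ)) ^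
        (3 / 2 : ℝ) := by
        congr 1
        exact lintegral_congr_ae (ae_restrict_of_ae (ae_cos_ne_zero.mono hpt))
    _ ≤ ((∫⁻ t in Set.Ioc 0 (2 * Real.pi), F t) ^ (2 / 3 : ℝ) *
          (∫⁻ t in Set.Ioc 0 (2 * Real.pi), G t) ^ (1 / 3 : ℝ)) ^ (3 / 2 : ℝ) := by
        gcongr
        exact ENNReal.lintegral_mul_norm_pow_le hFm.aemeasurable hGm.aemeasurable
          (by norm_num) (by norm_num) (by norm_num)
    _ = (∫⁻ t in Set.Ioc 0 (2 * Real.pi), F t) *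
          (∫⁻ t in Set.Ioc 0 (2 * Real.pi), G t) ^ (1 / 2 : ℝ) := by
        rw [ENNReal.mul_rpow_of_nonneg _ _ (by norm_num), ← ENNReal.rpow_mul, ← ENNReal.rpow_mul]
        norm_num
    _ ≤ _ := by gcongr

lemma lintegral_lintegral_weighted_le {E : Set ℝ} (hE : MeasurableSet E) (hfin : volume E < ∞)
    {f : ℝ → ℝ≥0∞} (hf : Measurable f) :
    ∫⁻ x, ∫⁻ t in Set.Ioc 0 (2 * Real.pi), E.indicator (1 : ℝ → ℝ≥0∞) (x - Real.cos t) *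
      ENNReal.ofReal (|Real.cos t| ^ (-(1 / 2) : ℝ)) * f (x - Real.sin t) ≤
    ENNReal.ofReal 100 * volume E ^ (1 / 2 : ℝ) * ∫⁻ y, f y := by
  set χ := E.indicator (1 : ℝ → ℝ≥0∞) with hχ
  have hχm : Measurable χ := measurable_one.indicator hE
  calc _ = ∫⁻ t in Set.Ioc 0 (2 * Real.pi), ∫⁻ x, χ (x - Real.cos t) *
          ENNReal.ofReal (|Real.cos t| ^ (-(1 / 2) : ℝ)) * f (x - Real.sin t) :=
        lintegral_lintegral_swap (by fun_prop)
    _ = ∫⁻ t in Set.Ioc 0 (2 * Real.pi), ∫⁻ y, χ (y + (Real.sin t - Real.cos t)) *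
          ENNReal.ofReal (|Real.cos t| ^ (-(1 / 2) : ℝ)) * f y := by
        refine lintegral_congr fun t => ?_
        rw [← lintegral_sub_right_eq_self (fun y => χ (y + (Real.sin t - Real.cos t)) *
          ENNReal.ofReal (|Real.cos t| ^ (-(1 / 2) : ℝ)) * f y) (Real.sin t)]
        refine lintegral_congr fun x => ?_
        ring_nf
    _ = ∫⁻ y, ∫⁻ t in Set.Ioc 0 (2 * Real.pi), χ (y + (Real.sin t - Real.cos t)) *
          ENNReal.ofReal (|Real.cos t| ^ (-(1 / 2) : ℝ)) * f y :=
        lintegral_lintegral_swap (by fun_prop)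
    _ ≤ ∫⁻ y, ENNReal.ofReal 100 * volume E ^ (1 / 2 : ℝ) * f y := by
        refine lintegral_mono fun y => ?_
        rw [lintegral_mul_const _ (by fun_prop)]
        have hv : volume ((fun s => y + s) ⁻¹' E) = volume E := measure_preimage_add volume y E
        have h := lintegral_indicator_mul_rpow_cos_le (E := (fun s => y + s) ⁻¹' E)
          (hE.preimage (by fun_prop)) (hv ▸ hfin)
        rw [hv] at h
        gcongr
        exact h
    _ = _ := lintegral_const_mul _ hf

theorem restricted_type_at_G :
    ∃ C : ℝ, 0 < C ∧ ∀ E : Set ℝ, MeasurableSet E → volume E < ∞ →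
      ∀ f₂ : ℝ → ℝ, Measurable f₂ → (∀ x, 0 ≤ f₂ x) →
      lpNorm (3 / 2) (T2 (E.indicator fun _ => (1 : ℝ)) f₂) ≤ ENNReal.ofReal C *
        volume E ^ ((1 : ℝ) / 3) *
        lpNorm 1 (fun x => ENNReal.ofReal (f₂ x)) := by
  refine ⟨(100 : ℝ) ^ (2 / 3 : ℝ) * 3 ^ (1 / 3 : ℝ), by positivity, ?_⟩
  intro E hE hfin f₂ hf₂ _
  set f : ℝ → ℝ≥0∞ := fun x => ENNReal.ofReal (f₂ x) with hf
  have hfm : Measurable f := by fun_prop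
  have hT : ∀ x, T2 (E.indicator fun _ => (1 : ℝ)) f₂ x ≤
      ∫⁻ t in Set.Ioc 0 (2 * Real.pi),
        E.indicator (1 : ℝ → ℝ≥0∞) (x - Real.cos t) * f (x - Real.sin t) := by
    intro x
    have hχ : ∀ s, ENNReal.ofReal (E.indicator (fun _ => (1 : ℝ)) s) =
        E.indicator (1 : ℝ → ℝ≥0∞) s := fun s => by
      by_cases h : s ∈ E <;> simp [h]
    have h1 : (ENNReal.ofReal (2 * Real.pi))⁻¹ ≤ 1 := by
      rw [ENNReal.inv_le_one, ENNReal.one_le_ofReal]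
      linarith [Real.pi_gt_three]
    simp only [T2, hχ]
    exact mul_le_of_le_one_left' h1
  have hp : (3 / 2 : ℝ≥0∞).toReal = 3 / 2 := by simp
  have hp' : (3 / 2 : ℝ≥0∞) ≠ ∞ := ENNReal.div_ne_top (by simp) (by simp)
  rw [_root_.lpNorm, _root_.lpNorm, if_neg hp', if_neg ENNReal.one_ne_top, hp]
  simp only [ENNReal.toReal_one, ENNReal.rpow_one, div_one]
  set N := ∫⁻ x, f x with hN
  have hmain : ∫⁻ x, T2 (E.indicator fun _ => (1 : ℝ)) f₂ x ^ (3 / 2 : ℝ) ≤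
      ENNReal.ofReal 100 * volume E ^ (1 / 2 : ℝ) * N * (3 * N) ^ (1 / 2 : ℝ) := by
    calc _ ≤ ∫⁻ x, (∫⁻ t in Set.Ioc 0 (2 * Real.pi), E.indicator (1 : ℝ → ℝ≥0∞) (x - Real.cos t) *
          ENNReal.ofReal (|Real.cos t| ^ (-(1 / 2) : ℝ)) * f (x - Real.sin t)) *
          (3 * N) ^ (1 / 2 : ℝ) := by
          refine lintegral_mono fun x => ?_
          exact (ENNReal.rpow_le_rpow (hT x) (by norm_num)).trans
            (lintegral_mul_comp_sub_sin_rpow_le hE hfm x)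
      _ = (∫⁻ x, ∫⁻ t in Set.Ioc 0 (2 * Real.pi), E.indicator (1 : ℝ → ℝ≥0∞) (x - Real.cos t) *
          ENNReal.ofReal (|Real.cos t| ^ (-(1 / 2) : ℝ)) * f (x - Real.sin t)) *
          (3 * N) ^ (1 / 2 : ℝ) := by
          have hχm : Measurable (E.indicator (1 : ℝ → ℝ≥0∞)) := measurable_one.indicator hE
          refine lintegral_mul_const _ (Measurable.lintegral_prod_right ?_)
          fun_prop
      _ ≤ _ := by
          gcongr
          exact lintegral_lintegral_weighted_le hE hfin hfm
  calc _ ≤ (ENNReal.ofReal 100 * volume E ^ (1 / 2 : ℝ) * N * (3 * N) ^ (1 / 2 : ℝ)) ^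
        (1 / (3 / 2) : ℝ) := by gcongr
    _ = ENNReal.ofReal 100 ^ (2 / 3 : ℝ) * volume E ^ (1 / 3 : ℝ) * N ^ (2 / 3 : ℝ) *
        (3 ^ (1 / 3 : ℝ) * N ^ (1 / 3 : ℝ)) := by
        rw [ENNReal.mul_rpow_of_nonneg _ _ (by norm_num),
          ENNReal.mul_rpow_of_nonneg _ _ (by norm_num),
          ENNReal.mul_rpow_of_nonneg _ _ (by norm_num), ← ENNReal.rpow_mul, ← ENNReal.rpow_mul,
          ← ENNReal.mul_rpow_of_nonneg _ _ (by norm_num)]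
        norm_num
    _ = ENNReal.ofReal 100 ^ (2 / 3 : ℝ) * 3 ^ (1 / 3 : ℝ) * volume E ^ (1 / 3 : ℝ) *
        (N ^ (2 / 3 : ℝ) * N ^ (1 / 3 : ℝ)) := by ring
    _ = _ := by
        rw [← ENNReal.rpow_add_of_nonneg _ _ (by norm_num) (by norm_num),
          ENNReal.ofReal_mul (by positivity), ← ENNReal.ofReal_rpow_of_nonneg (by norm_num)
          (by norm_num), ← ENNReal.ofReal_rpow_of_nonneg (by norm_num) (by norm_num)]
        norm_num
end

section
/- Let n ≥ 3 be an integer. There exists a finite constant C > 0, depending only on n, such that for all measurable sets I₁,…,I_{n−1} ⊆ ℝ of finite Lebesgue measure and every nonnegative measurable function fₙ on ℝ, ‖T(χ_{I₁},…,χ_{I_{n−1}}, fₙ)‖_∞ ≤ C (∏_{j=1}^{n−1} |I_j|^{(n−1)/n}) ‖fₙ‖_∞; that is, T is of restricted type at the point E = ((n−1)/n,…,(n−1)/n, 0; 0). -/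
open MeasureTheory ENNReal

/-- The normalized (total mass 1) surface measure on the unit sphere
`S^{n-1} ⊂ ℝ^n`, viewed as a measure on `ℝ^n` supported on the sphere. -/
noncomputable def normSphere (n : ℕ) : Measure (EuclideanSpace ℝ (Fin n)) :=
  (Measure.map Subtype.val
      ((volume : Measure (EuclideanSpace ℝ (Fin n))).toSphere) Set.univ)⁻¹ •
    Measure.map Subtype.val ((volume : Measure (EuclideanSpace ℝ (Fin n))).toSphere)

/-- The multilinear spherical average
`T(f₁,…,fₙ)(x) = ∫_{S^{n-1}} ∏_{j=1}^n f_j(x - σ_j) dσ(σ)`. -/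
noncomputable def sphAvg (n : ℕ) (f : Fin n → ℝ → ℝ) (x : ℝ) : ℝ≥0∞ :=
  ∫⁻ σ, ∏ j, ENNReal.ofReal (f j (x - σ j)) ∂(normSphere n)

/-- `Θ` bounds the measure of the angles at which a circle of radius at least `ρ₀` lies over a
set `L` of abscissae, in terms of the measure of `L`. -/
structure IsArcBound (ρ₀ : ℝ) (Θ : ℝ≥0∞ → ℝ≥0∞) : Prop where
  mono : Monotone Θ
  cont : Continuous Θ
  ne_top : ∀ a, a ≠ ∞ → Θ a ≠ ∞
  bound : ∀ (L : Set ℝ) (ρ : ℝ), MeasurableSet L → 0 < ρ → ρ₀ ≤ ρ →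
    volume (Set.Ioo (-Real.pi) Real.pi ∩ (fun φ => ρ * Real.cos φ) ⁻¹' L) ≤ Θ (volume L)

theorem isArcBound_two_pi : IsArcBound 0 (fun _ => ENNReal.ofReal (2 * Real.pi)) where
  mono := monotone_const
  cont := continuous_const
  ne_top := fun _ _ => ofReal_ne_top
  bound := fun L ρ _ _ _ => by
    refine (measure_mono Set.inter_subset_left).trans ?_
    rw [Real.volume_Ioo]
    exact ofReal_le_ofReal (by linarith)

/-- On an arc in `(0, π)`, the projection to the abscissa shrinks length at most quadratically. -/
theorem sq_measure_arc_le {L : Set ℝ} (hL : MeasurableSet L) {ρ : ℝ} (hρ : 0 < ρ) :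
    volume (Set.Ioo 0 Real.pi ∩ (fun φ => ρ * Real.cos φ) ⁻¹' L) ^ 2 ≤
      ENNReal.ofReal (4 * Real.pi / ρ) * volume L := by
  have hπ := Real.pi_pos
  set E := Set.Ioo 0 Real.pi ∩ (fun φ => ρ * Real.cos φ) ⁻¹' L
  have hEm : MeasurableSet E := measurableSet_Ioo.inter (by measurability)
  have hEtop : volume E ≠ ∞ :=
    ((measure_mono Set.inter_subset_left).trans_lt measure_Ioo_lt_top).ne
  set e := (volume E).toReal
  have hEe : volume E = ENNReal.ofReal e := (ofReal_toReal hEtop).symm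
  have he0 : 0 ≤ e := toReal_nonneg
  set F := E ∩ Set.Icc (e / 4) (Real.pi - e / 4)
  have hFm : MeasurableSet F := hEm.inter measurableSet_Icc
  have hEF : ENNReal.ofReal (e / 2) ≤ volume F := by
    have hsub : E ⊆ F ∪ (Set.Ioo 0 (e / 4) ∪ Set.Ioo (Real.pi - e / 4) Real.pi) := by
      intro φ hφ
      by_cases h1 : φ < e / 4
      · exact Or.inr (Or.inl ⟨hφ.1.1, h1⟩)
      · by_cases h2 : Real.pi - e / 4 < φ
        · exact Or.inr (Or.inr ⟨h2, hφ.1.2⟩)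
        · exact Or.inl ⟨hφ, not_lt.1 h1, not_lt.1 h2⟩
    have hle : volume E ≤ volume F + ENNReal.ofReal (e / 2) := by
      refine (measure_mono hsub).trans ((measure_union_le _ _).trans ?_)
      gcongr
      refine (measure_union_le _ _).trans ?_
      rw [Real.volume_Ioo, Real.volume_Ioo, ← ofReal_add (by linarith) (by linarith)]
      exact ofReal_le_ofReal (by linarith)
    have hsplit : volume E = ENNReal.ofReal (e / 2) + ENNReal.ofReal (e / 2) := by
      rw [hEe, ← ofReal_add (by linarith) (by linarith)]
      congr 1; ring
    rw [hsplit] at hle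
    exact (ENNReal.add_le_add_iff_right ofReal_ne_top).1 hle
  have himage : ENNReal.ofReal (ρ * (2 / Real.pi * (e / 4))) * volume F ≤ volume L := by
    have hcv := lintegral_image_eq_lintegral_abs_deriv_mul (f := fun φ => ρ * Real.cos φ)
      (f' := fun φ => ρ * -Real.sin φ) hFm
      (fun φ _ => ((Real.hasDerivAt_cos φ).const_mul ρ).hasDerivWithinAt)
      (fun a ha b hb hab => Real.injOn_cos ⟨ha.1.1.1.le, ha.1.1.2.le⟩ ⟨hb.1.1.1.le, hb.1.1.2.le⟩
        (mul_left_cancel₀ hρ.ne' hab)) (fun _ => 1)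
    simp only [mul_one, setLIntegral_one] at hcv
    calc ENNReal.ofReal (ρ * (2 / Real.pi * (e / 4))) * volume F
        = ∫⁻ _ in F, ENNReal.ofReal (ρ * (2 / Real.pi * (e / 4))) := by
          rw [setLIntegral_const]
      _ ≤ ∫⁻ φ in F, ENNReal.ofReal |ρ * -Real.sin φ| := by
          refine setLIntegral_mono' hFm fun φ hφ => ofReal_le_ofReal ?_
          have hsin : 2 / Real.pi * (e / 4) ≤ Real.sin φ := by
            rcases le_total φ (Real.pi / 2) with h | h
            · refine le_trans ?_ (Real.mul_le_sin hφ.1.1.1.le h)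
              exact mul_le_mul_of_nonneg_left hφ.2.1 (by positivity)
            · rw [← Real.sin_pi_sub]
              refine le_trans ?_ (Real.mul_le_sin (by linarith [hφ.1.1.2]) (by linarith))
              exact mul_le_mul_of_nonneg_left (by linarith [hφ.2.2]) (by positivity)
          calc ρ * (2 / Real.pi * (e / 4)) ≤ ρ * Real.sin φ := by gcongr
            _ ≤ |ρ * -Real.sin φ| := by
              rw [mul_neg, abs_neg]; exact le_abs_self _
      _ = volume ((fun φ => ρ * Real.cos φ) '' F) := hcv.symm
      _ ≤ volume L := measure_mono (by rintro _ ⟨φ, hφ, rfl⟩; exact hφ.1.2)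
  calc volume E ^ 2 = ENNReal.ofReal (4 * Real.pi / ρ) *
        (ENNReal.ofReal (ρ * (2 / Real.pi * (e / 4))) * ENNReal.ofReal (e / 2)) := by
        rw [hEe, ← ofReal_pow he0, ← ofReal_mul (by positivity), ← ofReal_mul (by positivity)]
        congr 1
        field_simp
    _ ≤ _ := by
        gcongr
        exact le_trans (by gcongr) himage

theorem isArcBound_sqrt {ρ₀ : ℝ} (hρ₀ : 0 < ρ₀) :
    IsArcBound ρ₀ (fun a => 2 * (ENNReal.ofReal (4 * Real.pi / ρ₀) * a) ^ (1 / 2 : ℝ)) where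
  mono := fun a b hab => by
    dsimp only
    gcongr
  cont := by
    refine (ENNReal.continuous_const_mul (by simp)).comp
      (ENNReal.continuous_rpow_const.comp (ENNReal.continuous_const_mul ofReal_ne_top))
  ne_top := fun a ha => mul_ne_top (by simp)
    (rpow_ne_top_of_nonneg (by norm_num) (mul_ne_top ofReal_ne_top ha))
  bound := fun L ρ hL hρ hρ₀ρ => by
    set E := Set.Ioo 0 Real.pi ∩ (fun φ => ρ * Real.cos φ) ⁻¹' L
    have hsub : Set.Ioo (-Real.pi) Real.pi ∩ (fun φ => ρ * Real.cos φ) ⁻¹' L ⊆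
        (E ∪ Neg.neg ⁻¹' E) ∪ {0} := by
      rintro φ ⟨⟨h1, h2⟩, h3⟩
      rcases lt_trichotomy φ 0 with h | h | h
      · refine Or.inl (Or.inr ⟨⟨by linarith, by linarith⟩, ?_⟩)
        simpa using h3
      · exact Or.inr h
      · exact Or.inl (Or.inl ⟨⟨h, h2⟩, h3⟩)
    have hEle : volume E ≤ (ENNReal.ofReal (4 * Real.pi / ρ₀) * volume L) ^ (1 / 2 : ℝ) := by
      rw [one_div, ENNReal.le_rpow_inv_iff (by norm_num), ENNReal.rpow_two]
      refine (sq_measure_arc_le hL hρ).trans ?_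
      gcongr
    calc _ ≤ volume E + volume E + 0 := by
          refine (measure_mono hsub).trans ((measure_union_le _ _).trans ?_)
          rw [Real.volume_singleton]
          gcongr
          refine (measure_union_le _ _).trans ?_
          rw [Measure.measure_preimage_neg]
      _ = 2 * volume E := by rw [add_zero, two_mul]
      _ ≤ _ := by gcongr

/-- The part of a planar annulus over a set of abscissae, by polar coordinates. -/
theorem volume_planar_annulus_le {ρ₀ : ℝ} {Θ : ℝ≥0∞ → ℝ≥0∞} (hΘ : IsArcBound ρ₀ Θ)
    {L : Set ℝ} (hL : MeasurableSet L) {A B : ℝ} (hAB : A ≤ B) :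
    volume {w : ℝ × ℝ | w.1 ∈ L ∧ ρ₀ ^ 2 ≤ w.1 ^ 2 + w.2 ^ 2 ∧
      A ≤ w.1 ^ 2 + w.2 ^ 2 ∧ w.1 ^ 2 + w.2 ^ 2 ≤ B} ≤
      Θ (volume L) * ENNReal.ofReal ((B - A) / 2) := by
  set D := {w : ℝ × ℝ | w.1 ∈ L ∧ ρ₀ ^ 2 ≤ w.1 ^ 2 + w.2 ^ 2 ∧
      A ≤ w.1 ^ 2 + w.2 ^ 2 ∧ w.1 ^ 2 + w.2 ^ 2 ≤ B}
  have hDm : MeasurableSet D := by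
    refine (measurable_fst hL).inter ?_
    have h1 : Measurable fun w : ℝ × ℝ => w.1 ^ 2 + w.2 ^ 2 := by fun_prop
    exact (measurableSet_le measurable_const h1).inter
      ((measurableSet_le measurable_const h1).inter (measurableSet_le h1 measurable_const))
  have hpolar (ρ φ : ℝ) : (ρ * Real.cos φ) ^ 2 + (ρ * Real.sin φ) ^ 2 = ρ ^ 2 := by
    rw [mul_pow, mul_pow, ← mul_add, Real.cos_sq_add_sin_sq, mul_one]
  rw [← lintegral_indicator_one hDm, ← lintegral_comp_polarCoord_symm, polarCoord_target,
    Measure.volume_eq_prod]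
  have hmeas : Measurable fun p : ℝ × ℝ =>
      ENNReal.ofReal p.1 • D.indicator (1 : ℝ × ℝ → ℝ≥0∞) (polarCoord.symm p) := by
    refine (measurable_fst.ennreal_ofReal).mul
      ((measurable_one.indicator hDm).comp ?_)
    have : Measurable fun p : ℝ × ℝ => (p.1 * Real.cos p.2, p.1 * Real.sin p.2) := by fun_prop
    exact this
  rw [setLIntegral_prod _ hmeas.aemeasurable]
  have hinner (ρ : ℝ) (hρ : ρ ∈ Set.Ioi (0 : ℝ)) :
      ∫⁻ φ in Set.Ioo (-Real.pi) Real.pi,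
        ENNReal.ofReal ρ • D.indicator (1 : ℝ × ℝ → ℝ≥0∞) (polarCoord.symm (ρ, φ)) ≤
      Θ (volume L) * (Set.Icc √A √B).indicator ENNReal.ofReal ρ := by
    have hρ : 0 < ρ := hρ
    by_cases h : ρ₀ ≤ ρ ∧ ρ ∈ Set.Icc √A √B
    · rw [Set.indicator_of_mem h.2]
      simp only [smul_eq_mul]
      rw [lintegral_const_mul' _ _ ofReal_ne_top, mul_comm]
      gcongr
      refine le_trans ?_ (hΘ.bound L ρ hL hρ h.1)
      have hset : MeasurableSet ((fun φ => ρ * Real.cos φ) ⁻¹' L) := by measurability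
      rw [Set.inter_comm, ← Measure.restrict_apply hset, ← lintegral_indicator_one hset]
      refine lintegral_mono fun φ => ?_
      by_cases hφ : polarCoord.symm (ρ, φ) ∈ D
      · have hφL : φ ∈ (fun φ => ρ * Real.cos φ) ⁻¹' L := hφ.1
        rw [Set.indicator_of_mem hφ, Set.indicator_of_mem hφL]
        rfl
      · rw [Set.indicator_of_notMem hφ]
        exact zero_le
    · have hzero (φ : ℝ) : polarCoord.symm (ρ, φ) ∉ D := by
        rintro ⟨-, h1, h2, h3⟩
        simp only [polarCoord_symm_apply, hpolar] at h1 h2 h3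
        refine h ⟨(le_abs_self _).trans (abs_le_of_sq_le_sq h1 hρ.le), ?_, ?_⟩
        · exact Real.sqrt_le_iff.2 ⟨hρ.le, h2⟩
        · exact Real.le_sqrt_of_sq_le h3
      simp only [Set.indicator_of_notMem (hzero _), smul_zero, lintegral_zero, zero_le]
  refine (setLIntegral_mono' measurableSet_Ioi hinner).trans ?_
  rw [lintegral_const_mul _ (by measurability)]
  gcongr
  have hsqrt : √A ≤ √B := Real.sqrt_le_sqrt hAB
  calc ∫⁻ ρ in Set.Ioi 0, (Set.Icc √A √B).indicator ENNReal.ofReal ρ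
      ≤ ∫⁻ ρ, (Set.Icc √A √B).indicator ENNReal.ofReal ρ := setLIntegral_le_lintegral _ _
    _ = ∫⁻ ρ in Set.Icc √A √B, ENNReal.ofReal ρ := lintegral_indicator measurableSet_Icc _
    _ = ENNReal.ofReal (∫ ρ in Set.Icc √A √B, ρ) := by
      rw [ofReal_integral_eq_lintegral_ofReal (f := fun ρ => ρ) continuous_id.integrableOn_Icc]
      filter_upwards [ae_restrict_mem measurableSet_Icc] with ρ hρ
      exact (Real.sqrt_nonneg A).trans hρ.1
    _ ≤ ENNReal.ofReal ((B - A) / 2) := by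
      refine ofReal_le_ofReal ?_
      rw [integral_Icc_eq_integral_Ioc, ← intervalIntegral.integral_of_le hsqrt, integral_id]
      rw [Real.sq_sqrt', Real.sq_sqrt']
      rcases max_cases A 0 with h | h <;> rcases max_cases B 0 with h' | h' <;> linarith

/-- Separating two coordinates of Euclidean space from the remaining ones preserves volume. -/
theorem measurePreserving_splitTwo {k : ℕ} (q : Fin (k + 2)) (p : Fin (k + 1)) :
    MeasurePreserving (fun x : EuclideanSpace ℝ (Fin (k + 2)) =>
      ((x (q.succAbove p), x q), fun j : Fin k => x (q.succAbove (p.succAbove j)))) := by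
  have h1 := PiLp.volume_preserving_ofLp (Fin (k + 2))
  have h2 := volume_preserving_piFinSuccAbove (fun _ : Fin (k + 2) => ℝ) q
  have h3 := (MeasurePreserving.id (volume : Measure ℝ)).prod
    (volume_preserving_piFinSuccAbove (fun _ : Fin (k + 1) => ℝ) p)
  have h4 := (volume_preserving_prodAssoc (α₁ := ℝ) (β₁ := ℝ) (γ₁ := Fin k → ℝ)).symm
  have h5 := (Measure.measurePreserving_swap (μ := (volume : Measure ℝ))
    (ν := (volume : Measure ℝ))).prod (MeasurePreserving.id (volume : Measure (Fin k → ℝ)))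
  exact h5.comp (h4.comp (h3.comp (h2.comp h1)))

theorem norm_sq_eq_splitTwo {k : ℕ} (q : Fin (k + 2)) (p : Fin (k + 1))
    (x : EuclideanSpace ℝ (Fin (k + 2))) :
    ‖x‖ ^ 2 = (x (q.succAbove p) ^ 2 + x q ^ 2) +
      ∑ j, x (q.succAbove (p.succAbove j)) ^ 2 := by
  rw [EuclideanSpace.real_norm_sq_eq, Fin.sum_univ_succAbove _ q, Fin.sum_univ_succAbove _ p]
  ring

/-- The volume of the part of a spherical shell on which all coordinates but `x q` are
prescribed to lie in given sets. -/
theorem volume_box_inter_shell_le {k : ℕ} (q : Fin (k + 2)) (p : Fin (k + 1)) {ρ₀ : ℝ}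
    {Θ : ℝ≥0∞ → ℝ≥0∞} (hΘ : IsArcBound ρ₀ Θ) {L : Fin (k + 2) → Set ℝ}
    (hL : ∀ i, MeasurableSet (L i)) {s t : ℝ} (hst : s ≤ t) :
    volume {x : EuclideanSpace ℝ (Fin (k + 2)) |
      (∀ i, i ≠ q → x i ∈ L i) ∧ ρ₀ ^ 2 ≤ x (q.succAbove p) ^ 2 + x q ^ 2 ∧
        s ≤ ‖x‖ ^ 2 ∧ ‖x‖ ^ 2 ≤ t} ≤
      (∏ j, volume (L (q.succAbove (p.succAbove j)))) *
        (Θ (volume (L (q.succAbove p))) * ENNReal.ofReal ((t - s) / 2)) := by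
  set D : Set ((ℝ × ℝ) × (Fin k → ℝ)) := {y | (∀ j, y.2 j ∈ L (q.succAbove (p.succAbove j))) ∧
    y.1.1 ∈ L (q.succAbove p) ∧ ρ₀ ^ 2 ≤ y.1.1 ^ 2 + y.1.2 ^ 2 ∧
    s - ∑ j, y.2 j ^ 2 ≤ y.1.1 ^ 2 + y.1.2 ^ 2 ∧
    y.1.1 ^ 2 + y.1.2 ^ 2 ≤ t - ∑ j, y.2 j ^ 2}
  have hDm : MeasurableSet D := by
    have h0 : Measurable fun y : (ℝ × ℝ) × (Fin k → ℝ) => ∑ j, y.2 j ^ 2 := by fun_prop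
    have h1 : Measurable fun y : (ℝ × ℝ) × (Fin k → ℝ) => y.1.1 ^ 2 + y.1.2 ^ 2 := by fun_prop
    have h2 : MeasurableSet {y : (ℝ × ℝ) × (Fin k → ℝ) |
        ∀ j, y.2 j ∈ L (q.succAbove (p.succAbove j))} := by
      rw [Set.ofPred_forall]
      exact MeasurableSet.iInter fun j => ((measurable_pi_apply j).comp measurable_snd) (hL _)
    exact h2.inter (((measurable_fst.comp measurable_fst) (hL _)).inter
      ((measurableSet_le measurable_const h1).inter
        ((measurableSet_le (measurable_const.sub h0) h1).inter
          (measurableSet_le h1 (measurable_const.sub h0)))))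
  calc _ ≤ volume ((fun x : EuclideanSpace ℝ (Fin (k + 2)) =>
        ((x (q.succAbove p), x q), fun j : Fin k => x (q.succAbove (p.succAbove j)))) ⁻¹' D) := by
        refine measure_mono fun x ⟨h1, h2, h3, h4⟩ => ?_
        rw [norm_sq_eq_splitTwo q p] at h3 h4
        exact ⟨fun j => h1 _ (Fin.succAbove_ne _ _), h1 _ (Fin.succAbove_ne _ _), h2,
          by dsimp only; linarith, by dsimp only; linarith⟩
    _ = volume D := (measurePreserving_splitTwo q p).measure_preimage hDm.nullMeasurableSet
    _ = ∫⁻ z, volume ((fun w => (w, z)) ⁻¹' D) := Measure.prod_apply_symm hDm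
    _ ≤ ∫⁻ z, (Set.univ.pi fun j => L (q.succAbove (p.succAbove j))).indicator
        (fun _ => Θ (volume (L (q.succAbove p))) * ENNReal.ofReal ((t - s) / 2)) z := by
        refine lintegral_mono fun z => ?_
        by_cases hz : z ∈ Set.univ.pi fun j => L (q.succAbove (p.succAbove j))
        · rw [Set.indicator_of_mem hz]
          refine (measure_mono fun w hw => hw.2).trans ?_
          refine (volume_planar_annulus_le hΘ (hL _) (A := s - ∑ j, z j ^ 2)
            (B := t - ∑ j, z j ^ 2) (by linarith)).trans_eq ?_
          congr 3
          ring
        · have : (fun w => (w, z)) ⁻¹' D = ∅ :=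
            Set.eq_empty_of_forall_notMem fun w hw => hz fun j _ => hw.1 j
          rw [this, measure_empty]
          exact zero_le
    _ = _ := by
        rw [lintegral_indicator_const (MeasurableSet.univ_pi fun j => hL _), volume_pi_pi,
          mul_comm]

open Set Metric Filter Topology in
open scoped Pointwise in
/-- Surface measure of a compact set, obtained by comparing the cone over it with thin shells. -/
theorem toSphere_isCompact_le {k : ℕ} (q : Fin (k + 2)) (p : Fin (k + 1)) {ρ₀ : ℝ}
    {Θ : ℝ≥0∞ → ℝ≥0∞} (hΘ : IsArcBound ρ₀ Θ)
    {K : Set (sphere (0 : EuclideanSpace ℝ (Fin (k + 2))) 1)} (hK : IsCompact K)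
    (hKρ : ∀ ω ∈ K, ρ₀ ^ 2 ≤ ω.1 (q.succAbove p) ^ 2 + ω.1 q ^ 2) :
    (volume : Measure (EuclideanSpace ℝ (Fin (k + 2)))).toSphere K ≤
      2 * ((∏ j, volume ((fun ω => ω.1 (q.succAbove (p.succAbove j))) '' K)) *
        Θ (volume ((fun ω => ω.1 (q.succAbove p)) '' K))) := by
  set L : Fin (k + 2) → Set ℝ := fun i => (fun ω => ω.1 i) '' K
  have hLc (i) : IsCompact (L i) := hK.image (by fun_prop)
  set μ := (volume : Measure (EuclideanSpace ℝ (Fin (k + 2))))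
  have hshell (δ : ℝ) (hδ : 0 < δ) (hδ1 : δ ≤ 1) : μ.toSphere K ≤
      2 * ((∏ j, volume (cthickening δ (L (q.succAbove (p.succAbove j))))) *
        Θ (volume (cthickening δ (L (q.succAbove p))))) := by
    set S := {x : EuclideanSpace ℝ (Fin (k + 2)) |
      (∀ i, i ≠ q → x i ∈ cthickening δ (L i)) ∧ ρ₀ ^ 2 ≤ x (q.succAbove p) ^ 2 + x q ^ 2 ∧
        1 ≤ ‖x‖ ^ 2 ∧ ‖x‖ ^ 2 ≤ (1 + δ) ^ 2}
    set c := Ioo (0 : ℝ) 1 • ((↑) '' K : Set (EuclideanSpace ℝ (Fin (k + 2))))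
    have hsub : (1 + δ) • c ⊆ c ∪ S := by
      rintro _ ⟨_, ⟨r, hr, _, ⟨ω, hω, rfl⟩, rfl⟩, rfl⟩
      have hn : ‖(ω : EuclideanSpace ℝ (Fin (k + 2)))‖ = 1 := by simp
      simp only [smul_smul]
      rcases lt_or_ge ((1 + δ) * r) 1 with h | h
      · exact Or.inl ⟨_, ⟨mul_pos (by linarith) hr.1, h⟩, _, ⟨ω, hω, rfl⟩, rfl⟩
      · right
        set a := (1 + δ) * r
        have ha : a ≤ 1 + δ := by
          have := mul_le_mul_of_nonneg_left hr.2.le (by linarith : 0 ≤ 1 + δ)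
          linarith
        refine ⟨fun i _ => ?_, ?_, ?_, ?_⟩
        · refine mem_cthickening_of_dist_le _ (ω.1 i) δ _ ⟨ω, hω, rfl⟩ ?_
          have hi : |ω.1 i| ≤ 1 := by
            exact (PiLp.norm_apply_le _ i).trans hn.le
          rw [Real.dist_eq, PiLp.smul_apply, smul_eq_mul,
            show a * ω.1 i - ω.1 i = (a - 1) * ω.1 i by ring, abs_mul, abs_of_nonneg (by linarith)]
          nlinarith [abs_nonneg (ω.1 i)]
        · have h1 := hKρ ω hω
          have : 1 ≤ a ^ 2 := one_le_pow₀ h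
          simp only [PiLp.smul_apply, smul_eq_mul, mul_pow]
          nlinarith [sq_nonneg (ω.1 (q.succAbove p)), sq_nonneg (ω.1 q)]
        · rw [norm_smul, hn, mul_one, Real.norm_eq_abs, sq_abs]
          exact one_le_pow₀ h
        · rw [norm_smul, hn, mul_one, Real.norm_eq_abs, sq_abs]
          gcongr
    have hfin : Module.finrank ℝ (EuclideanSpace ℝ (Fin (k + 2))) = k + 2 := by simp
    have hsphere : μ.toSphere K = ((k + 2 : ℕ) : ℝ≥0∞) * μ c := by
      rw [μ.toSphere_apply' hK.measurableSet, hfin]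
    have hctop : μ c ≠ ∞ := by
      intro h
      have := measure_ne_top μ.toSphere K
      rw [hsphere, h] at this
      exact this (mul_top (by simp))
    have hgrow : ENNReal.ofReal δ * μ.toSphere K ≤ μ S := by
      have h1 : ENNReal.ofReal ((1 + δ) ^ (k + 2)) * μ c ≤ μ c + μ S := by
        have := (measure_mono hsub).trans (measure_union_le (μ := μ) c S)
        rwa [Measure.addHaar_smul, hfin, abs_of_nonneg (by positivity)] at this
      have h2 : μ c + ENNReal.ofReal δ * μ.toSphere K ≤
          ENNReal.ofReal ((1 + δ) ^ (k + 2)) * μ c := by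
        calc _ = ENNReal.ofReal (1 + (k + 2 : ℕ) * δ) * μ c := by
              rw [hsphere, ofReal_add zero_le_one (by positivity), ofReal_one, add_mul, one_mul,
                ofReal_mul (by positivity), ofReal_natCast]
              ring
          _ ≤ _ := by
              gcongr
              exact one_add_mul_le_pow (by linarith) _
      exact (ENNReal.add_le_add_iff_left hctop).1 (h2.trans h1)
    have hvol := volume_box_inter_shell_le q p hΘ
      (L := fun i => cthickening δ (L i)) (fun i => isClosed_cthickening.measurableSet)
      (s := 1) (t := (1 + δ) ^ 2) (by nlinarith)
    have hδE : ENNReal.ofReal (((1 + δ) ^ 2 - 1) / 2) ≤ ENNReal.ofReal δ * 2 := by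
      rw [← ofReal_ofNat 2, ← ofReal_mul hδ.le]
      exact ofReal_le_ofReal (by nlinarith)
    have h0 : ENNReal.ofReal δ ≠ 0 := by simpa using hδ
    refine (ENNReal.mul_le_mul_iff_right h0 ofReal_ne_top).1 ?_
    refine hgrow.trans (hvol.trans ?_)
    refine (mul_le_mul_right (mul_le_mul_right hδE _) _).trans_eq ?_
    ring
  have hlim (i) : Tendsto (fun δ => volume (cthickening δ (L i))) (𝓝[>] 0) (𝓝 (volume (L i))) :=
    (tendsto_measure_cthickening_of_isCompact (hLc i)).mono_left nhdsWithin_le_nhds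
  have hLtop (i) : volume (L i) ≠ ∞ := (hLc i).measure_lt_top.ne
  have hprod := ENNReal.tendsto_finsetProd_of_ne_top Finset.univ
    (fun (j : Fin k) _ => hlim (q.succAbove (p.succAbove j))) (fun j _ => hLtop _)
  have hΘlim := (hΘ.cont.tendsto _).comp (hlim (q.succAbove p))
  refine ge_of_tendsto (ENNReal.Tendsto.const_mul (ENNReal.Tendsto.mul hprod
    (Or.inr (hΘ.ne_top _ (hLtop _))) hΘlim (Or.inr (prod_ne_top fun j _ => hLtop _)))
    (Or.inr (by simp))) ?_
  filter_upwards [Ioc_mem_nhdsGT (zero_lt_one' ℝ)] with δ hδ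
  exact hshell δ hδ.1 hδ.2

open Set Metric in
/-- A mixed bound for the surface measure of a set with prescribed coordinates: all coordinates
other than `p` and `q` enter through their length, the coordinate `p` through `Θ`. -/
theorem toSphere_le {k : ℕ} (q : Fin (k + 2)) (p : Fin (k + 1)) {ρ₀ : ℝ}
    {Θ : ℝ≥0∞ → ℝ≥0∞} (hΘ : IsArcBound ρ₀ Θ) {J : Fin (k + 2) → Set ℝ}
    {A : Set (sphere (0 : EuclideanSpace ℝ (Fin (k + 2))) 1)} (hA : MeasurableSet A)
    (hAJ : ∀ ω ∈ A, ∀ i, i ≠ q → ω.1 i ∈ J i)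
    (hAρ : ∀ ω ∈ A, ρ₀ ^ 2 ≤ ω.1 (q.succAbove p) ^ 2 + ω.1 q ^ 2) :
    (volume : Measure (EuclideanSpace ℝ (Fin (k + 2)))).toSphere A ≤
      2 * ((∏ j, volume (J (q.succAbove (p.succAbove j)))) * Θ (volume (J (q.succAbove p)))) := by
  rw [hA.measure_eq_iSup_isCompact_of_ne_top (measure_ne_top _ _)]
  refine iSup₂_le fun K hKA => iSup_le fun hK => ?_
  refine (toSphere_isCompact_le q p hΘ hK fun ω hω => hAρ ω (hKA hω)).trans ?_
  have hsub (i) (hi : i ≠ q) : (fun ω => ω.1 i) '' K ⊆ J i := by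
    rintro _ ⟨ω, hω, rfl⟩
    exact hAJ ω (hKA hω) i hi
  gcongr with j
  · exact hsub _ (Fin.succAbove_ne _ _)
  · exact hΘ.mono (measure_mono (hsub _ (Fin.succAbove_ne _ _)))

/-- Combining the bounds in which one factor is omitted with the bound in which one factor is
replaced by its square root. -/
theorem le_mul_prod_rpow_of_le {k : ℕ} {X C : ℝ≥0∞} {a : Fin (k + 1) → ℝ≥0∞}
    (homit : ∀ j, X ≤ C * ∏ i, a (Fin.succAbove j i)) {p : Fin (k + 1)}
    (hsqrt : X ≤ C * ((∏ i, a (p.succAbove i)) * a p ^ (1 / 2 : ℝ))) :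
    X ≤ C * ∏ i, a i ^ (((k + 1 : ℕ) : ℝ) / (k + 2 : ℕ)) := by
  set Q := ∏ i, a (p.succAbove i) with hQ
  set P := ∏ i, a i with hP
  set Y : Fin k → ℝ≥0∞ := fun j => ∏ i, a ((p.succAbove j).succAbove i) with hY
  have hPQ : P = a p * Q := Fin.prod_univ_succAbove _ _
  have hYQ : (∏ j, Y j) * Q = P ^ k := by
    rw [hQ, ← Finset.prod_mul_distrib, Finset.prod_congr rfl fun j _ =>
      (show Y j * a (p.succAbove j) = P by
        rw [hP, Fin.prod_univ_succAbove _ (p.succAbove j), mul_comm])]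
    simp
  have hhalf : (a p ^ (1 / 2 : ℝ)) ^ 2 = a p := by
    rw [← ENNReal.rpow_two, ← ENNReal.rpow_mul]
    norm_num
  have hpow : X ^ (k + 2) ≤ C ^ (k + 2) * P ^ (k + 1) := by
    calc X ^ (k + 2) = X ^ 2 * ∏ _j : Fin k, X := by simp [pow_add, mul_comm]
      _ ≤ (C * (Q * a p ^ (1 / 2 : ℝ))) ^ 2 * ∏ j, (C * Y j) := by
        gcongr with j
        exact homit _
      _ = C ^ (k + 2) * (Q * (a p ^ (1 / 2 : ℝ)) ^ 2 * ((∏ j, Y j) * Q)) := by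
        rw [Finset.prod_mul_distrib]
        simp only [Finset.prod_const, Finset.card_univ, Fintype.card_fin]
        ring
      _ = C ^ (k + 2) * P ^ (k + 1) := by
        rw [hhalf, hYQ, pow_succ P, hPQ]
        ring
  have hk : (0 : ℝ) < (k + 2 : ℕ) := by positivity
  rw [ENNReal.prod_rpow_of_nonneg (by positivity), ← hP]
  refine (ENNReal.rpow_le_rpow_iff hk).1 ?_
  rw [ENNReal.mul_rpow_of_nonneg _ _ hk.le, ← ENNReal.rpow_mul, div_mul_cancel₀ _ hk.ne',
    ENNReal.rpow_natCast, ENNReal.rpow_natCast, ENNReal.rpow_natCast]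
  exact hpow

open Metric in
theorem exists_toSphere_box_le (k : ℕ) : ∃ C : ℝ≥0∞, C ≠ ∞ ∧ ∀ J : Fin (k + 1) → Set ℝ,
    (∀ i, MeasurableSet (J i)) →
    (volume : Measure (EuclideanSpace ℝ (Fin (k + 2)))).toSphere
      {ω | ∀ i : Fin (k + 1), ω.1 i.castSucc ∈ J i} ≤
      C * ∏ i, volume (J i) ^ (((k + 1 : ℕ) : ℝ) / (k + 2 : ℕ)) := by
  set ρ₀ : ℝ := 1 / √(k + 2) with hρ₀
  have hρ₀pos : 0 < ρ₀ := by positivity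
  have hρ₀sq : ρ₀ ^ 2 = 1 / (k + 2) := by
    rw [hρ₀, div_pow, Real.sq_sqrt (by positivity), one_pow]
  set C := 2 * ENNReal.ofReal (2 * Real.pi) +
    4 * ENNReal.ofReal (4 * Real.pi / ρ₀) ^ (1 / 2 : ℝ)
  have hCtop : C ≠ ∞ := add_ne_top.2 ⟨mul_ne_top (by simp) ofReal_ne_top,
    mul_ne_top (by simp) (rpow_ne_top_of_nonneg (by norm_num) ofReal_ne_top)⟩
  refine ⟨(k + 1 : ℕ) * C, mul_ne_top (by simp) hCtop, fun J hJ => ?_⟩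
  set E : Fin (k + 1) → Set (sphere (0 : EuclideanSpace ℝ (Fin (k + 2))) 1) := fun p =>
    {ω | (∀ i : Fin (k + 1), ω.1 i.castSucc ∈ J i) ∧
      ∀ i : Fin (k + 1), |ω.1 i.castSucc| ≤ |ω.1 p.castSucc|} with hE
  have hcoord (i : Fin (k + 2)) :
      Measurable fun ω : sphere (0 : EuclideanSpace ℝ (Fin (k + 2))) 1 => ω.1 i := by
    fun_prop
  have hEm (p) : MeasurableSet (E p) := by
    simp only [hE, measurableSet_setOfPred]
    refine Measurable.and (Measurable.forall fun i => ?_) (Measurable.forall fun i => ?_)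
    · exact measurableSet_setOfPred.1 (hcoord _ (hJ i))
    · exact measurableSet_setOfPred.1 (measurableSet_le (hcoord _).norm (hcoord _).norm)
  have hcover : {ω : sphere (0 : EuclideanSpace ℝ (Fin (k + 2))) 1 |
      ∀ i : Fin (k + 1), ω.1 i.castSucc ∈ J i} ⊆ ⋃ p, E p := by
    intro ω hω
    obtain ⟨p, hp⟩ := Finite.exists_max fun i : Fin (k + 1) => |ω.1 i.castSucc|
    exact Set.mem_iUnion.2 ⟨p, hω, hp⟩
  set J' : Fin (k + 2) → Set ℝ := Fin.snoc (α := fun _ => Set ℝ) J Set.univ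
  have hJ' (i : Fin (k + 1)) : J' i.castSucc = J i := Fin.snoc_castSucc ..
  have hEJ (p) : ∀ ω ∈ E p, ∀ i, i ≠ Fin.last (k + 1) → ω.1 i ∈ J' i := by
    intro ω hω i hi
    obtain ⟨i, rfl⟩ := Fin.exists_castSucc_eq.2 hi
    rw [hJ']
    exact hω.1 i
  have hEρ (p) : ∀ ω ∈ E p,
      ρ₀ ^ 2 ≤ ω.1 ((Fin.last (k + 1)).succAbove p) ^ 2 + ω.1 (Fin.last (k + 1)) ^ 2 := by
    intro ω hω
    have hn : ‖(ω : EuclideanSpace ℝ (Fin (k + 2)))‖ ^ 2 = 1 := by simp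
    rw [norm_sq_eq_splitTwo (Fin.last (k + 1)) p] at hn
    have hsum : ∑ j, ω.1 ((Fin.last (k + 1)).succAbove (p.succAbove j)) ^ 2 ≤
        ∑ _j : Fin k, ω.1 ((Fin.last (k + 1)).succAbove p) ^ 2 := by
      refine Finset.sum_le_sum fun j _ => ?_
      simp only [Fin.succAbove_last]
      exact sq_le_sq.2 (hω.2 _)
    simp only [Finset.sum_const, Finset.card_univ, Fintype.card_fin, nsmul_eq_mul] at hsum
    rw [hρ₀sq, div_le_iff₀ (by positivity)]
    have hk : (0 : ℝ) ≤ k := k.cast_nonneg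
    nlinarith [sq_nonneg (ω.1 ((Fin.last (k + 1)).succAbove p)),
      mul_nonneg hk (sq_nonneg (ω.1 (Fin.last (k + 1)))), sq_nonneg (ω.1 (Fin.last (k + 1)))]
  have hEle (p) : (volume : Measure (EuclideanSpace ℝ (Fin (k + 2)))).toSphere (E p) ≤
      C * ∏ i, volume (J i) ^ (((k + 1 : ℕ) : ℝ) / (k + 2 : ℕ)) := by
    refine le_mul_prod_rpow_of_le (a := fun i => volume (J i)) (p := p) (fun j => ?_) ?_
    · refine (toSphere_le (Fin.last (k + 1)) j isArcBound_two_pi (hEm p) (hEJ p)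
        fun ω _ => by rw [zero_pow two_ne_zero]; positivity).trans ?_
      simp only [Fin.succAbove_last, hJ']
      rw [mul_comm (∏ i, volume (J (j.succAbove i))), ← mul_assoc]
      gcongr
      exact le_self_add
    · refine (toSphere_le (Fin.last (k + 1)) p (isArcBound_sqrt hρ₀pos) (hEm p) (hEJ p)
        (hEρ p)).trans ?_
      simp only [Fin.succAbove_last, hJ']
      rw [ENNReal.mul_rpow_of_nonneg _ _ (by norm_num)]
      calc _ = 4 * ENNReal.ofReal (4 * Real.pi / ρ₀) ^ (1 / 2 : ℝ) *
            ((∏ i, volume (J (p.succAbove i))) * volume (J p) ^ (1 / 2 : ℝ)) := by ring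
        _ ≤ _ := by
          gcongr
          exact le_add_self
  calc _ ≤ (volume : Measure (EuclideanSpace ℝ (Fin (k + 2)))).toSphere (⋃ p, E p) :=
        measure_mono hcover
    _ ≤ ∑ p, (volume : Measure (EuclideanSpace ℝ (Fin (k + 2)))).toSphere (E p) :=
        measure_iUnion_fintype_le _ _
    _ ≤ ∑ _p : Fin (k + 1), C * ∏ i, volume (J i) ^ (((k + 1 : ℕ) : ℝ) / (k + 2 : ℕ)) :=
        Finset.sum_le_sum fun p _ => hEle p
    _ = _ := by simp [mul_assoc]

theorem toSphere_last_mem_null {l : ℕ} {N : Set ℝ} (hN : MeasurableSet N) (hN0 : volume N = 0) :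
    (volume : Measure (EuclideanSpace ℝ (Fin (l + 3)))).toSphere
      {ω | ω.1 (Fin.last (l + 2)) ∈ N} = 0 := by
  have hm : MeasurableSet {ω : Metric.sphere (0 : EuclideanSpace ℝ (Fin (l + 3))) 1 |
      ω.1 (Fin.last (l + 2)) ∈ N} := by
    have : Measurable fun ω : Metric.sphere (0 : EuclideanSpace ℝ (Fin (l + 3))) 1 =>
      ω.1 (Fin.last (l + 2)) := by fun_prop
    exact this hN
  have h := toSphere_le (k := l + 1) 0 0 isArcBound_two_pi
    (J := fun i => if i = Fin.last (l + 2) then N else Set.univ) hm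
    (fun ω hω i _ => by
      split_ifs with hi
      · rw [hi]; exact hω
      · trivial) (fun ω _ => by rw [zero_pow two_ne_zero]; positivity)
  rw [Finset.prod_eq_zero (Finset.mem_univ (Fin.last l)) (by simp [hN0])] at h
  simpa using h

theorem lintegral_normSphere {n : ℕ} (g : EuclideanSpace ℝ (Fin n) → ℝ≥0∞) :
    ∫⁻ σ, g σ ∂(normSphere n) =
      ((volume : Measure (EuclideanSpace ℝ (Fin n))).toSphere Set.univ)⁻¹ *
        ∫⁻ ω, g ω.1 ∂(volume : Measure (EuclideanSpace ℝ (Fin n))).toSphere := by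
  have hemb : MeasurableEmbedding
      (Subtype.val : Metric.sphere (0 : EuclideanSpace ℝ (Fin n)) 1 → _) :=
    MeasurableEmbedding.subtype_coe Metric.isClosed_sphere.measurableSet
  rw [normSphere, lintegral_smul_measure, hemb.lintegral_map, hemb.map_apply, Set.preimage_univ,
    smul_eq_mul]

theorem restricted_type_at_E (n : ℕ) (hn : 3 ≤ n) :
    ∃ C : ℝ, 0 < C ∧ ∀ I : Fin (n - 1) → Set ℝ,
      (∀ j, MeasurableSet (I j)) → (∀ j, volume (I j) < ∞) →
      ∀ fn : ℝ → ℝ, Measurable fn → (∀ x, 0 ≤ fn x) →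
      lpNorm ∞ (sphAvg n (fun j =>
          if h : (j : ℕ) < n - 1 then (I ⟨j, h⟩).indicator fun _ => (1 : ℝ) else fn)) ≤
        ENNReal.ofReal C * (∏ j, volume (I j) ^ (((n : ℝ) - 1) / n)) *
          lpNorm ∞ (fun x => ENNReal.ofReal (fn x)) := by
  obtain ⟨l, rfl⟩ : ∃ l, n = l + 3 := ⟨n - 3, by omega⟩
  set μ := (volume : Measure (EuclideanSpace ℝ (Fin (l + 3)))).toSphere with hμ
  obtain ⟨C₀, hC₀, hbox⟩ := exists_toSphere_box_le (l + 1)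
  have hμ0 : μ Set.univ ≠ 0 := by
    rw [Ne, Measure.measure_univ_eq_zero]
    exact Measure.toSphere_ne_zero _
  have hCtop : (μ Set.univ)⁻¹ * C₀ ≠ ∞ := mul_ne_top (inv_ne_top.2 hμ0) hC₀
  refine ⟨((μ Set.univ)⁻¹ * C₀).toReal + 1, by positivity, ?_⟩
  change ∀ I : Fin (l + 2) → Set ℝ, _
  intro I hI _ fn hfn _
  simp only [_root_.lpNorm, if_true]
  set M := essSup (fun x => ENNReal.ofReal (fn x)) (volume : Measure ℝ)
  refine essSup_le_of_ae_le _ (Filter.Eventually.of_forall fun x => ?_)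
  have hpres := Measure.measurePreserving_sub_left (volume : Measure ℝ) x
  set J : Fin (l + 2) → Set ℝ := fun i => (fun y => x - y) ⁻¹' I i
  have hJm (i) : MeasurableSet (J i) := hpres.measurable (hI i)
  have hJvol (i) : volume (J i) = volume (I i) :=
    hpres.measure_preimage (hI i).nullMeasurableSet
  set N : Set ℝ := {y | M < ENNReal.ofReal (fn (x - y))}
  have hNm : MeasurableSet N := measurableSet_lt measurable_const (by fun_prop)
  have hN0 : volume N = 0 := by
    have h0 : volume {y | M < ENNReal.ofReal (fn y)} = 0 := by
      have := ENNReal.ae_le_essSup (μ := (volume : Measure ℝ)) fun x => ENNReal.ofReal (fn x)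
      simpa [ae_iff] using this
    rw [← h0]
    have hm : MeasurableSet {y | M < ENNReal.ofReal (fn y)} :=
      measurableSet_lt measurable_const hfn.ennreal_ofReal
    exact hpres.measure_preimage hm.nullMeasurableSet
  have hae : ∀ᵐ ω ∂μ, ENNReal.ofReal (fn (x - ω.1 (Fin.last (l + 2)))) ≤ M := by
    have := toSphere_last_mem_null (l := l) hNm hN0
    simp only [ae_iff, not_le]
    exact this
  set A : Set (Metric.sphere (0 : EuclideanSpace ℝ (Fin (l + 3))) 1) :=
    {ω | ∀ i : Fin (l + 2), ω.1 i.castSucc ∈ J i} with hA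
  have hAm : MeasurableSet A := by
    rw [hA, Set.ofPred_forall]
    refine MeasurableSet.iInter fun i => ?_
    have : Measurable fun ω : Metric.sphere (0 : EuclideanSpace ℝ (Fin (l + 3))) 1 =>
      ω.1 i.castSucc := by fun_prop
    exact this (hJm i)
  rw [sphAvg, lintegral_normSphere, ← hμ]
  have hint : ∫⁻ ω, ∏ j : Fin (l + 3), ENNReal.ofReal ((if h : (j : ℕ) < l + 3 - 1 then
      (I ⟨j, h⟩).indicator fun _ => (1 : ℝ) else fn) (x - ω.1 j)) ∂μ ≤ μ A * M := by
    calc _ ≤ ∫⁻ ω, A.indicator (fun _ => M) ω ∂μ := by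
          refine lintegral_mono_ae ?_
          filter_upwards [hae] with ω hω
          rw [Fin.prod_univ_castSucc]
          by_cases hωA : ω ∈ A
          · rw [Set.indicator_of_mem hωA]
            refine (mul_le_mul' (Finset.prod_le_one' fun i _ => ?_) ?_).trans_eq (one_mul M)
            · have hi : ((i.castSucc : Fin (l + 3)) : ℕ) < l + 3 - 1 := i.2
              rw [dif_pos hi, ofReal_le_one]
              exact Set.indicator_le_self' (fun _ _ => zero_le_one) _
            · simpa using hω
          · rw [Set.indicator_of_notMem hωA]
            obtain ⟨i, hi⟩ := not_forall.1 hωA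
            rw [Finset.prod_eq_zero (Finset.mem_univ i), zero_mul]
            have hi' : ((i.castSucc : Fin (l + 3)) : ℕ) < l + 3 - 1 := i.2
            have hnot : x - ω.1 i.castSucc ∉ I ⟨(i.castSucc : Fin (l + 3)), hi'⟩ := hi
            rw [dif_pos hi', Set.indicator_of_notMem hnot, ofReal_zero]
      _ = μ A * M := by rw [lintegral_indicator_const hAm, mul_comm]
  have hAle := hbox J hJm
  simp only [hJvol] at hAle
  have hexp : (((l + 3 : ℕ) : ℝ) - 1) / (l + 3 : ℕ) =
      ((l + 1 + 1 : ℕ) : ℝ) / (l + 1 + 2 : ℕ) := by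
    push_cast
    ring
  rw [hexp]
  refine (mul_le_mul_right (hint.trans (mul_le_mul_left hAle M)) _).trans ?_
  rw [← mul_assoc, ← mul_assoc]
  refine mul_le_mul_left (mul_le_mul_left ?_ _) _
  rw [← ofReal_toReal hCtop]
  exact ofReal_le_ofReal (by simp)
end

section
/- Let n ≥ 3 be an integer. There exists a finite constant C > 0, depending only on n, such that for all measurable sets I₁,…,I_{n−1} ⊆ ℝ of finite Lebesgue measure and every nonnegative measurable function fₙ on ℝ, ‖T(χ_{I₁},…,χ_{I_{n−1}}, fₙ)‖_1 ≤ C (∏_{j=1}^{n−1} |I_j|^{(n−1)/n}) ‖fₙ‖_1; that is, T is of restricted type at the point P = ((n−1)/n,…,(n−1)/n, 1; 1). -/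
open MeasureTheory ENNReal

section

open Set

lemma lintegral_Ioo_inv_sqrt_le (l : ℝ) :
    ∫⁻ t in Ioo 0 l, ENNReal.ofReal (√t)⁻¹ ≤ 2 * ENNReal.ofReal √l := by
  have himg : Ioo 0 l ⊆ (fun s : ℝ => s ^ 2) '' Ioo 0 √l := by
    intro t ht
    exact ⟨√t, ⟨Real.sqrt_pos.2 ht.1, Real.sqrt_lt_sqrt ht.1.le ht.2⟩, Real.sq_sqrt ht.1.le⟩
  calc ∫⁻ t in Ioo 0 l, ENNReal.ofReal (√t)⁻¹
      ≤ ∫⁻ t in (fun s : ℝ => s ^ 2) '' Ioo 0 √l, ENNReal.ofReal (√t)⁻¹ :=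
        lintegral_mono_set himg
    _ = ∫⁻ s in Ioo 0 √l, ENNReal.ofReal |2 * s| * ENNReal.ofReal (√(s ^ 2))⁻¹ := by
        refine lintegral_image_eq_lintegral_abs_deriv_mul measurableSet_Ioo
          (f' := fun s => 2 * s) (fun s _ => ?_) ?_ _
        · simpa using (hasDerivAt_pow 2 s).hasDerivWithinAt
        · intro s hs t ht h
          exact (pow_left_inj₀ hs.1.le ht.1.le two_ne_zero).1 h
    _ = ∫⁻ s in Ioo 0 √l, 2 := by
        refine setLIntegral_congr_fun measurableSet_Ioo fun s hs => ?_
        have hs0 : 0 < s := hs.1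
        rw [← ENNReal.ofReal_mul (abs_nonneg _), Real.sqrt_sq hs0.le,
          abs_of_pos (by positivity), mul_assoc, mul_inv_cancel₀ hs0.ne']
        simp
    _ = 2 * ENNReal.ofReal √l := by simp

lemma setLIntegral_inv_sqrt_comp_le {φ : ℝ → ℝ} (hφ : MeasurePreserving φ) (E : Set ℝ) :
    ∫⁻ t in E, ENNReal.ofReal (√(φ t))⁻¹ ≤ 3 * volume E ^ (1 / 2 : ℝ) := by
  rcases eq_or_ne (volume E) 0 with h0 | h0
  · rw [setLIntegral_measure_zero _ _ h0]; exact zero_le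
  rcases eq_or_ne (volume E) ∞ with h1 | h1
  · rw [h1, ENNReal.top_rpow_of_pos (by norm_num)]; simp
  set l := (volume E).toReal with hl
  have hlpos : 0 < l := ENNReal.toReal_pos h0 h1
  have hE : volume E = ENNReal.ofReal l := (ENNReal.ofReal_toReal h1).symm
  have hpt : ∀ t, ENNReal.ofReal (√t)⁻¹ ≤
      (Ioo 0 l).indicator (fun t => ENNReal.ofReal (√t)⁻¹) t + ENNReal.ofReal (√l)⁻¹ := by
    intro t
    by_cases ht : t ∈ Ioo 0 l
    · rw [indicator_of_mem ht]; exact le_self_add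
    · rw [indicator_of_notMem ht, zero_add]
      apply ENNReal.ofReal_le_ofReal
      rcases le_or_gt t 0 with h | h
      · rw [Real.sqrt_eq_zero_of_nonpos h]; simp
      · have : l ≤ t := by by_contra hc; exact ht ⟨h, not_le.1 hc⟩
        gcongr
  have hmeas : Measurable fun t : ℝ => ENNReal.ofReal (√t)⁻¹ := by fun_prop
  calc ∫⁻ t in E, ENNReal.ofReal (√(φ t))⁻¹
      ≤ ∫⁻ t in E, ((Ioo 0 l).indicator (fun t => ENNReal.ofReal (√t)⁻¹) (φ t)
          + ENNReal.ofReal (√l)⁻¹) := lintegral_mono fun t => hpt (φ t)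
    _ = (∫⁻ t in E, (Ioo 0 l).indicator (fun t => ENNReal.ofReal (√t)⁻¹) (φ t))
          + ENNReal.ofReal (√l)⁻¹ * volume E := by
        rw [lintegral_add_right _ measurable_const]; simp
    _ ≤ 2 * ENNReal.ofReal √l + ENNReal.ofReal (√l)⁻¹ * volume E := by
        gcongr
        refine (setLIntegral_le_lintegral _ _).trans ?_
        rw [hφ.lintegral_comp (hmeas.indicator measurableSet_Ioo),
          lintegral_indicator measurableSet_Ioo]
        exact lintegral_Ioo_inv_sqrt_le l
    _ = 3 * volume E ^ (1 / 2 : ℝ) := by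
        have h2 : ENNReal.ofReal (√l)⁻¹ * volume E = ENNReal.ofReal √l := by
          rw [hE, ← ENNReal.ofReal_mul (by positivity)]
          congr 1
          rw [inv_mul_eq_div, Real.div_sqrt]
        rw [h2, hE, ENNReal.ofReal_rpow_of_pos hlpos, ← Real.sqrt_eq_rpow]
        ring

lemma inv_sqrt_parabola_le {a c : ℝ} (ha : 0 < a) (hc : 0 < c) (b t : ℝ) :
    (√(c - a * (t - b) ^ 2))⁻¹ ≤
      (√√(a * c))⁻¹ * ((√(t - (b - √(c / a))))⁻¹ + (√(b + √(c / a) - t))⁻¹) := by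
  set r := √(c / a) with hr
  have hrpos : 0 < r := Real.sqrt_pos.2 (by positivity)
  have hr2 : a * r ^ 2 = c := by rw [hr, Real.sq_sqrt (by positivity)]; field_simp
  have har : √(a * c) = a * r := by
    rw [← hr2, show a * (a * r ^ 2) = (a * r) ^ 2 by ring, Real.sqrt_sq (by positivity)]
  rw [har]
  rcases le_or_gt (c - a * (t - b) ^ 2) 0 with h | h
  · rw [Real.sqrt_eq_zero_of_nonpos h, _root_.inv_zero]; positivity
  have hlt : |t - b| < r := by
    apply abs_lt_of_sq_lt_sq _ hrpos.le
    nlinarith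
  have hab := abs_lt.1 hlt
  have key : ∀ s, 0 < s → s * (a * r) ≤ c - a * (t - b) ^ 2 →
      (√(c - a * (t - b) ^ 2))⁻¹ ≤ (√(a * r))⁻¹ * (√s)⁻¹ := by
    intro s hs hle
    rw [← mul_inv, ← Real.sqrt_mul (by positivity)]
    apply inv_anti₀ (Real.sqrt_pos.2 (by positivity))
    apply Real.sqrt_le_sqrt
    linarith
  have h1 : c - a * (t - b) ^ 2 = a * ((t - (b - r)) * (b + r - t)) := by rw [← hr2]; ring
  rw [mul_add]
  rcases le_total t b with htb | htb
  · refine (key (t - (b - r)) (by linarith) ?_).trans (le_add_of_nonneg_right (by positivity))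
    rw [h1]
    have : 0 ≤ a * (t - (b - r)) := mul_nonneg ha.le (by linarith)
    nlinarith
  · refine (key (b + r - t) (by linarith) ?_).trans (le_add_of_nonneg_left (by positivity))
    rw [h1]
    have : 0 ≤ a * (b + r - t) := mul_nonneg ha.le (by linarith)
    nlinarith

lemma setLIntegral_inv_sqrt_parabola_le_rpow {a c : ℝ} (ha : 0 < a) (hc : 0 < c) (b : ℝ)
    (E : Set ℝ) :
    ∫⁻ t in E, ENNReal.ofReal (√(c - a * (t - b) ^ 2))⁻¹ ≤
      ENNReal.ofReal (√√(a * c))⁻¹ * (6 * volume E ^ (1 / 2 : ℝ)) := by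
  set r := √(c / a)
  calc ∫⁻ t in E, ENNReal.ofReal (√(c - a * (t - b) ^ 2))⁻¹
      ≤ ∫⁻ t in E, ENNReal.ofReal (√√(a * c))⁻¹ *
          (ENNReal.ofReal (√(t - (b - r)))⁻¹ + ENNReal.ofReal (√(b + r - t))⁻¹) := by
        refine lintegral_mono fun t => ?_
        rw [← ENNReal.ofReal_add (by positivity) (by positivity),
          ← ENNReal.ofReal_mul (by positivity)]
        exact ENNReal.ofReal_le_ofReal (inv_sqrt_parabola_le ha hc b t)
    _ = ENNReal.ofReal (√√(a * c))⁻¹ * ((∫⁻ t in E, ENNReal.ofReal (√(t - (b - r)))⁻¹) +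
          ∫⁻ t in E, ENNReal.ofReal (√(b + r - t))⁻¹) := by
        rw [lintegral_const_mul _ (by fun_prop), lintegral_add_left (by fun_prop)]
    _ ≤ ENNReal.ofReal (√√(a * c))⁻¹ *
          (3 * volume E ^ (1 / 2 : ℝ) + 3 * volume E ^ (1 / 2 : ℝ)) := by
        gcongr
        · exact setLIntegral_inv_sqrt_comp_le (measurePreserving_sub_right volume (b - r)) E
        · exact setLIntegral_inv_sqrt_comp_le (Measure.measurePreserving_sub_left volume (b + r)) E
    _ = _ := by ring

lemma lintegral_inv_sqrt_parabola_le {a : ℝ} (ha : 0 < a) (c b : ℝ) :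
    ∫⁻ t, ENNReal.ofReal (√(c - a * (t - b) ^ 2))⁻¹ ≤ 12 * ENNReal.ofReal (√a)⁻¹ := by
  rcases le_or_gt c 0 with hc | hc
  · have : ∀ t, ENNReal.ofReal (√(c - a * (t - b) ^ 2))⁻¹ = 0 := by
      intro t
      rw [Real.sqrt_eq_zero_of_nonpos (by nlinarith [mul_nonneg ha.le (sq_nonneg (t - b))])]
      simp
    simp [this]
  set r := √(c / a) with hr
  have hrpos : 0 < r := Real.sqrt_pos.2 (by positivity)
  have hr2 : a * r ^ 2 = c := by rw [hr, Real.sq_sqrt (by positivity)]; field_simp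
  have hsupp : ∀ t, t ∉ Ioo (b - r) (b + r) →
      ENNReal.ofReal (√(c - a * (t - b) ^ 2))⁻¹ = 0 := by
    intro t ht
    rw [Real.sqrt_eq_zero_of_nonpos]
    · simp
    · by_contra hneg
      have hlt : |t - b| < r := by
        apply abs_lt_of_sq_lt_sq _ hrpos.le
        nlinarith
      have hab := abs_lt.1 hlt
      exact ht ⟨by linarith, by linarith⟩
  have har : √(a * c) = a * r := by
    rw [← hr2, show a * (a * r ^ 2) = (a * r) ^ 2 by ring, Real.sqrt_sq (by positivity)]
  rw [← setLIntegral_eq_of_support_subset (s := Ioo (b - r) (b + r))]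
  · refine (setLIntegral_inv_sqrt_parabola_le_rpow ha hc b _).trans ?_
    rw [Real.volume_Ioo, har, ENNReal.ofReal_rpow_of_pos (by linarith), ← Real.sqrt_eq_rpow,
      show (6 : ℝ≥0∞) = ENNReal.ofReal 6 by simp, show (12 : ℝ≥0∞) = ENNReal.ofReal 12 by simp,
      ← ENNReal.ofReal_mul (by norm_num), ← ENNReal.ofReal_mul (by positivity),
      ← ENNReal.ofReal_mul (by norm_num)]
    apply ENNReal.ofReal_le_ofReal
    have h1 : √(b + r - (b - r)) ≤ 2 * √r := by
      rw [show b + r - (b - r) = 2 * r by ring]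
      apply Real.sqrt_le_iff.2 ⟨by positivity, ?_⟩
      rw [mul_pow, Real.sq_sqrt hrpos.le]; linarith
    have h2 : 0 < √r := Real.sqrt_pos.2 hrpos
    have h3 : 0 < √a := Real.sqrt_pos.2 ha
    rw [Real.sqrt_mul ha.le]
    calc (√a * √r)⁻¹ * (6 * √(b + r - (b - r))) ≤ (√a * √r)⁻¹ * (6 * (2 * √r)) := by gcongr
      _ = 12 * (√a)⁻¹ := by field_simp; norm_num
  · intro t ht
    by_contra hc'
    exact ht (hsupp t hc')

/-- The quadratic form `∑ uⱼ² - (∑ uⱼ)² / (d + 1)`. When `uⱼ = x_{d+1} - xⱼ`, it is the squared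
distance from `x ∈ ℝ^{d+1}` to the diagonal line. -/
noncomputable def gapForm {d : ℕ} (u : Fin d → ℝ) : ℝ :=
  ∑ j, u j ^ 2 - (∑ j, u j) ^ 2 / (d + 1)

/-- Up to a constant, the density of the image of the surface measure of the unit sphere under
`x ↦ (x_{d+1} - xⱼ)ⱼ`. -/
noncomputable def gapDensity {d : ℕ} (u : Fin d → ℝ) : ℝ≥0∞ :=
  ENNReal.ofReal (√(1 - gapForm u))⁻¹

@[fun_prop]
lemma measurable_gapForm {d : ℕ} : Measurable (gapForm (d := d)) := by
  unfold gapForm; fun_prop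

@[fun_prop]
lemma measurable_gapDensity {d : ℕ} : Measurable (gapDensity (d := d)) := by
  unfold gapDensity; fun_prop

/-- The maximum of `1 - gapForm` along the line through `u` in the direction of the `k`-th axis. -/
noncomputable def lineSup {d : ℕ} (k : Fin d) (u : Fin d → ℝ) : ℝ :=
  1 - gapForm u + (u k - (∑ j, u j) / (d + 1)) ^ 2 * ((d + 1) / d)

@[fun_prop]
lemma measurable_lineSup {d : ℕ} (k : Fin d) : Measurable (lineSup k) := by
  unfold lineSup; fun_prop

lemma one_sub_gapForm_insertNth {d : ℕ} (k : Fin (d + 1)) (t : ℝ) (y : Fin d → ℝ) :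
    1 - gapForm (k.insertNth t y : Fin (d + 1) → ℝ) =
      lineSup k (k.insertNth 0 y : Fin (d + 1) → ℝ) -
        ((d + 1) / (d + 2)) * (t - (∑ j, y j) / (d + 1)) ^ 2 := by
  simp only [lineSup, gapForm, Fin.sum_univ_succAbove _ k, Fin.insertNth_apply_same,
    Fin.insertNth_apply_succAbove]
  push_cast
  have h1 : (d : ℝ) + 1 ≠ 0 := by positivity
  have h2 : (d : ℝ) + 1 + 1 ≠ 0 := by positivity
  have h3 : (d : ℝ) + 2 ≠ 0 := by positivity
  rw [show (d : ℝ) + 2 = d + 1 + 1 by ring]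
  field_simp
  ring

lemma lineSup_insertNth {d : ℕ} (k : Fin (d + 1)) (t : ℝ) (y : Fin d → ℝ) :
    lineSup k (k.insertNth t y : Fin (d + 1) → ℝ) =
      lineSup k (k.insertNth 0 y : Fin (d + 1) → ℝ) := by
  simp only [lineSup, gapForm, Fin.sum_univ_succAbove _ k, Fin.insertNth_apply_same,
    Fin.insertNth_apply_succAbove]
  push_cast
  have h1 : (d : ℝ) + 1 ≠ 0 := by positivity
  have h2 : (d : ℝ) + 1 + 1 ≠ 0 := by positivity
  field_simp
  ring

lemma exists_le_lineSup {d : ℕ} (u : Fin (d + 1) → ℝ) (hu : 0 ≤ 1 - gapForm u) :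
    ∃ k, 1 / (((d : ℝ) + 1) * (d + 2)) ≤ lineSup k u := by
  by_contra! hcon
  have hsum : ∑ k, lineSup k u < ∑ _k : Fin (d + 1), 1 / (((d : ℝ) + 1) * (d + 2)) :=
    Finset.sum_lt_sum_of_nonempty Finset.univ_nonempty fun k _ => hcon k
  have hcs : (∑ j, u j) ^ 2 ≤ ((d : ℝ) + 1) * ∑ j, u j ^ 2 := by
    simpa using sq_sum_le_card_mul_sum_sq (s := Finset.univ) (f := u)
  have hgrad : ∑ k, (u k - (∑ j, u j) / ((d + 1 : ℕ) + 1)) ^ 2 =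
      ∑ j, u j ^ 2 - 2 * (∑ j, u j) ^ 2 / (d + 2) + (d + 1) * (∑ j, u j) ^ 2 / (d + 2) ^ 2 := by
    simp only [sub_sq, Finset.sum_add_distrib, Finset.sum_sub_distrib, ← Finset.sum_mul,
      ← Finset.mul_sum]
    simp
    have h2 : (d : ℝ) + 1 + 1 ≠ 0 := by positivity
    rw [show (d : ℝ) + 2 = d + 1 + 1 by ring]
    field_simp
  simp only [lineSup, Finset.sum_add_distrib, ← Finset.sum_mul, hgrad] at hsum
  simp only [Finset.sum_const, Finset.card_univ, Fintype.card_fin, nsmul_eq_mul] at hsum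
  rw [gapForm] at hu hsum
  push_cast at hu hsum
  set S := ∑ j, u j
  set R := ∑ j, u j ^ 2
  rw [show (d : ℝ) + 1 + 1 = d + 2 by ring] at hu hsum
  have hd : (0 : ℝ) ≤ d := by positivity
  have h1 : (0 : ℝ) < d + 1 := by positivity
  have h2 : (0 : ℝ) < d + 2 := by positivity
  have key : (1 - (R - S ^ 2 / (d + 2))) + (R - 2 * S ^ 2 / (d + 2) +
      (d + 1) * S ^ 2 / (d + 2) ^ 2) * ((d + 2) / (d + 1)) ≥ 1 / ((d : ℝ) + 2) := by
    have e : (1 - (R - S ^ 2 / (d + 2))) + (R - 2 * S ^ 2 / (d + 2) +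
        (d + 1) * S ^ 2 / (d + 2) ^ 2) * ((d + 2) / (d + 1)) - 1 / ((d : ℝ) + 2) =
        d / (d + 1) * (1 - (R - S ^ 2 / (d + 2))) + ((d + 1) * R - S ^ 2) / (d + 1) +
          1 / ((d + 1) * (d + 2)) := by
      field_simp
      ring
    have e1 : 0 ≤ d / ((d : ℝ) + 1) * (1 - (R - S ^ 2 / (d + 2))) := by positivity
    have e2 : 0 ≤ (((d : ℝ) + 1) * R - S ^ 2) / (d + 1) := div_nonneg (by linarith) h1.le
    have e3 : 0 ≤ 1 / (((d : ℝ) + 1) * (d + 2)) := by positivity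
    linarith
  have h3 : ((d : ℝ) + 1) * (1 / ((d + 1) * (d + 2))) = 1 / (d + 2) := by field_simp
  rw [h3] at hsum
  nlinarith [mul_nonneg hd hu]

lemma lintegral_gapDensity_line_le {d : ℕ} (k : Fin (d + 1)) (y : Fin d → ℝ) :
    ∫⁻ t, gapDensity (k.insertNth t y : Fin (d + 1) → ℝ) ≤ ENNReal.ofReal (12 * (d + 2)) := by
  simp only [gapDensity, one_sub_gapForm_insertNth]
  refine (lintegral_inv_sqrt_parabola_le (by positivity) _ _).trans ?_
  rw [show (12 : ℝ≥0∞) = ENNReal.ofReal 12 by simp, ← ENNReal.ofReal_mul (by norm_num)]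
  apply ENNReal.ofReal_le_ofReal
  have : 1 / ((d : ℝ) + 2) ≤ √((d + 1) / (d + 2)) := by
    apply Real.le_sqrt_of_sq_le
    rw [div_pow, one_pow, div_le_div_iff₀ (by positivity) (by positivity)]
    have hd : (0 : ℝ) ≤ d := by positivity
    nlinarith [mul_nonneg hd hd, mul_nonneg hd (mul_nonneg hd hd)]
  gcongr
  exact inv_le_of_inv_le₀ (by positivity) (by simpa using this)

lemma setLIntegral_gapDensity_line_le {d : ℕ} (k : Fin (d + 1)) (y : Fin d → ℝ) (E : Set ℝ)
    (hy : 1 / (((d : ℝ) + 1) * (d + 2)) ≤ lineSup k (k.insertNth 0 y : Fin (d + 1) → ℝ)) :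
    ∫⁻ t in E, gapDensity (k.insertNth t y : Fin (d + 1) → ℝ) ≤
      ENNReal.ofReal (12 * (d + 2)) * volume E ^ (1 / 2 : ℝ) := by
  simp only [gapDensity, one_sub_gapForm_insertNth]
  set c := lineSup k (k.insertNth 0 y : Fin (d + 1) → ℝ)
  have hc : 0 < c := lt_of_lt_of_le (by positivity) hy
  refine (setLIntegral_inv_sqrt_parabola_le_rpow (by positivity) hc _ _).trans ?_
  rw [← mul_assoc]
  gcongr
  rw [show (6 : ℝ≥0∞) = ENNReal.ofReal 6 by simp, ← ENNReal.ofReal_mul (by positivity)]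
  apply ENNReal.ofReal_le_ofReal
  have h1 : 1 / ((d : ℝ) + 2) ≤ √√((d + 1) / (d + 2) * c) := by
    have h : (1 / ((d : ℝ) + 2)) ^ 2 ≤ (d + 1) / (d + 2) * c := by
      calc (1 / ((d : ℝ) + 2)) ^ 2 = (d + 1) / (d + 2) * (1 / (((d : ℝ) + 1) * (d + 2))) := by
            field_simp
        _ ≤ _ := by gcongr
    have h1 : 1 / ((d : ℝ) + 2) ≤ 1 := by
      rw [div_le_one (by positivity)]; linarith [(Nat.cast_nonneg d : (0 : ℝ) ≤ d)]
    have h0 : 0 ≤ 1 / ((d : ℝ) + 2) := by positivity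
    apply Real.le_sqrt_of_sq_le
    apply Real.le_sqrt_of_sq_le
    calc ((1 / ((d : ℝ) + 2)) ^ 2) ^ 2 ≤ (1 / ((d : ℝ) + 2)) ^ 2 :=
          pow_le_of_le_one (by positivity) (pow_le_one₀ h0 h1) two_ne_zero
      _ ≤ _ := h
  have h2 : (√√((d + 1) / (d + 2) * c))⁻¹ ≤ d + 2 :=
    inv_le_of_inv_le₀ (by positivity) (by simpa using h1)
  have hd : (0 : ℝ) ≤ d := by positivity
  linarith

lemma setLIntegral_pi_le {d : ℕ} (k : Fin (d + 1)) {F : (Fin (d + 1) → ℝ) → ℝ≥0∞}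
    (hF : Measurable F) {E : Fin (d + 1) → Set ℝ} (hE : ∀ j, MeasurableSet (E j)) (M : ℝ≥0∞)
    (hM : ∀ y : Fin d → ℝ, ∫⁻ t in E k, F (k.insertNth t y : Fin (d + 1) → ℝ) ≤ M) :
    ∫⁻ u in univ.pi E, F u ≤ M * ∏ j : Fin d, volume (E (k.succAbove j)) := by
  have hpi : MeasurableSet (univ.pi E) := MeasurableSet.univ_pi hE
  have hG : Measurable ((univ.pi E).indicator F) := hF.indicator hpi
  rw [← lintegral_indicator hpi,
    ← (volume_preserving_piFinSuccAbove (fun _ => ℝ) k).symm.lintegral_comp hG,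
    Measure.volume_eq_prod, lintegral_prod_symm _ (by fun_prop)]
  have hpi' : MeasurableSet (univ.pi fun j => E (k.succAbove j)) :=
    MeasurableSet.univ_pi fun j => hE _
  calc _ ≤ ∫⁻ y : Fin d → ℝ, (univ.pi fun j => E (k.succAbove j)).indicator (fun _ => M) y := by
        refine lintegral_mono fun y => ?_
        have hind : ∀ t, (univ.pi E).indicator F (k.insertNth t y : Fin (d + 1) → ℝ) =
            (univ.pi fun j => E (k.succAbove j)).indicator (fun _ =>
              (E k).indicator (fun t => F (k.insertNth t y : Fin (d + 1) → ℝ)) t) y := by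
          intro t
          have hmem : (k.insertNth t y : Fin (d + 1) → ℝ) ∈ univ.pi E ↔
              t ∈ E k ∧ y ∈ univ.pi fun j => E (k.succAbove j) := by
            simp [k.forall_iff_succAbove]
          simp only [indicator, hmem]
          split_ifs <;> tauto
        change ∫⁻ t, (univ.pi E).indicator F (k.insertNth t y : Fin (d + 1) → ℝ) ≤ _
        simp only [hind]
        by_cases hy : y ∈ univ.pi fun j => E (k.succAbove j)
        · simp only [indicator_of_mem hy]
          rw [lintegral_indicator (hE k)]
          exact hM y
        · simp [indicator_of_notMem hy]
    _ = M * ∏ j : Fin d, volume (E (k.succAbove j)) := by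
        rw [lintegral_indicator hpi', setLIntegral_const, volume_pi_pi]

lemma prod_mul_prod_prod_succAbove {d : ℕ} (e : Fin (d + 1) → ℝ≥0∞) :
    (∏ j, e j) * ∏ m : Fin (d + 1), ∏ j : Fin d, e (m.succAbove j) = (∏ j, e j) ^ (d + 1) := by
  rw [← Finset.prod_mul_distrib]
  simp [← Fin.prod_univ_succAbove]

lemma le_prod_rpow_of_forall_le {d : ℕ} (k : Fin (d + 1)) (e : Fin (d + 1) → ℝ≥0∞)
    (C X : ℝ≥0∞) (hk : X ≤ C * e k ^ (1 / 2 : ℝ) * ∏ j : Fin d, e (k.succAbove j))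
    (hm : ∀ m : Fin (d + 1), X ≤ C * ∏ j : Fin d, e (m.succAbove j)) :
    X ≤ C * ∏ j, e j ^ (((d : ℝ) + 1) / (d + 2)) := by
  have hpow : X ^ (d + 2) ≤ C ^ (d + 2) * (∏ j, e j) ^ (d + 1) := by
    have h2 : X ^ 2 ≤ C ^ 2 * ((∏ j, e j) * ∏ j : Fin d, e (k.succAbove j)) := by
      calc X ^ 2 ≤ (C * e k ^ (1 / 2 : ℝ) * ∏ j : Fin d, e (k.succAbove j)) ^ 2 := by gcongr
        _ = C ^ 2 * ((e k ^ (1 / 2 : ℝ)) ^ 2 * (∏ j : Fin d, e (k.succAbove j)) *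
              ∏ j : Fin d, e (k.succAbove j)) := by ring
        _ = _ := by
          rw [← ENNReal.rpow_natCast (e k ^ (1 / 2 : ℝ)), ← ENNReal.rpow_mul, Fin.prod_univ_succAbove e k]
          norm_num
    have hd : X ^ d ≤ C ^ d * ∏ i : Fin d, ∏ j : Fin d, e ((k.succAbove i).succAbove j) := by
      calc X ^ d = ∏ _i : Fin d, X := by simp
        _ ≤ ∏ i : Fin d, (C * ∏ j : Fin d, e ((k.succAbove i).succAbove j)) :=
            Finset.prod_le_prod' fun i _ => hm _
        _ = _ := by rw [Finset.prod_mul_distrib]; simp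
    calc X ^ (d + 2) = X ^ 2 * X ^ d := by ring
      _ ≤ (C ^ 2 * ((∏ j, e j) * ∏ j : Fin d, e (k.succAbove j))) *
          (C ^ d * ∏ i : Fin d, ∏ j : Fin d, e ((k.succAbove i).succAbove j)) := by gcongr
      _ = C ^ (d + 2) * ((∏ j, e j) * ((∏ j : Fin d, e (k.succAbove j)) *
          ∏ i : Fin d, ∏ j : Fin d, e ((k.succAbove i).succAbove j))) := by ring
      _ = _ := by
          rw [← Fin.prod_univ_succAbove (fun m => ∏ j : Fin d, e (m.succAbove j)) k,
            prod_mul_prod_prod_succAbove]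
  have hinj : (0 : ℝ) < 1 / ((d + 2 : ℕ) : ℝ) := by positivity
  have h := ENNReal.rpow_le_rpow hpow hinj.le
  rw [ENNReal.mul_rpow_of_nonneg _ _ hinj.le] at h
  simp only [← ENNReal.rpow_natCast, ← ENNReal.rpow_mul] at h
  rw [mul_one_div_cancel (by positivity), ENNReal.rpow_one, ENNReal.rpow_one,
    ← ENNReal.prod_rpow_of_nonneg (by positivity)] at h
  convert h using 4
  push_cast
  ring

theorem setLIntegral_gapDensity_le {d : ℕ} {E : Fin (d + 1) → Set ℝ}
    (hE : ∀ j, MeasurableSet (E j)) :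
    ∫⁻ u in univ.pi E, gapDensity u ≤ (d + 1 : ℕ) * (ENNReal.ofReal (12 * (d + 2)) *
      ∏ j, volume (E j) ^ (((d : ℝ) + 1) / (d + 2))) := by
  let R : Fin (d + 1) → Set (Fin (d + 1) → ℝ) :=
    fun k => {u | 1 / (((d : ℝ) + 1) * (d + 2)) ≤ lineSup k u}
  have hR : ∀ k, MeasurableSet (R k) := fun k =>
    measurableSet_le measurable_const (measurable_lineSup k)
  have hRm : ∀ k, Measurable ((R k).indicator gapDensity) := fun k =>
    measurable_gapDensity.indicator (hR k)
  have hcover : ∀ u : Fin (d + 1) → ℝ, gapDensity u ≤ ∑ k, (R k).indicator gapDensity u := by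
    intro u
    rcases le_or_gt (1 - gapForm u) 0 with h | h
    · simp [gapDensity, Real.sqrt_eq_zero_of_nonpos h]
    · obtain ⟨k, hk⟩ := exists_le_lineSup u h.le
      calc gapDensity u = (R k).indicator gapDensity u := (indicator_of_mem (s := R k) hk _).symm
        _ ≤ _ := Finset.single_le_sum (f := fun k => (R k).indicator gapDensity u)
            (fun _ _ => zero_le) (Finset.mem_univ k)
  calc ∫⁻ u in univ.pi E, gapDensity u
      ≤ ∫⁻ u in univ.pi E, ∑ k, (R k).indicator gapDensity u := lintegral_mono hcover
    _ = ∑ k, ∫⁻ u in univ.pi E, (R k).indicator gapDensity u :=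
        lintegral_finsetSum _ fun k _ => hRm k
    _ ≤ ∑ _k : Fin (d + 1), ENNReal.ofReal (12 * (d + 2)) *
          ∏ j, volume (E j) ^ (((d : ℝ) + 1) / (d + 2)) := by
        refine Finset.sum_le_sum fun k _ => ?_
        refine le_prod_rpow_of_forall_le k (fun j => volume (E j)) _ _ ?_ fun m => ?_
        · refine setLIntegral_pi_le k (hRm k) hE _ fun y => ?_
          by_cases hy : 1 / (((d : ℝ) + 1) * (d + 2)) ≤
              lineSup k (k.insertNth 0 y : Fin (d + 1) → ℝ)
          · exact (lintegral_mono fun t => indicator_le_self _ _ _).trans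
              (setLIntegral_gapDensity_line_le k y _ hy)
          · have : ∀ t, (R k).indicator gapDensity (k.insertNth t y : Fin (d + 1) → ℝ) = 0 := by
              intro t
              apply indicator_of_notMem
              simpa only [R, mem_ofPred_eq, lineSup_insertNth k t y] using hy
            simp [this]
        · refine setLIntegral_pi_le m (hRm k) hE _ fun y => ?_
          exact (setLIntegral_le_lintegral _ _).trans <|
            (lintegral_mono fun t => indicator_le_self _ _ _).trans
              (lintegral_gapDensity_line_le m y)
    _ = _ := by simp

lemma setLIntegral_Ioi_radial_le {a : ℝ} (ha : 1 ≤ a) (q : ℝ) {h : ℝ → ℝ≥0∞} :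
    ∫⁻ s in Ioi 0, (Ioo 0 1).indicator h √(a * s ^ 2 + q) ≤
      ∫⁻ ρ in Ioo 0 1, h ρ * ENNReal.ofReal (ρ / √(ρ ^ 2 - q)) := by
  have ha0 : 0 < a := one_pos.trans_le ha
  set ψ : ℝ → ℝ := fun s => √(a * s ^ 2 + q) with hψ
  set φ : ℝ → ℝ := fun ρ => √((ρ ^ 2 - q) / a) with hφ
  set B : Set ℝ := Ioo 0 1 ∩ {ρ | q < ρ ^ 2}
  have hB : MeasurableSet B :=
    measurableSet_Ioo.inter (measurableSet_lt measurable_const (by fun_prop))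
  have hψm : Measurable ψ := by fun_prop
  have hψφ : ∀ ρ ∈ B, ψ (φ ρ) = ρ := by
    intro ρ hρ
    have h1 : q < ρ ^ 2 := hρ.2
    simp only [hψ, hφ]
    rw [Real.sq_sqrt (div_nonneg (by linarith) ha0.le), mul_div_cancel₀ _ ha0.ne',
      sub_add_cancel, Real.sqrt_sq hρ.1.1.le]
  have hsub : ψ ⁻¹' Ioo 0 1 ∩ Ioi 0 ⊆ φ '' B := by
    rintro s ⟨hs, hs0⟩
    have hs0 : 0 < s := hs0
    have h1 : 0 < a * s ^ 2 + q := Real.sqrt_pos.1 hs.1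
    have h2 : ψ s ^ 2 = a * s ^ 2 + q := Real.sq_sqrt h1.le
    refine ⟨ψ s, ⟨hs, ?_⟩, ?_⟩
    · change q < ψ s ^ 2
      rw [h2]
      have := mul_pos ha0 (pow_pos hs0 2)
      linarith
    · simp only [hφ]
      rw [h2, add_sub_cancel_right, mul_div_cancel_left₀ _ ha0.ne', Real.sqrt_sq hs0.le]
  calc ∫⁻ s in Ioi 0, (Ioo 0 1).indicator h (ψ s)
      = ∫⁻ s in Ioi 0, (ψ ⁻¹' Ioo 0 1).indicator (fun s => h (ψ s)) s := rfl
    _ = ∫⁻ s in ψ ⁻¹' Ioo 0 1 ∩ Ioi 0, h (ψ s) :=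
        setLIntegral_indicator (hψm measurableSet_Ioo) _
    _ ≤ ∫⁻ s in φ '' B, h (ψ s) := lintegral_mono_set hsub
    _ = ∫⁻ ρ in B, ENNReal.ofReal |2 * ρ / a / (2 * φ ρ)| * h (ψ (φ ρ)) := by
        refine lintegral_image_eq_lintegral_abs_deriv_mul hB
          (f' := fun ρ => 2 * ρ / a / (2 * φ ρ)) (fun ρ hρ => ?_) ?_ _
        · have h1 : q < ρ ^ 2 := hρ.2
          have h2 : HasDerivAt (fun ρ : ℝ => (ρ ^ 2 - q) / a) (2 * ρ / a) ρ := by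
            simpa using ((hasDerivAt_pow 2 ρ).sub_const q).div_const a
          exact (h2.sqrt (div_pos (by linarith) ha0).ne').hasDerivWithinAt
        · intro ρ hρ ρ' hρ' heq
          rw [← hψφ ρ hρ, ← hψφ ρ' hρ', heq]
    _ ≤ ∫⁻ ρ in B, h ρ * ENNReal.ofReal (ρ / √(ρ ^ 2 - q)) := by
        refine setLIntegral_mono' hB fun ρ hρ => ?_
        rw [hψφ ρ hρ, mul_comm]
        gcongr
        have h1 : 0 < ρ ^ 2 - q := sub_pos.2 hρ.2
        have h0 : 0 < ρ := hρ.1.1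
        have h3 : 0 < √(ρ ^ 2 - q) := Real.sqrt_pos.2 h1
        have h4 : φ ρ = √(ρ ^ 2 - q) / √a := Real.sqrt_div h1.le a
        have h5 : 0 < √a := Real.sqrt_pos.2 ha0
        rw [abs_of_nonneg (by rw [h4]; positivity), h4]
        have h6 : a = √a * √a := (Real.mul_self_sqrt ha0.le).symm
        have h7 : 1 ≤ √a := Real.one_le_sqrt.2 ha
        calc 2 * ρ / a / (2 * (√(ρ ^ 2 - q) / √a)) = ρ / √(ρ ^ 2 - q) / √a := by
              rw [show 2 * ρ / a = 2 * ρ / (√a * √a) by rw [← h6]]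
              field_simp
          _ ≤ _ := div_le_self (by positivity) h7
    _ ≤ _ := lintegral_mono_set inter_subset_left

lemma lintegral_radial_le {a : ℝ} (ha : 1 ≤ a) (q : ℝ) {h : ℝ → ℝ≥0∞} (hh : Measurable h) :
    ∫⁻ s, (Ioo 0 1).indicator h √(a * s ^ 2 + q) ≤
      2 * ∫⁻ ρ in Ioo 0 1, h ρ * ENNReal.ofReal (ρ / √(ρ ^ 2 - q)) := by
  set f : ℝ → ℝ≥0∞ := fun s => (Ioo 0 1).indicator h √(a * s ^ 2 + q) with hf
  have hfm : Measurable f := (hh.indicator measurableSet_Ioo).comp (by fun_prop)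
  have hgm : Measurable ((Ioi 0).indicator f) := hfm.indicator measurableSet_Ioi
  calc ∫⁻ s, f s ≤ ∫⁻ s, ((Ioi 0).indicator f s + (Ioi 0).indicator f (-s)) := by
        refine lintegral_mono_ae ?_
        filter_upwards [Measure.ae_ne volume (0 : ℝ)] with s hs
        rcases lt_or_gt_of_ne hs with h | h
        · rw [indicator_of_mem (show -s ∈ Ioi 0 by simpa using h)]
          have : f (-s) = f s := by simp [hf]
          rw [this]; exact le_add_self
        · rw [indicator_of_mem (show s ∈ Ioi 0 from h)]
          exact le_self_add
    _ = 2 * ∫⁻ s in Ioi 0, f s := by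
        rw [lintegral_add_left hgm, lintegral_neg_eq_self (μ := volume) ((Ioi 0).indicator f),
          lintegral_indicator measurableSet_Ioi, two_mul]
    _ ≤ _ := mul_le_mul_right (setLIntegral_Ioi_radial_le ha q) 2

lemma gapForm_smul {d : ℕ} (r : ℝ) (u : Fin d → ℝ) : gapForm (r • u) = r ^ 2 * gapForm u := by
  simp only [gapForm, Pi.smul_apply, smul_eq_mul, mul_pow, ← Finset.mul_sum]
  ring

lemma lintegral_comp_inv_smul_le {d : ℕ} {ρ : ℝ} (hρ : ρ ∈ Ioo 0 1)
    {f : (Fin d → ℝ) → ℝ≥0∞} (hf : Measurable f) :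
    ∫⁻ u, f (ρ⁻¹ • u) ≤ ∫⁻ u, f u := by
  have hρ0 : 0 < ρ := hρ.1
  rw [← lintegral_map hf (by fun_prop), Measure.map_addHaar_smul volume (inv_ne_zero hρ0.ne'),
    lintegral_smul_measure, smul_eq_mul]
  refine mul_le_of_le_one_left' ?_
  rw [ENNReal.ofReal_le_one, abs_of_pos (by positivity), inv_pow, inv_inv]
  exact pow_le_one₀ hρ0.le hρ.2.le

/-- Integrating over the unit ball a function of the direction that only depends on the
differences `x_{d+1} - xⱼ`. -/
lemma lintegral_ball_gap_le {d : ℕ} {g : (Fin d → ℝ) → ℝ≥0∞} (hg : Measurable g) :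
    ∫⁻ x : Fin (d + 1) → ℝ, (Ioo 0 1).indicator
        (fun ρ => g (ρ⁻¹ • fun j => x (Fin.last d) - x j.castSucc)) √(∑ i, x i ^ 2) ≤
      2 * ∫⁻ u, g u * gapDensity u := by
  have hker : Measurable fun p : (Fin d → ℝ) × ℝ =>
      (Ioo 0 1).indicator (fun ρ => g (ρ⁻¹ • p.1)) p.2 := by
    have : (fun p : (Fin d → ℝ) × ℝ => (Ioo 0 1).indicator (fun ρ => g (ρ⁻¹ • p.1)) p.2) =
        (Prod.snd ⁻¹' Ioo 0 1).indicator fun p => g (p.2⁻¹ • p.1) := rfl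
    rw [this]
    exact (hg.comp (by fun_prop)).indicator (measurable_snd measurableSet_Ioo)
  set w : (Fin d → ℝ) → ℝ → ℝ≥0∞ := fun u ρ => (Ioo 0 1).indicator (fun ρ => g (ρ⁻¹ • u)) ρ
    with hw
  have hwm : ∀ {α : Type} [MeasurableSpace α] {a : α → Fin d → ℝ} {b : α → ℝ},
      Measurable a → Measurable b → Measurable fun x => w (a x) (b x) :=
    fun ha hb => hker.comp (ha.prodMk hb)
  have hF : Measurable fun x : Fin (d + 1) → ℝ =>
      w (fun j => x (Fin.last d) - x j.castSucc) √(∑ i, x i ^ 2) :=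
    hwm (by fun_prop) (by fun_prop)
  have hshear : Measurable fun p : ℝ × (Fin d → ℝ) => w p.2 √(p.1 ^ 2 + ∑ j, (p.1 - p.2 j) ^ 2) :=
    hwm (by fun_prop) (by fun_prop)
  calc ∫⁻ x : Fin (d + 1) → ℝ, w (fun j => x (Fin.last d) - x j.castSucc) √(∑ i, x i ^ 2)
      = ∫⁻ s : ℝ, ∫⁻ y : Fin d → ℝ, w ((fun _ => s) - y) √(s ^ 2 + ∑ j, y j ^ 2) := by
        rw [← (volume_preserving_piFinSuccAbove (fun _ => ℝ) (Fin.last d)).symm.lintegral_comp hF,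
          Measure.volume_eq_prod, lintegral_prod _ (by fun_prop)]
        refine lintegral_congr fun s => lintegral_congr fun y => ?_
        have hlast : ((MeasurableEquiv.piFinSuccAbove (fun _ => ℝ) (Fin.last d)).symm (s, y) :
            Fin (d + 1) → ℝ) = Fin.snoc (α := fun _ => ℝ) y s := by
          change (Fin.last d).insertNth (α := fun _ => ℝ) s y = _
          rw [Fin.insertNth_last']
        rw [hlast, Fin.sum_univ_castSucc]
        simp only [Fin.snoc_last, Fin.snoc_castSucc]
        rw [add_comm]
        rfl
    _ = ∫⁻ s : ℝ, ∫⁻ u : Fin d → ℝ, w u √(s ^ 2 + ∑ j, (s - u j) ^ 2) := by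
        refine lintegral_congr fun s => ?_
        rw [← lintegral_sub_left_eq_self _ (fun _ : Fin d => s)]
        simp
    _ = ∫⁻ u : Fin d → ℝ, ∫⁻ s : ℝ, w u √(s ^ 2 + ∑ j, (s - u j) ^ 2) :=
        lintegral_lintegral_swap hshear.aemeasurable
    _ = ∫⁻ u : Fin d → ℝ, ∫⁻ s : ℝ, w u √((d + 1) * s ^ 2 + gapForm u) := by
        refine lintegral_congr fun u => ?_
        rw [← lintegral_add_right_eq_self _ ((∑ j, u j) / (d + 1))]
        refine lintegral_congr fun s => ?_
        congr 2
        simp only [gapForm, sub_sq, Finset.sum_add_distrib, Finset.sum_sub_distrib,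
          ← Finset.mul_sum]
        simp
        field_simp
        ring
    _ ≤ ∫⁻ u : Fin d → ℝ, 2 * ∫⁻ ρ in Ioo 0 1,
          g (ρ⁻¹ • u) * ENNReal.ofReal (ρ / √(ρ ^ 2 - gapForm u)) := by
        refine lintegral_mono fun u => ?_
        refine lintegral_radial_le (by simp) (gapForm u) ?_
        exact hg.comp (by fun_prop)
    _ = 2 * ∫⁻ ρ in Ioo 0 1, ∫⁻ u : Fin d → ℝ,
          g (ρ⁻¹ • u) * ENNReal.ofReal (ρ / √(ρ ^ 2 - gapForm u)) := by
        have hm : Measurable fun p : (Fin d → ℝ) × ℝ =>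
            g (p.2⁻¹ • p.1) * ENNReal.ofReal (p.2 / √(p.2 ^ 2 - gapForm p.1)) :=
          (hg.comp (by fun_prop)).mul (by fun_prop)
        rw [lintegral_const_mul _ hm.lintegral_prod_right', lintegral_lintegral_swap]
        exact hm.aemeasurable
    _ ≤ 2 * ∫⁻ ρ in Ioo (0 : ℝ) 1, ∫⁻ u, g u * gapDensity u := by
        gcongr 2 * ?_
        refine setLIntegral_mono' measurableSet_Ioo fun ρ hρ => ?_
        refine le_trans (le_of_eq ?_)
          (lintegral_comp_inv_smul_le hρ (hg.mul measurable_gapDensity))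
        refine lintegral_congr fun u => ?_
        have hρ0 : 0 < ρ := hρ.1
        have hρu : (√(1 - ρ⁻¹ ^ 2 * gapForm u))⁻¹ = ρ / √(ρ ^ 2 - gapForm u) := by
          rw [show 1 - ρ⁻¹ ^ 2 * gapForm u = (ρ ^ 2 - gapForm u) / ρ ^ 2 by field_simp,
            Real.sqrt_div' _ (by positivity), Real.sqrt_sq hρ0.le, inv_div]
        rw [gapDensity, gapForm_smul, hρu]
    _ = 2 * ∫⁻ u, g u * gapDensity u := by simp

lemma toSphere_gap_le {d : ℕ} {G : Set (Fin d → ℝ)} (hG : MeasurableSet G) :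
    (volume : Measure (EuclideanSpace ℝ (Fin (d + 1)))).toSphere
        {σ | (fun j : Fin d => σ.1 (Fin.last d) - σ.1 j.castSucc) ∈ G} ≤
      (d + 1 : ℕ) * (2 * ∫⁻ u in G, gapDensity u) := by
  have hA : MeasurableSet {σ : Metric.sphere (0 : EuclideanSpace ℝ (Fin (d + 1))) 1 |
      (fun j : Fin d => σ.1 (Fin.last d) - σ.1 j.castSucc) ∈ G} :=
    (by fun_prop : Measurable fun σ : Metric.sphere (0 : EuclideanSpace ℝ (Fin (d + 1))) 1 =>
      fun j : Fin d => σ.1 (Fin.last d) - σ.1 j.castSucc) hG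
  rw [Measure.toSphere_apply' _ hA, finrank_euclideanSpace, Fintype.card_fin]
  gcongr
  have hgap := lintegral_ball_gap_le (d := d) (g := G.indicator 1) (measurable_one.indicator hG)
  have hR : ∫⁻ u, G.indicator 1 u * gapDensity u = ∫⁻ u in G, gapDensity u := by
    rw [← lintegral_indicator hG]
    refine lintegral_congr fun u => ?_
    by_cases hu : u ∈ G <;> simp [hu]
  rw [hR] at hgap
  refine le_trans ?_ hgap
  rw [← (PiLp.volume_preserving_ofLp (Fin (d + 1))).lintegral_comp_emb
    (MeasurableEquiv.toLp 2 (Fin (d + 1) → ℝ)).symm.measurableEmbedding]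
  set T : Set (EuclideanSpace ℝ (Fin (d + 1))) := {x | √(∑ i, x i ^ 2) ∈ Ioo (0 : ℝ) 1} ∩
    {x | ((√(∑ i, x i ^ 2))⁻¹ • fun j : Fin d => x (Fin.last d) - x j.castSucc) ∈ G} with hT
  have hTm : MeasurableSet T :=
    ((by fun_prop : Measurable fun x : EuclideanSpace ℝ (Fin (d + 1)) => √(∑ i, x i ^ 2))
      measurableSet_Ioo).inter
    ((by fun_prop : Measurable fun x : EuclideanSpace ℝ (Fin (d + 1)) =>
      (√(∑ i, x i ^ 2))⁻¹ • fun j : Fin d => x (Fin.last d) - x j.castSucc) hG)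
  refine (measure_mono (t := T) ?_).trans
    ((lintegral_indicator_one hTm).symm.le.trans (le_of_eq ?_))
  · rintro _ ⟨r, hr, _, ⟨σ, hσ, rfl⟩, rfl⟩
    have hnorm : √(∑ i, (r • σ.1) i ^ 2) = r := by
      have h := EuclideanSpace.norm_eq (r • σ.1)
      rw [norm_smul, norm_eq_of_mem_sphere σ, mul_one, Real.norm_of_nonneg hr.1.le] at h
      simp only [Real.norm_eq_abs, sq_abs] at h
      exact h.symm
    refine ⟨?_, ?_⟩
    · simpa only [mem_ofPred_eq, hnorm] using hr
    · have hσ' : (r⁻¹ • fun j : Fin d => (r • σ.1) (Fin.last d) - (r • σ.1) j.castSucc) =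
          fun j : Fin d => σ.1 (Fin.last d) - σ.1 j.castSucc := by
        ext j
        have := hr.1.ne'
        simp only [Pi.smul_apply, PiLp.smul_apply, smul_eq_mul]
        field_simp
      simpa only [mem_ofPred_eq, hnorm, hσ'] using hσ
  · refine lintegral_congr fun x => ?_
    have hmem : x ∈ T ↔ √(∑ i, x i ^ 2) ∈ Ioo (0 : ℝ) 1 ∧
        ((√(∑ i, x i ^ 2))⁻¹ • fun j : Fin d => x (Fin.last d) - x j.castSucc) ∈ G := Iff.rfl
    simp only [indicator, hmem, Pi.one_apply]
    split_ifs <;> tauto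

lemma inv_map_toSphere_univ_lt_top (d : ℕ) :
    (Measure.map Subtype.val
      ((volume : Measure (EuclideanSpace ℝ (Fin (d + 1)))).toSphere) univ)⁻¹ < ∞ := by
  rw [ENNReal.inv_lt_top, Measure.map_apply measurable_subtype_coe .univ, preimage_univ,
    Measure.measure_univ_pos]
  exact Measure.toSphere_ne_zero _

instance (d : ℕ) : IsFiniteMeasure (normSphere (d + 1)) :=
  Measure.smul_finite _ (inv_map_toSphere_univ_lt_top d).ne

lemma exists_normSphere_gap_le (d : ℕ) :
    ∃ C : ℝ, 0 < C ∧ ∀ E : Fin (d + 1) → Set ℝ, (∀ j, MeasurableSet (E j)) →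
      normSphere (d + 2) {σ | ∀ j : Fin (d + 1), σ (Fin.last _) - σ j.castSucc ∈ E j} ≤
        ENNReal.ofReal C * ∏ j, volume (E j) ^ (((d : ℝ) + 1) / (d + 2)) := by
  set K := (Measure.map Subtype.val
    ((volume : Measure (EuclideanSpace ℝ (Fin (d + 2)))).toSphere) univ)⁻¹ with hK
  set D : ℝ≥0∞ := K * ((d + 2 : ℕ) * (2 * ((d + 1 : ℕ) * ENNReal.ofReal (12 * (d + 2))))) with hD
  have hDtop : D ≠ ∞ := by
    have := (inv_map_toSphere_univ_lt_top (d + 1)).ne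
    finiteness
  refine ⟨D.toReal + 1, by positivity, fun E hE => ?_⟩
  have hpi : MeasurableSet (univ.pi E) := MeasurableSet.univ_pi hE
  have hset : {σ : EuclideanSpace ℝ (Fin (d + 2)) |
      ∀ j : Fin (d + 1), σ (Fin.last _) - σ j.castSucc ∈ E j} =
      (fun σ => fun j : Fin (d + 1) => σ (Fin.last _) - σ j.castSucc) ⁻¹' univ.pi E := by
    ext σ; simp
  have hm : MeasurableSet {σ : EuclideanSpace ℝ (Fin (d + 2)) |
      ∀ j : Fin (d + 1), σ (Fin.last _) - σ j.castSucc ∈ E j} := by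
    rw [hset]
    exact (by fun_prop : Measurable fun σ : EuclideanSpace ℝ (Fin (d + 2)) =>
      fun j : Fin (d + 1) => σ (Fin.last _) - σ j.castSucc) hpi
  rw [normSphere, Measure.smul_apply, Measure.map_apply measurable_subtype_coe hm, ← hK, hset,
    smul_eq_mul]
  calc K * _ ≤ K * ((d + 2 : ℕ) * (2 * ((d + 1 : ℕ) * (ENNReal.ofReal (12 * (d + 2)) *
        ∏ j, volume (E j) ^ (((d : ℝ) + 1) / (d + 2)))))) := by
        gcongr K * ?_
        refine (toSphere_gap_le hpi).trans ?_
        gcongr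
        exact setLIntegral_gapDensity_le hE
    _ = D * ∏ j, volume (E j) ^ (((d : ℝ) + 1) / (d + 2)) := by rw [hD]; ring
    _ ≤ _ := by
        gcongr
        rw [← ENNReal.ofReal_toReal hDtop]
        exact ENNReal.ofReal_le_ofReal (by simp)

lemma lintegral_prod_indicator_mul_le {d : ℕ} {C : ℝ}
    (hC : ∀ E : Fin (d + 1) → Set ℝ, (∀ j, MeasurableSet (E j)) →
      normSphere (d + 2) {σ | ∀ j : Fin (d + 1), σ (Fin.last _) - σ j.castSucc ∈ E j} ≤
        ENNReal.ofReal C * ∏ j, volume (E j) ^ (((d : ℝ) + 1) / (d + 2)))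
    {I : Fin (d + 1) → Set ℝ} (hI : ∀ j, MeasurableSet (I j))
    {F : ℝ → ℝ≥0∞} (hF : Measurable F) :
    ∫⁻ x, ∫⁻ σ, (∏ j : Fin (d + 1), (I j).indicator 1 (x - σ j.castSucc)) *
        F (x - σ (Fin.last _)) ∂(normSphere (d + 2)) ≤
      ENNReal.ofReal C * (∏ j, volume (I j) ^ (((d : ℝ) + 1) / (d + 2))) * ∫⁻ x, F x := by
  have hIm : ∀ j, Measurable ((I j).indicator (1 : ℝ → ℝ≥0∞)) := fun j =>
    measurable_one.indicator (hI j)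
  have hm1 : Measurable fun p : ℝ × EuclideanSpace ℝ (Fin (d + 2)) =>
      (∏ j : Fin (d + 1), (I j).indicator (1 : ℝ → ℝ≥0∞) (p.1 - p.2 j.castSucc)) *
        F (p.1 - p.2 (Fin.last _)) :=
    (Finset.measurable_fun_prod _ fun j _ => (hIm j).comp (by fun_prop)).mul
      (hF.comp (by fun_prop))
  have hm2 : Measurable fun p : EuclideanSpace ℝ (Fin (d + 2)) × ℝ =>
      (∏ j : Fin (d + 1), (I j).indicator (1 : ℝ → ℝ≥0∞)
        (p.2 + p.1 (Fin.last _) - p.1 j.castSucc)) * F p.2 :=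
    (Finset.measurable_fun_prod _ fun j _ => (hIm j).comp (by fun_prop)).mul
      (hF.comp (by fun_prop))
  rw [lintegral_lintegral_swap hm1.aemeasurable]
  calc _ = ∫⁻ σ, (∫⁻ x, (∏ j : Fin (d + 1), (I j).indicator (1 : ℝ → ℝ≥0∞)
          (x + σ (Fin.last _) - σ j.castSucc)) * F x) ∂(normSphere (d + 2)) := by
        refine lintegral_congr fun σ => ?_
        rw [← lintegral_add_right_eq_self _ (σ (Fin.last _))]
        simp
    _ = ∫⁻ x, ∫⁻ σ, (∏ j : Fin (d + 1), (I j).indicator (1 : ℝ → ℝ≥0∞)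
          (x + σ (Fin.last _) - σ j.castSucc)) * F x ∂(normSphere (d + 2)) :=
        lintegral_lintegral_swap hm2.aemeasurable
    _ ≤ ∫⁻ x, ENNReal.ofReal C * (∏ j, volume (I j) ^ (((d : ℝ) + 1) / (d + 2))) * F x := by
        refine lintegral_mono fun x => ?_
        have hmx : Measurable fun σ : EuclideanSpace ℝ (Fin (d + 2)) =>
            ∏ j : Fin (d + 1), (I j).indicator (1 : ℝ → ℝ≥0∞)
              (x + σ (Fin.last _) - σ j.castSucc) :=
          Finset.measurable_fun_prod _ fun j _ => (hIm j).comp (by fun_prop)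
        rw [lintegral_mul_const _ hmx]
        gcongr ?_ * F x
        have hshift : ∀ j, MeasurableSet ((fun t => x + t) ⁻¹' I j) := fun j =>
          (measurable_const_add x) (hI j)
        have h := hC (fun j => (fun t => x + t) ⁻¹' I j) hshift
        simp only [measure_preimage_add] at h
        refine le_trans ?_ h
        refine (lintegral_mono fun σ => ?_).trans (lintegral_indicator_one_le _)
        by_cases hσ : ∀ j : Fin (d + 1), σ (Fin.last _) - σ j.castSucc ∈
            (fun t => x + t) ⁻¹' I j
        · rw [indicator_of_mem (by exact hσ)]
          exact Finset.prod_le_one' fun j _ => indicator_le_self' (by simp) _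
        · obtain ⟨j, hj⟩ := not_forall.1 hσ
          rw [Finset.prod_eq_zero (Finset.mem_univ j)]
          · exact zero_le
          · rw [mem_preimage, ← add_sub_assoc] at hj
            exact indicator_of_notMem hj _
    _ = _ := lintegral_const_mul _ hF

end

theorem restricted_type_at_P (n : ℕ) (hn : 3 ≤ n) :
    ∃ C : ℝ, 0 < C ∧ ∀ I : Fin (n - 1) → Set ℝ,
      (∀ j, MeasurableSet (I j)) → (∀ j, volume (I j) < ∞) →
      ∀ fn : ℝ → ℝ, Measurable fn → (∀ x, 0 ≤ fn x) →
      lpNorm 1 (sphAvg n (fun j =>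
          if h : (j : ℕ) < n - 1 then (I ⟨j, h⟩).indicator fun _ => (1 : ℝ) else fn)) ≤
        ENNReal.ofReal C * (∏ j, volume (I j) ^ (((n : ℝ) - 1) / n)) *
          lpNorm 1 (fun x => ENNReal.ofReal (fn x)) := by
  obtain ⟨d, rfl⟩ : ∃ d, n = d + 2 := ⟨n - 2, by omega⟩
  obtain ⟨C, hC0, hC⟩ := exists_normSphere_gap_le d
  refine ⟨C, hC0, fun I hI _ fn hfn _ => ?_⟩
  have h := lintegral_prod_indicator_mul_le hC hI hfn.ennreal_ofReal
  have hexp : ((d + 2 : ℕ) - 1 : ℝ) / (d + 2 : ℕ) = ((d : ℝ) + 1) / (d + 2) := by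
    push_cast; ring
  rw [hexp]
  simp only [_root_.lpNorm, ENNReal.one_ne_top, if_false, ENNReal.toReal_one, ENNReal.rpow_one, div_one]
  refine le_trans (le_of_eq ?_) h
  refine lintegral_congr fun x => lintegral_congr fun σ => ?_
  rw [Fin.prod_univ_castSucc]
  congr 1
  · refine Finset.prod_congr rfl fun j _ => ?_
    beta_reduce
    rw [dif_pos (show ((j.castSucc : Fin (d + 2)) : ℕ) < d + 2 - 1 from j.isLt)]
    by_cases hx : x - σ j.castSucc ∈ I j
    · rw [Set.indicator_of_mem hx, Set.indicator_of_mem (by exact hx)]; simp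
    · rw [Set.indicator_of_notMem hx, Set.indicator_of_notMem (by exact hx)]; simp
  · beta_reduce
    rw [dif_neg (show ¬ ((Fin.last (d + 1) : Fin (d + 2)) : ℕ) < d + 2 - 1 from lt_irrefl _)]
end
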